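/- Let Ω ⊂ ℝ² be a bounded open strictly convex domain (the curvature κ of ∂Ω is everywhere positive). Then there is ε = ε(Ω) > 0 such that for every H with −ε < H < 0 the solution u = u(·;H) of problem (*) is positive on Ω and is 1/2 (power) concave: the function √u is strictly second order concave on Ω, i.e. the Hessian of √u is negative definite at every point of Ω. -/

import Mathlib

/-!
The solution is rescaled as `u = h v` with `h = -H`; then `v` satisfies a small perturbation of
`Δv = -2`, whose solutions are classically 1/2-concave on convex domains. The perturbation is
controlled uniformly by a two-point maximum principle with a strictness margin.

**Geometry.** Let `f` be the defining function of `Ω`. Positivity of the curvature makes every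
component `U` of `Ω` convex (`DefFun.component_convex`) and gives chords a depth at least quadratic
in their length (`DefFun.mid`). All components satisfy the resulting quantitative hypotheses `Good`
with common constants (`DefFun.exists_good`).

**A priori bounds.** Barriers give `c₀ (-f) ≤ v` (`lower_bound`) and a linear upper bound at the
boundary (`upper_bound`); comparison of translates with dilates gives a global Lipschitz bound
(`lipschitz_sol`).

**Two-point function.** For `x`, `y` in the closure of `U` with midpoint `z`, let
`Z(x, y) = v(z) - ((√v(x) + √v(y)) / 2)² - δ q(z) |x - y|²`, where
`q = Cq + A |·|² - √(-f)`. The claim is `Z ≥ 0` for small `δ` and smaller `h` (`two_point`). At a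
negative minimum the two values of `√v` are comparable (`step_b`), so both points are interior. There
the nonnegative Hessian of `Z` is traced against a positive semidefinite covariance (`psd_form`)
which reproduces the linearised operators at `x`, `y` and `z`; inserting the three equations yields
`core_ineq`. The term `-√(-f)` in the weight makes `Δq` of size `(-f)^{-3/2}`, which dominates all
errors, including those of order `h²`, so that `core_ineq` is contradictory (`core_est`,
`step_c`).

**Conclusion.** `Z ≥ 0` and `q ≥ 1` give a midpoint concavity of `√v` with the margin
`δ |x - y|²` (`two_point_concavity`). Applied to `x ± τ w` and expanded to second order in `τ`, it
shows that the Hessian of `√u` is negative definite (`second_coeff_neg`).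
-/

noncomputable section
open Set
open scoped RealInnerProductSpace

/-- The plane ℝ². -/
abbrev E2 : Type := EuclideanSpace ℝ (Fin 2)

/-- Standard basis vectors of ℝ². -/
def e2 (i : Fin 2) : E2 := EuclideanSpace.single i 1

/-- The mean curvature operator `M u = div (Du / √(1+|Du|²))`. -/
def mcDiv (u : E2 → ℝ) (x : E2) : ℝ :=
  ∑ i : Fin 2,
    fderiv ℝ (fun y => (Real.sqrt (1 + ‖gradient u y‖ ^ 2))⁻¹ • gradient u y) x (e2 i) i

/-- `u` is a solution of problem (*) on `Ω` with mean curvature `H`: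
`u ∈ C²(Ω) ∩ C⁰(closure Ω)`, `div(Du/√(1+|Du|²)) = 2H` in `Ω`, `u = 0` on `∂Ω`. -/
def SolvesStar (Ω : Set E2) (H : ℝ) (u : E2 → ℝ) : Prop :=
  ContDiffOn ℝ 2 u Ω ∧ ContinuousOn u (closure Ω) ∧
    (∀ x ∈ Ω, mcDiv u x = 2 * H) ∧ (∀ x ∈ frontier Ω, u x = 0)

/-- `u` is a `C²(closure Ω)` solution of problem (*). -/
def SolvesStarC2 (Ω : Set E2) (H : ℝ) (u : E2 → ℝ) : Prop :=
  ContDiffOn ℝ 2 u (closure Ω) ∧ (∀ x ∈ Ω, mcDiv u x = 2 * H) ∧ ∀ x ∈ frontier Ω, u x = 0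

/-- `H_max = sup {H ≥ 0 : (*) has a unique solution in C²(closure Ω)}`. -/
def Hmax (Ω : Set E2) : ℝ :=
  sSup {H : ℝ | 0 ≤ H ∧ (∃ u, SolvesStarC2 Ω H u) ∧
    ∀ u v, SolvesStarC2 Ω H u → SolvesStarC2 Ω H v → EqOn u v (closure Ω)}

/-- The Hessian bilinear form of `u` at `x` evaluated at `(w₁, w₂)`. -/
def hess2 (u : E2 → ℝ) (x : E2) (w₁ w₂ : E2) : ℝ :=
  fderiv ℝ (fun y => fderiv ℝ u y w₂) x w₁

/-- `G_v = v_xx v_yy − v_xy²`, the determinant of the Hessian. -/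
def Gdet (v : E2 → ℝ) (x : E2) : ℝ :=
  hess2 v x (e2 0) (e2 0) * hess2 v x (e2 1) (e2 1) - hess2 v x (e2 0) (e2 1) ^ 2

/-- `L_v = v_y² v_xx − 2 v_x v_y v_xy + v_x² v_yy`. -/
def Lcurv (v : E2 → ℝ) (x : E2) : ℝ :=
  (fderiv ℝ v x (e2 1)) ^ 2 * hess2 v x (e2 0) (e2 0)
    - 2 * fderiv ℝ v x (e2 0) * fderiv ℝ v x (e2 1) * hess2 v x (e2 0) (e2 1)
    + (fderiv ℝ v x (e2 0)) ^ 2 * hess2 v x (e2 1) (e2 1)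

/-- `Ω` is a bounded strictly convex domain with `C^{2,α}` boundary: it has a `C²` defining
function `f` with `α`-Hölder second derivative, nonvanishing boundary gradient, and the
second fundamental form of the boundary (tangential Hessian of `f`) is positive, i.e. the
curvature of `∂Ω` is everywhere positive. -/
def StrictlyConvexDomain (α : ℝ) (Ω : Set E2) : Prop :=
  IsOpen Ω ∧ Bornology.IsBounded Ω ∧ Ω.Nonempty ∧
    ∃ f : E2 → ℝ, ContDiff ℝ 2 f ∧ Ω = {x | f x < 0} ∧ frontier Ω = {x | f x = 0} ∧
      (∃ C : ℝ, ∀ x y : E2,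
        ‖iteratedFDeriv ℝ 2 f x - iteratedFDeriv ℝ 2 f y‖ ≤ C * ‖x - y‖ ^ α) ∧
      (∀ x ∈ frontier Ω, gradient f x ≠ 0) ∧
      (∀ x ∈ frontier Ω, ∀ w : E2, w ≠ 0 → ⟪w, gradient f x⟫ = (0:ℝ) →
        0 < hess2 f x w w)

/-- The unit direction `e_θ = (cos θ, sin θ)`. -/
def dirVec (θ : ℝ) : E2 := Real.cos θ • e2 0 + Real.sin θ • e2 1

/-! ### Elementary inequalities -/

lemma abs_le_half_of_sq_le {x A B : ℝ} (hA : 0 ≤ A) (hB : 0 ≤ B) (h : x ^ 2 ≤ A * B) :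
    |x| ≤ (A + B) / 2 := by
  apply abs_le_of_sq_le_sq _ (by positivity)
  nlinarith [sq_nonneg (A - B)]

lemma mul_bd {c x K : ℝ} (hc : |c| ≤ K) : -(K * |x|) ≤ c * x := by
  have h1 : |c * x| ≤ K * |x| := by rw [abs_mul]; gcongr
  exact (abs_le.1 h1).1

lemma amgm (c x y : ℝ) (hc : 0 < c) : |x * y| ≤ (c * x ^ 2 + y ^ 2 / c) / 2 := by
  apply abs_le_half_of_sq_le (by positivity) (by positivity)
  apply le_of_eq; field_simp

set_option maxHeartbeats 2000000 in
/-- Lower bound for the error terms of the covariance form, in the variables sum and difference of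
the two test vectors: the part quadratic in the difference may cost a fixed multiple of `M`, the
part quadratic in the sum only a multiple of the small quantity `k2 + E0`. -/
lemma psd_scalar (t Gs Gy Ks Ky Es Ey M S Y k2 E0 κ : ℝ) (ht : |t| ≤ 1)
    (hS : 0 ≤ S) (hY : 0 ≤ Y) (hk0 : 0 ≤ k2) (hk1 : k2 ≤ 1) (hE0 : 0 ≤ E0) (hE1 : E0 ≤ 1)
    (hκ0 : 0 ≤ κ) (hκ1 : κ ≤ 1) (hM : 1 ≤ M)
    (hGs : Gs ^ 2 ≤ M * S) (hGy : Gy ^ 2 ≤ M * Y) (hKs : Ks ^ 2 ≤ k2 * S)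
    (hKy : Ky ^ 2 ≤ k2 * Y) (hEy : Ey ^ 2 ≤ E0 ^ 2 * Y) :
    -(200 * M * S + 200 * M * (k2 + E0) * Y) ≤
      4 * (1 + t) ^ 3 * (1 - t) * ((Gs - Ks) / 2 + (Gy - Ky)) ^ 2
      + 4 * (1 + t) * (1 - t) ^ 3 * ((Gs + Ks) / 2 - (Gy + Ky)) ^ 2
      + 4 * (1 - κ) * ((2 * Gs + Es) / 2 + (2 * Gy + Ey)) * ((2 * Gs + Es) / 2 - (2 * Gy + Ey))
      - 4 * (1 + t) ^ 4 * ((Gs - Ks) / 2 + (Gy - Ky)) * ((Gs - Ks) / 2 - (Gy - Ky))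
      - 4 * (1 - t) ^ 4 * ((Gs + Ks) / 2 + (Gy + Ky)) * ((Gs + Ks) / 2 - (Gy + Ky)) := by
  obtain ⟨ht1, ht2⟩ := abs_le.1 ht
  have ht3 : t ^ 2 ≤ 1 := by nlinarith only [ht1, ht2]
  have hKs1 : Ks ^ 2 ≤ S := by nlinarith only [hKs, hk1, hS]
  have hMS : S ≤ M * S := le_mul_of_one_le_left hS hM
  have hMY : k2 * Y ≤ M * (k2 * Y) := le_mul_of_one_le_left (mul_nonneg hk0 hY) hM
  have s1 : -(16 * (2 * (Gs ^ 2 + Ks ^ 2))) ≤ -2 * t * (1 + t) ^ 3 * (Gs - Ks) ^ 2 := by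
    have h1 : |(-2 * t * (1 + t) ^ 3)| ≤ 16 := by
      rw [abs_le]
      have : 0 ≤ (1 + t) ^ 3 := by have : 0 ≤ 1 + t := by linarith
                                   positivity
      have h8 : (1 + t) ^ 3 ≤ 2 ^ 3 := by
        apply pow_le_pow_left₀ <;> linarith
      constructor <;> nlinarith only [this, h8, ht1, ht2]
    have := mul_bd (x := (Gs - Ks) ^ 2) h1
    rw [abs_of_nonneg (sq_nonneg _)] at this
    nlinarith only [this, sq_nonneg (Gs + Ks)]
  have s2 : -(16 * (2 * (Gs ^ 2 + Ks ^ 2))) ≤ 2 * t * (1 - t) ^ 3 * (Gs + Ks) ^ 2 := by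
    have h1 : |(2 * t * (1 - t) ^ 3)| ≤ 16 := by
      rw [abs_le]
      have : 0 ≤ (1 - t) ^ 3 := by have : 0 ≤ 1 - t := by linarith
                                   positivity
      have h8 : (1 - t) ^ 3 ≤ 2 ^ 3 := by
        apply pow_le_pow_left₀ <;> linarith
      constructor <;> nlinarith only [this, h8, ht1, ht2]
    have := mul_bd (x := (Gs + Ks) ^ 2) h1
    rw [abs_of_nonneg (sq_nonneg _)] at this
    nlinarith only [this, sq_nonneg (Gs - Ks)]
  have s3 : 0 ≤ (1 - κ) * (2 * Gs + Es) ^ 2 := mul_nonneg (by linarith) (sq_nonneg _)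
  have hab0 : 0 ≤ 1 - t ^ 2 := by linarith
  have hab1 : 1 - t ^ 2 ≤ 1 := by nlinarith only [sq_nonneg t]
  have c1 : -(4 * (t ^ 2 * Gy ^ 2) + 16 * Gs ^ 2) ≤ 16 * (1 - t ^ 2) * (Gs * (t * Gy)) := by
    have h1 : |16 * (1 - t ^ 2)| ≤ 16 := by rw [abs_le]; constructor <;> linarith
    have h2 := mul_bd (x := Gs * (t * Gy)) h1
    have h3 := amgm 2 Gs (t * Gy) (by norm_num)
    rw [mul_pow] at h3
    linarith
  have c2 : -(8 * (Ks ^ 2 + Ky ^ 2)) ≤ 16 * (1 - t ^ 2) * t * (Ks * Ky) := by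
    have h1 : |16 * (1 - t ^ 2) * t| ≤ 16 := by
      rw [abs_mul, abs_of_nonneg (by linarith : 0 ≤ 16 * (1 - t ^ 2))]
      nlinarith only [abs_nonneg t, ht, hab0, hab1]
    have h2 := mul_bd (x := Ks * Ky) h1
    have h3 := amgm 1 Ks Ky (by norm_num)
    linarith
  have c0 : |(-8) * (1 - t ^ 2) * (1 + t ^ 2)| ≤ 16 := by
    rw [abs_le]; constructor <;> nlinarith only [sq_nonneg t, hab0, hab1]
  have c3 : -(8 * (Gs ^ 2 + Ky ^ 2)) ≤ -8 * (1 - t ^ 2) * (1 + t ^ 2) * (Gs * Ky) := by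
    have h2 := mul_bd (x := Gs * Ky) c0
    have h3 := amgm 1 Gs Ky (by norm_num)
    linarith
  have c4 : -(8 * (M * S + k2 * Y)) ≤ -8 * (1 - t ^ 2) * (1 + t ^ 2) * (Ks * Gy) := by
    have h2 := mul_bd (x := Ks * Gy) c0
    have h3 : |Ks * Gy| ≤ (M * S + k2 * Y) / 2 := by
      apply abs_le_half_of_sq_le <;> try positivity
      calc (Ks * Gy) ^ 2 = Ks ^ 2 * Gy ^ 2 := by ring
        _ ≤ (k2 * S) * (M * Y) := by gcongr
          _ = _ := by ring
    linarith
  have y1 : -(40 * (t ^ 2 * Gy ^ 2) + 103 * Ky ^ 2) ≤ -16 * (6 + 2 * t ^ 2) * (t * Gy * Ky) := by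
    have h1 : |(-16) * (6 + 2 * t ^ 2)| ≤ 128 := by rw [abs_le]; constructor <;> nlinarith only [sq_nonneg t, ht3]
    have h2 := mul_bd (x := t * Gy * Ky) h1
    have h3 := amgm (5 / 8) (t * Gy) Ky (by norm_num)
    rw [mul_pow] at h3
    linarith [sq_nonneg Ky]
  have y2 : |Gy * Ey| ≤ (M * E0 * Y + E0 * Y) / 2 := by
    apply abs_le_half_of_sq_le <;> try positivity
    calc (Gy * Ey) ^ 2 = Gy ^ 2 * Ey ^ 2 := by ring
      _ ≤ (M * Y) * (E0 ^ 2 * Y) := by gcongr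
      _ = _ := by ring
  have y2' := (abs_le.1 y2).2
  have hEY : E0 ^ 2 * Y ≤ E0 * Y := by
    have : E0 ^ 2 ≤ E0 := by nlinarith only [hE0, hE1]
    gcongr
  have hEYM : E0 * Y ≤ M * (E0 * Y) := le_mul_of_one_le_left (mul_nonneg hE0 hY) hM
  have y3 : 0 ≤ 4 * κ * (2 * Gy + Ey) ^ 2 := by positivity
  have y4 : 0 ≤ (16 + 48 * t ^ 2) * Ky ^ 2 := by positivity
  have y5 : 0 ≤ t ^ 2 * Gy ^ 2 := by positivity
  have hkY : 0 ≤ k2 * Y := by positivity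
  have hEY0 : 0 ≤ E0 * Y := by positivity
  linarith only [hS, hkY, hEY0, s1, s2, s3, c1, c2, c3, c4, y1, y2', y3, y4, y5, hEY, hEYM, hMS, hMY, hGs, hKs1,
    hKy, hEy]

/-! ### The covariance form and the trace inequality -/

open scoped MatrixOrder ComplexOrder Matrix.Norms.L2Operator in
lemma trace_mul_nonneg_of_posSemidef {n : Type*} [Fintype n] [DecidableEq n]
    {Q S : Matrix n n ℝ} (hQ : Q.PosSemidef) (hS : S.PosSemidef) : 0 ≤ (Q * S).trace := by
  obtain ⟨B, rfl⟩ := CStarAlgebra.nonneg_iff_eq_star_mul_self.mp hQ.nonneg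
  rw [Matrix.star_eq_conjTranspose]
  have h1 : (B * S * B.conjTranspose).PosSemidef := hS.mul_mul_conjTranspose_same B
  have h2 : (B.conjTranspose * B * S).trace = (B * S * B.conjTranspose).trace := by
    rw [Matrix.mul_assoc, Matrix.trace_mul_comm]
  rw [h2]
  exact h1.trace_nonneg

lemma quad_posSemidef (q11 q22 q33 q44 q12 q13 q14 q23 q24 q34 : ℝ)
    (hQ : ∀ x y z w : ℝ, 0 ≤ q11 * x ^ 2 + q22 * y ^ 2 + q33 * z ^ 2 + q44 * w ^ 2
      + 2 * (q12 * x * y + q13 * x * z + q14 * x * w + q23 * y * z + q24 * y * w + q34 * z * w)) :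
    (!![q11, q12, q13, q14; q12, q22, q23, q24; q13, q23, q33, q34; q14, q24, q34, q44] :
      Matrix (Fin 4) (Fin 4) ℝ).PosSemidef := by
  apply Matrix.PosSemidef.of_dotProduct_mulVec_nonneg
  · ext i j
    fin_cases i <;> fin_cases j <;> simp
  · intro x
    have := hQ (x 0) (x 1) (x 2) (x 3)
    simp [Matrix.mulVec, dotProduct, Fin.sum_univ_four]
    linarith

/-- Two nonnegative quadratic forms in four variables have nonnegative trace product. -/
lemma quad_trace (q11 q22 q33 q44 q12 q13 q14 q23 q24 q34 : ℝ)
    (s11 s22 s33 s44 s12 s13 s14 s23 s24 s34 : ℝ)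
    (hQ : ∀ x y z w : ℝ, 0 ≤ q11 * x ^ 2 + q22 * y ^ 2 + q33 * z ^ 2 + q44 * w ^ 2
      + 2 * (q12 * x * y + q13 * x * z + q14 * x * w + q23 * y * z + q24 * y * w + q34 * z * w))
    (hS : ∀ x y z w : ℝ, 0 ≤ s11 * x ^ 2 + s22 * y ^ 2 + s33 * z ^ 2 + s44 * w ^ 2
      + 2 * (s12 * x * y + s13 * x * z + s14 * x * w + s23 * y * z + s24 * y * w + s34 * z * w)) :
    0 ≤ q11 * s11 + q22 * s22 + q33 * s33 + q44 * s44
      + 2 * (q12 * s12 + q13 * s13 + q14 * s14 + q23 * s23 + q24 * s24 + q34 * s34) := by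
  have := trace_mul_nonneg_of_posSemidef
    (quad_posSemidef _ _ _ _ _ _ _ _ _ _ hQ) (quad_posSemidef _ _ _ _ _ _ _ _ _ _ hS)
  simp [Matrix.trace, Fin.sum_univ_four] at this
  linarith

/-- Trace of the second order condition at a minimum of the two-point function against a
covariance matrix with diagonal blocks `sx`, `sy` and symmetric off-diagonal block `c`. -/
lemma core_trace (A11 A12 A22 X11 X12 X22 Y11 Y12 Y22 q q1 q2 q11 q12 q22 : ℝ)
    (px1 px2 py1 py2 l1 l2 m δ : ℝ)
    (hQ : ∀ x1 x2 y1 y2 : ℝ, 0 ≤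
      (A11 * ((x1 + y1) / 2) ^ 2 + 2 * A12 * ((x1 + y1) / 2) * ((x2 + y2) / 2)
        + A22 * ((x2 + y2) / 2) ^ 2)
      - m * (X11 * x1 ^ 2 + 2 * X12 * x1 * x2 + X22 * x2 ^ 2)
      - m * (Y11 * y1 ^ 2 + 2 * Y12 * y1 * y2 + Y22 * y2 ^ 2)
      - (px1 * x1 + px2 * x2 + py1 * y1 + py2 * y2) ^ 2 / 2
      - δ * (2 * q * ((x1 - y1) ^ 2 + (x2 - y2) ^ 2)
        + (l1 ^ 2 + l2 ^ 2) * (q11 * ((x1 + y1) / 2) ^ 2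
          + 2 * q12 * ((x1 + y1) / 2) * ((x2 + y2) / 2) + q22 * ((x2 + y2) / 2) ^ 2)
        + 4 * (l1 * (x1 - y1) + l2 * (x2 - y2))
          * (q1 * ((x1 + y1) / 2) + q2 * ((x2 + y2) / 2))))
    (sx11 sx12 sx22 sy11 sy12 sy22 c11 c12 c22 : ℝ)
    (hS : ∀ x1 x2 y1 y2 : ℝ, 0 ≤
      (sx11 * x1 ^ 2 + 2 * sx12 * x1 * x2 + sx22 * x2 ^ 2)
      + (sy11 * y1 ^ 2 + 2 * sy12 * y1 * y2 + sy22 * y2 ^ 2)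
      + 2 * (c11 * x1 * y1 + c12 * (x1 * y2 + x2 * y1) + c22 * x2 * y2)) :
    0 ≤ (A11 - δ * (l1 ^ 2 + l2 ^ 2) * q11) * (sx11 + sy11 + 2 * c11) / 4
      + 2 * (A12 - δ * (l1 ^ 2 + l2 ^ 2) * q12) * (sx12 + sy12 + 2 * c12) / 4
      + (A22 - δ * (l1 ^ 2 + l2 ^ 2) * q22) * (sx22 + sy22 + 2 * c22) / 4
      - m * (X11 * sx11 + 2 * X12 * sx12 + X22 * sx22)
      - m * (Y11 * sy11 + 2 * Y12 * sy12 + Y22 * sy22)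
      - (px1 ^ 2 * sx11 + 2 * px1 * px2 * sx12 + px2 ^ 2 * sx22
        + py1 ^ 2 * sy11 + 2 * py1 * py2 * sy12 + py2 ^ 2 * sy22
        + 2 * (px1 * py1 * c11 + (px1 * py2 + px2 * py1) * c12 + px2 * py2 * c22)) / 2
      - 2 * δ * q * (sx11 + sy11 - 2 * c11 + sx22 + sy22 - 2 * c22)
      - 2 * δ * (l1 * q1 * (sx11 - sy11) + (l1 * q2 + l2 * q1) * (sx12 - sy12)
        + l2 * q2 * (sx22 - sy22)) := by
  have := quad_trace
    ((A11 - δ * (l1 ^ 2 + l2 ^ 2) * q11) / 4 - m * X11 - px1 ^ 2 / 2 - 2 * δ * q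
      - 2 * δ * (l1 * q1))
    ((A22 - δ * (l1 ^ 2 + l2 ^ 2) * q22) / 4 - m * X22 - px2 ^ 2 / 2 - 2 * δ * q
      - 2 * δ * (l2 * q2))
    ((A11 - δ * (l1 ^ 2 + l2 ^ 2) * q11) / 4 - m * Y11 - py1 ^ 2 / 2 - 2 * δ * q
      + 2 * δ * (l1 * q1))
    ((A22 - δ * (l1 ^ 2 + l2 ^ 2) * q22) / 4 - m * Y22 - py2 ^ 2 / 2 - 2 * δ * q
      + 2 * δ * (l2 * q2))
    ((A12 - δ * (l1 ^ 2 + l2 ^ 2) * q12) / 4 - m * X12 - px1 * px2 / 2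
      - δ * (l1 * q2 + l2 * q1))
    ((A11 - δ * (l1 ^ 2 + l2 ^ 2) * q11) / 4 - px1 * py1 / 2 + 2 * δ * q)
    ((A12 - δ * (l1 ^ 2 + l2 ^ 2) * q12) / 4 - px1 * py2 / 2 - δ * (l1 * q2 - l2 * q1))
    ((A12 - δ * (l1 ^ 2 + l2 ^ 2) * q12) / 4 - px2 * py1 / 2 - δ * (l2 * q1 - l1 * q2))
    ((A22 - δ * (l1 ^ 2 + l2 ^ 2) * q22) / 4 - px2 * py2 / 2 + 2 * δ * q)
    ((A12 - δ * (l1 ^ 2 + l2 ^ 2) * q12) / 4 - m * Y12 - py1 * py2 / 2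
      + δ * (l1 * q2 + l2 * q1))
    sx11 sx22 sy11 sy22 sx12 c11 c12 c12 c22 sy12
    (by
      intro x y z w
      refine (hQ x y z w).trans (le_of_eq ?_)
      ring)
    (by
      intro x y z w
      refine (hS x y z w).trans (le_of_eq ?_)
      ring)
  refine this.trans (le_of_eq ?_)
  ring

lemma psd_identity (t Gu Gv Ku Kv Eu Ev uu vv uv h2 κ : ℝ) :
    (1 + t) * (1 - t) * (
      (1 + t) ^ 2 * (uu + h2 * (2 * (1 + t) * (Gu - Ku)) ^ 2)
      + (1 - t) ^ 2 * (vv + h2 * (2 * (1 - t) * (Gv + Kv)) ^ 2)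
      + 2 * (2 * (1 - κ) * (uv + h2 * ((2 * Gu + Eu) * (2 * Gv + Ev)))
        - ((1 + t) ^ 2 * (uv + h2 * (4 * (1 + t) ^ 2 * (Gu - Ku) * (Gv - Kv)))
          + (1 - t) ^ 2 * (uv + h2 * (4 * (1 - t) ^ 2 * (Gu + Ku) * (Gv + Kv)))) / 2))
    = (1 + t) * (1 - t) * ((1 + t) ^ 2 * uu + (1 - t) ^ 2 * vv + 2 * (1 + t) * (1 - t) * uv)
      - 4 * κ * ((1 + t) * (1 - t) * uv)
      + h2 * (4 * (1 + t) ^ 3 * (1 - t) * ((1 + t) * (Gu - Ku)) ^ 2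
        + 4 * (1 + t) * (1 - t) ^ 3 * ((1 - t) * (Gv + Kv)) ^ 2
        + 4 * (1 - κ) * ((1 + t) * (2 * Gu + Eu)) * ((1 - t) * (2 * Gv + Ev))
        - 4 * (1 + t) ^ 4 * ((1 + t) * (Gu - Ku)) * ((1 - t) * (Gv - Kv))
        - 4 * (1 - t) ^ 4 * ((1 + t) * (Gu + Ku)) * ((1 - t) * (Gv + Kv))) := by
  ring

/-- The covariance matrix used at an interior minimum of the two-point function is positive
semidefinite. With `a` the coefficient matrix of the equation, its diagonal blocks are
`(1 + t)² a(x)` and `(1 - t)² a(y)`, and its off-diagonal block is chosen so that the sum of the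
four blocks is `4 (1 - κ) a(z)` at the midpoint `z`; the loss `κ` absorbs the variation of `a`. -/
lemma psd_form (t g1 g2 k1 k2 e1 e2 M E0 h2 κ : ℝ) (hab : 300 * M * h2 ≤ (1 + t) * (1 - t))
    (ht : |t| < 1) (hM : 1 ≤ M) (hg : g1 ^ 2 + g2 ^ 2 ≤ M) (hk : k1 ^ 2 + k2 ^ 2 ≤ 1)
    (he : e1 ^ 2 + e2 ^ 2 ≤ E0 ^ 2) (hE0 : 0 ≤ E0) (hE1 : E0 ≤ 1) (hh : 0 ≤ h2)
    (hκ : κ = 50 * M * h2 * (k1 ^ 2 + k2 ^ 2 + E0)) (u1 u2 v1 v2 : ℝ) :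
    0 ≤ (1 + t) ^ 2 * ((u1 ^ 2 + u2 ^ 2)
          + h2 * (2 * (1 + t) * ((g1 - k1) * u2 - (g2 - k2) * u1)) ^ 2)
      + (1 - t) ^ 2 * ((v1 ^ 2 + v2 ^ 2)
          + h2 * (2 * (1 - t) * ((g1 + k1) * v2 - (g2 + k2) * v1)) ^ 2)
      + 2 * (2 * (1 - κ) * ((u1 * v1 + u2 * v2) + h2 *
            (((2 * g1 + e1) * u2 - (2 * g2 + e2) * u1) * ((2 * g1 + e1) * v2 - (2 * g2 + e2) * v1)))
        - ((1 + t) ^ 2 * ((u1 * v1 + u2 * v2) + h2 * (4 * (1 + t) ^ 2 *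
            ((g1 - k1) * u2 - (g2 - k2) * u1) * ((g1 - k1) * v2 - (g2 - k2) * v1)))
          + (1 - t) ^ 2 * ((u1 * v1 + u2 * v2) + h2 * (4 * (1 - t) ^ 2 *
            ((g1 + k1) * u2 - (g2 + k2) * u1) * ((g1 + k1) * v2 - (g2 + k2) * v1)))) / 2) := by
  obtain ⟨ht1, ht2⟩ := abs_lt.1 ht
  have ha : 0 < 1 + t := by linarith
  have hb : 0 < 1 - t := by linarith
  have hab' : 0 < (1 + t) * (1 - t) := mul_pos ha hb
  have hab1 : (1 + t) * (1 - t) ≤ 1 := by nlinarith [sq_nonneg t]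
  have hkk : 0 ≤ k1 ^ 2 + k2 ^ 2 := by positivity
  have hκ0 : 0 ≤ κ := by rw [hκ]; positivity
  have hκ2 : κ ≤ 100 * M * h2 := by
    rw [hκ]
    have : 0 ≤ M * h2 := by positivity
    nlinarith
  have hκ1 : κ ≤ 1 := by nlinarith
  set a := 1 + t with ha_def
  set b := 1 - t with hb_def
  have key := psd_scalar t (g1 * (a * u2 + b * v2) - g2 * (a * u1 + b * v1))
    (g1 * ((a * u2 - b * v2) / 2) - g2 * ((a * u1 - b * v1) / 2))
    (k1 * (a * u2 + b * v2) - k2 * (a * u1 + b * v1))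
    (k1 * ((a * u2 - b * v2) / 2) - k2 * ((a * u1 - b * v1) / 2))
    (e1 * (a * u2 + b * v2) - e2 * (a * u1 + b * v1))
    (e1 * ((a * u2 - b * v2) / 2) - e2 * ((a * u1 - b * v1) / 2))
    M ((a * u1 + b * v1) ^ 2 + (a * u2 + b * v2) ^ 2)
    (((a * u1 - b * v1) / 2) ^ 2 + ((a * u2 - b * v2) / 2) ^ 2) (k1 ^ 2 + k2 ^ 2) E0 κ
    ht.le (by positivity) (by positivity) hkk hk hE0 hE1 hκ0 hκ1 hM
  have cs : ∀ p1 p2 x1 x2 B : ℝ, p1 ^ 2 + p2 ^ 2 ≤ B →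
      (p1 * x2 - p2 * x1) ^ 2 ≤ B * (x1 ^ 2 + x2 ^ 2) := by
    intro p1 p2 x1 x2 B hB
    have : (p1 * x2 - p2 * x1) ^ 2 ≤ (p1 ^ 2 + p2 ^ 2) * (x1 ^ 2 + x2 ^ 2) := by
      nlinarith [sq_nonneg (p1 * x1 + p2 * x2)]
    exact this.trans (by gcongr)
  replace key := key (cs _ _ _ _ _ hg) (cs _ _ _ _ _ hg) (cs _ _ _ _ _ le_rfl)
    (cs _ _ _ _ _ le_rfl) (cs _ _ _ _ _ he)
  have id := psd_identity t (g1 * u2 - g2 * u1) (g1 * v2 - g2 * v1)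
    (k1 * u2 - k2 * u1) (k1 * v2 - k2 * v1) (e1 * u2 - e2 * u1) (e1 * v2 - e2 * v1)
    (u1 ^ 2 + u2 ^ 2) (v1 ^ 2 + v2 ^ 2) (u1 * v1 + u2 * v2) h2 κ
  rw [← ha_def, ← hb_def] at id key
  refine nonneg_of_mul_nonneg_right (a := a * b) ?_ hab'
  have hN : ∀ w1 w2 : ℝ, (g1 - k1) * w2 - (g2 - k2) * w1
      = (g1 * w2 - g2 * w1) - (k1 * w2 - k2 * w1) := fun _ _ => by ring
  have hO : ∀ w1 w2 : ℝ, (g1 + k1) * w2 - (g2 + k2) * w1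
      = (g1 * w2 - g2 * w1) + (k1 * w2 - k2 * w1) := fun _ _ => by ring
  have hP : ∀ w1 w2 : ℝ, (2 * g1 + e1) * w2 - (2 * g2 + e2) * w1
      = 2 * (g1 * w2 - g2 * w1) + (e1 * w2 - e2 * w1) := fun _ _ => by ring
  simp only [hN, hO, hP]
  rw [id]
  have r1 : ∀ p1 p2 : ℝ, a * (p1 * u2 - p2 * u1) =
      (p1 * (a * u2 + b * v2) - p2 * (a * u1 + b * v1)) / 2 +
      (p1 * ((a * u2 - b * v2) / 2) - p2 * ((a * u1 - b * v1) / 2)) := by intros; ring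
  have r2 : ∀ p1 p2 : ℝ, b * (p1 * v2 - p2 * v1) =
      (p1 * (a * u2 + b * v2) - p2 * (a * u1 + b * v1)) / 2 -
      (p1 * ((a * u2 - b * v2) / 2) - p2 * ((a * u1 - b * v1) / 2)) := by intros; ring
  have m1 : a * ((g1 * u2 - g2 * u1) - (k1 * u2 - k2 * u1)) =
      a * (g1 * u2 - g2 * u1) - a * (k1 * u2 - k2 * u1) := by ring
  have m2 : a * ((g1 * u2 - g2 * u1) + (k1 * u2 - k2 * u1)) =
      a * (g1 * u2 - g2 * u1) + a * (k1 * u2 - k2 * u1) := by ring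
  have m3 : b * ((g1 * v2 - g2 * v1) - (k1 * v2 - k2 * v1)) =
      b * (g1 * v2 - g2 * v1) - b * (k1 * v2 - k2 * v1) := by ring
  have m4 : b * ((g1 * v2 - g2 * v1) + (k1 * v2 - k2 * v1)) =
      b * (g1 * v2 - g2 * v1) + b * (k1 * v2 - k2 * v1) := by ring
  have m5 : a * (2 * (g1 * u2 - g2 * u1) + (e1 * u2 - e2 * u1)) =
      2 * (a * (g1 * u2 - g2 * u1)) + a * (e1 * u2 - e2 * u1) := by ring
  have m6 : b * (2 * (g1 * v2 - g2 * v1) + (e1 * v2 - e2 * v1)) =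
      2 * (b * (g1 * v2 - g2 * v1)) + b * (e1 * v2 - e2 * v1) := by ring
  simp only [m1, m2, m3, m4, m5, m6, r1, r2]
  generalize g1 * (a * u2 + b * v2) - g2 * (a * u1 + b * v1) = Gs at *
  generalize g1 * ((a * u2 - b * v2) / 2) - g2 * ((a * u1 - b * v1) / 2) = Gy at *
  generalize k1 * (a * u2 + b * v2) - k2 * (a * u1 + b * v1) = Ks at *
  generalize k1 * ((a * u2 - b * v2) / 2) - k2 * ((a * u1 - b * v1) / 2) = Ky at *
  generalize e1 * (a * u2 + b * v2) - e2 * (a * u1 + b * v1) = Es at *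
  generalize e1 * ((a * u2 - b * v2) / 2) - e2 * ((a * u1 - b * v1) / 2) = Ey at *
  have key2 := mul_le_mul_of_nonneg_left key hh
  refine le_trans ?_ (add_le_add le_rfl (key2.trans (le_of_eq (by ring))))
  have s1 : a ^ 2 * (u1 ^ 2 + u2 ^ 2) + b ^ 2 * (v1 ^ 2 + v2 ^ 2)
      + 2 * a * b * (u1 * v1 + u2 * v2) = (a * u1 + b * v1) ^ 2 + (a * u2 + b * v2) ^ 2 := by ring
  have s2 : a * b * (u1 * v1 + u2 * v2) =
      ((a * u1 + b * v1) ^ 2 + (a * u2 + b * v2) ^ 2) / 4 -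
      (((a * u1 - b * v1) / 2) ^ 2 + ((a * u2 - b * v2) / 2) ^ 2) := by ring
  rw [s1, s2]
  have hS : 0 ≤ (a * u1 + b * v1) ^ 2 + (a * u2 + b * v2) ^ 2 := by positivity
  generalize (a * u1 + b * v1) ^ 2 + (a * u2 + b * v2) ^ 2 = S at *
  generalize ((a * u1 - b * v1) / 2) ^ 2 + ((a * u2 - b * v2) / 2) ^ 2 = Y at *
  have f1 : 0 ≤ (a * b - κ - 200 * M * h2) * S := mul_nonneg (by linarith) hS
  rw [hκ] at f1 ⊢
  linarith

/-! ### Comparison of the area factors -/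

/-- Upper bound of `y³` by its first order expansion in `y²` at `z²`. -/
lemma cube_le (y z : ℝ) (hy : 1 ≤ y) (hz : 1 ≤ z) :
    y ^ 3 ≤ z ^ 3 + 3 / 2 * z * (y ^ 2 - z ^ 2) + (y ^ 2 - z ^ 2) ^ 2 := by
  have h1 : (y - z) ^ 2 * (y + z / 2) ≤ (y - z) ^ 2 * (y + z) ^ 2 := by
    apply mul_le_mul_of_nonneg_left _ (sq_nonneg _)
    nlinarith
  nlinarith

lemma dot_bounds (g1 g2 k1 k2 M N : ℝ) (hM : 0 ≤ M) (hg : g1 ^ 2 + g2 ^ 2 ≤ M)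
    (hk : k1 ^ 2 + k2 ^ 2 ≤ N) : (g1 * k1 + g2 * k2) ^ 2 ≤ M * N ∧
      (g1 * k2 - g2 * k1) ^ 2 ≤ M * N := by
  have h0 : 0 ≤ k1 ^ 2 + k2 ^ 2 := by positivity
  have h1 : (g1 ^ 2 + g2 ^ 2) * (k1 ^ 2 + k2 ^ 2) ≤ M * N := by gcongr
  constructor
  · nlinarith [sq_nonneg (g1 * k2 - g2 * k1)]
  · nlinarith [sq_nonneg (g1 * k1 + g2 * k2)]

lemma sq_sum4 (a b c d : ℝ) : (a + b + c + d) ^ 2 ≤ 4 * (a ^ 2 + b ^ 2 + c ^ 2 + d ^ 2) := by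
  nlinarith [sq_nonneg (a - b), sq_nonneg (a - c), sq_nonneg (a - d), sq_nonneg (b - c),
    sq_nonneg (b - d), sq_nonneg (c - d)]

set_option maxHeartbeats 1000000 in
/-- Difference of the squared gradients at an endpoint and at the midpoint. -/
lemma diff_sq (s g1 g2 k1 k2 e1 e2 M E0 : ℝ) (hs : |s| ≤ 1) (hM : 1 ≤ M)
    (hg : g1 ^ 2 + g2 ^ 2 ≤ M) (hk : k1 ^ 2 + k2 ^ 2 ≤ 1)
    (he : e1 ^ 2 + e2 ^ 2 ≤ E0 ^ 2) (hE0 : 0 ≤ E0) (hE1 : E0 ≤ 1) :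
    (4 * (1 + s) ^ 2 * ((g1 + k1) ^ 2 + (g2 + k2) ^ 2)
      - ((2 * g1 + e1) ^ 2 + (2 * g2 + e2) ^ 2)) ^ 2 ≤
      6000 * M ^ 2 * (s ^ 2 + (k1 ^ 2 + k2 ^ 2) + E0) := by
  obtain ⟨hs1, hs2⟩ := abs_le.1 hs
  set K := k1 ^ 2 + k2 ^ 2 with hK
  have hK0 : 0 ≤ K := by positivity
  have hG0 : 0 ≤ g1 ^ 2 + g2 ^ 2 := by positivity
  set G := g1 ^ 2 + g2 ^ 2 with hG
  have gk := (dot_bounds g1 g2 k1 k2 M K (by linarith) hg le_rfl).1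
  have ge := (dot_bounds g1 g2 e1 e2 M (E0 ^ 2) (by linarith) hg he).1
  set gk' := g1 * k1 + g2 * k2 with hgk'
  set ge' := g1 * e1 + g2 * e2 with hge'
  set ee := e1 ^ 2 + e2 ^ 2 with hee
  have hee0 : 0 ≤ ee := by positivity
  have id : 4 * (1 + s) ^ 2 * ((g1 + k1) ^ 2 + (g2 + k2) ^ 2)
      - ((2 * g1 + e1) ^ 2 + (2 * g2 + e2) ^ 2) =
      4 * (2 + s) * s * G + 8 * (1 + s) ^ 2 * gk' + 4 * (1 + s) ^ 2 * K + (-(4 * ge' + ee)) := by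
    rw [hG, hgk', hK, hge', hee]; ring
  rw [id]
  refine (sq_sum4 _ _ _ _).trans ?_
  have ha : (1 + s) ^ 2 ≤ 4 := by nlinarith only [hs1, hs2]
  have ha0 : 0 ≤ (1 + s) ^ 2 := by positivity
  have ha4 : ((1 + s) ^ 2) ^ 2 ≤ 16 := by nlinarith only [ha, ha0]
  have hE2 : E0 ^ 2 ≤ E0 := by nlinarith only [hE0, hE1]
  have hM2 : M ≤ M ^ 2 := by nlinarith only [hM]
  have hM21 : 1 ≤ M ^ 2 := by linarith
  have b1 : (4 * (2 + s) * s * G) ^ 2 ≤ 144 * M ^ 2 * s ^ 2 := by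
    have h1 : (2 + s) ^ 2 ≤ 9 := by nlinarith only [hs1, hs2]
    have h2 : G ^ 2 ≤ M ^ 2 := by gcongr
    calc (4 * (2 + s) * s * G) ^ 2 = 16 * ((2 + s) ^ 2) * G ^ 2 * s ^ 2 := by ring
      _ ≤ 16 * 9 * M ^ 2 * s ^ 2 := by gcongr
      _ = _ := by ring
  have b2 : (8 * (1 + s) ^ 2 * gk') ^ 2 ≤ 1024 * M ^ 2 * K := by
    calc (8 * (1 + s) ^ 2 * gk') ^ 2 = 64 * (((1 + s) ^ 2) ^ 2) * gk' ^ 2 := by ring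
      _ ≤ 64 * 16 * (M * K) := by gcongr
      _ = 1024 * M * K := by ring
      _ ≤ _ := by gcongr
  have b3 : (4 * (1 + s) ^ 2 * K) ^ 2 ≤ 256 * M ^ 2 * K := by
    have : K ^ 2 ≤ 1 * K := by nlinarith only [hK0, hk]
    calc (4 * (1 + s) ^ 2 * K) ^ 2 = 16 * (((1 + s) ^ 2) ^ 2) * K ^ 2 := by ring
      _ ≤ 16 * 16 * (M ^ 2 * K) := by
        gcongr
        exact this.trans (by gcongr)
      _ = _ := by ring
  have b4 : (-(4 * ge' + ee)) ^ 2 ≤ 34 * M ^ 2 * E0 := by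
    have h1 : ee ^ 2 ≤ E0 := by
      have : ee ≤ E0 := he.trans hE2
      nlinarith only [this, hee0, hE0, hE1]
    have h2 : ge' ^ 2 ≤ M ^ 2 * E0 := ge.trans (by gcongr)
    have h3 : E0 ≤ M ^ 2 * E0 := le_mul_of_one_le_left hE0 hM21
    nlinarith only [sq_nonneg (4 * ge' - ee), h1, h2, h3]
  have p1 : 0 ≤ M ^ 2 * s ^ 2 := by positivity
  have p2 : 0 ≤ M ^ 2 * K := by positivity
  have p3 : 0 ≤ M ^ 2 * E0 := by positivity
  linarith

set_option maxHeartbeats 1000000 in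
/-- The factors `(1 + h²|Dv|²)^{3/2}` at the two endpoints and at the midpoint, weighted by `1 + t`,
`1 - t` and `-2`, cancel up to an error of size `h²` times the deviation of the three gradients. -/
lemma theta_part (t g1 g2 k1 k2 e1 e2 M E0 h2 yx yy yz : ℝ) (ht : |t| ≤ 1) (hM : 1 ≤ M)
    (hg : g1 ^ 2 + g2 ^ 2 ≤ M) (hk : k1 ^ 2 + k2 ^ 2 ≤ 1)
    (he : e1 ^ 2 + e2 ^ 2 ≤ E0 ^ 2) (hE0 : 0 ≤ E0) (hE1 : E0 ≤ 1) (hh : 0 ≤ h2) (hh1 : h2 ≤ 1)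
    (hx : yx ^ 2 = 1 + h2 * (4 * (1 + t) ^ 2 * ((g1 - k1) ^ 2 + (g2 - k2) ^ 2)))
    (hy : yy ^ 2 = 1 + h2 * (4 * (1 - t) ^ 2 * ((g1 + k1) ^ 2 + (g2 + k2) ^ 2)))
    (hz : yz ^ 2 = 1 + h2 * ((2 * g1 + e1) ^ 2 + (2 * g2 + e2) ^ 2))
    (hx0 : 0 ≤ yx) (hy0 : 0 ≤ yy) (hz0 : 0 ≤ yz) :
    (1 + t) * yx ^ 3 + (1 - t) * yy ^ 3 - 2 * yz ^ 3
        ≤ 20000 * M ^ 2 * (h2 * (t ^ 2 + (k1 ^ 2 + k2 ^ 2) + E0)) ∧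
      yz ^ 3 ≤ 121 * M ^ 2 := by
  obtain ⟨ht1, ht2⟩ := abs_le.1 ht
  have one_of : ∀ y B : ℝ, 0 ≤ y → 0 ≤ B → y ^ 2 = 1 + h2 * B → 1 ≤ y := by
    intro y B h0 hB h
    have : 0 ≤ h2 * B := by positivity
    nlinarith only [this, h, h0]
  have hx1 := one_of _ _ hx0 (by positivity) hx
  have hy1 := one_of _ _ hy0 (by positivity) hy
  have hz1 := one_of _ _ hz0 (by positivity) hz
  have dx := diff_sq t g1 g2 (-k1) (-k2) e1 e2 M E0 ht hM hg (by simpa using hk) he hE0 hE1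
  have dy := diff_sq (-t) g1 g2 k1 k2 e1 e2 M E0 (by simpa using ht) hM hg hk he hE0 hE1
  have cx := cube_le yx yz hx1 hz1
  have cy := cube_le yy yz hy1 hz1
  set D := t ^ 2 + (k1 ^ 2 + k2 ^ 2) + E0 with hD
  have hD0 : 0 ≤ D := by positivity
  have hM0 : 0 ≤ M := by linarith
  have ex : (yx ^ 2 - yz ^ 2) ^ 2 ≤ h2 * (6000 * M ^ 2 * D) := by
    have : yx ^ 2 - yz ^ 2 = h2 * (4 * (1 + t) ^ 2 * ((g1 + -k1) ^ 2 + (g2 + -k2) ^ 2)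
      - ((2 * g1 + e1) ^ 2 + (2 * g2 + e2) ^ 2)) := by rw [hx, hz]; ring
    rw [this, mul_pow]
    have h22 : h2 ^ 2 ≤ h2 := by nlinarith only [hh, hh1]
    have dx' := dx.trans (le_of_eq (by rw [hD]; ring : _ = 6000 * M ^ 2 * D))
    gcongr
  have ey : (yy ^ 2 - yz ^ 2) ^ 2 ≤ h2 * (6000 * M ^ 2 * D) := by
    have : yy ^ 2 - yz ^ 2 = h2 * (4 * (1 + -t) ^ 2 * ((g1 + k1) ^ 2 + (g2 + k2) ^ 2)
      - ((2 * g1 + e1) ^ 2 + (2 * g2 + e2) ^ 2)) := by rw [hy, hz]; ring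
    rw [this, mul_pow]
    have h22 : h2 ^ 2 ≤ h2 := by nlinarith only [hh, hh1]
    have dy' := dy.trans (le_of_eq (by rw [hD]; ring : _ = 6000 * M ^ 2 * D))
    gcongr
  have hzM : yz ^ 2 ≤ 11 * M := by
    have : (2 * g1 + e1) ^ 2 + (2 * g2 + e2) ^ 2 ≤ 10 * M := by
      nlinarith only [sq_nonneg (2 * g1 - e1), sq_nonneg (2 * g2 - e2), hg, he, hM, hE0, hE1]
    have h3 : h2 * ((2 * g1 + e1) ^ 2 + (2 * g2 + e2) ^ 2) ≤ 1 * (10 * M) := by gcongr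
    rw [hz]; linarith
  have hzM' : yz ≤ 11 * M := by nlinarith only [hzM, hz1]
  refine ⟨?_, by nlinarith only [hzM, hzM', hz1, hM0, hz0, mul_le_mul hzM hzM' hz0 (by positivity : 0 ≤ 11 * M)]⟩
  have gk := (dot_bounds g1 g2 k1 k2 M _ hM0 hg le_rfl).1
  have ge := (dot_bounds g1 g2 e1 e2 M (E0 ^ 2) hM0 hg he).1
  have f1 : (1 + t) * (yx ^ 2 - yz ^ 2) + (1 - t) * (yy ^ 2 - yz ^ 2) ≤ h2 * (200 * M * D) := by
    have : (1 + t) * (yx ^ 2 - yz ^ 2) + (1 - t) * (yy ^ 2 - yz ^ 2) =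
        h2 * (24 * t ^ 2 * (g1 ^ 2 + g2 ^ 2) + (8 + 24 * t ^ 2) * (k1 ^ 2 + k2 ^ 2)
          - (48 + 16 * t ^ 2) * (t * (g1 * k1 + g2 * k2))
          - 8 * (g1 * e1 + g2 * e2) - 2 * (e1 ^ 2 + e2 ^ 2)) := by
      rw [hx, hy, hz]; ring
    rw [this]
    apply mul_le_mul_of_nonneg_left _ hh
    have hT : t ^ 2 ≤ 1 := by nlinarith only [ht1, ht2]
    have a1 : t ^ 2 * (g1 ^ 2 + g2 ^ 2) ≤ t ^ 2 * M := by gcongr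
    have a2 : (8 + 24 * t ^ 2) * (k1 ^ 2 + k2 ^ 2) ≤ 32 * (M * (k1 ^ 2 + k2 ^ 2)) := by
      have : (8 + 24 * t ^ 2) ≤ 32 * M := by linarith
      linarith [mul_le_mul_of_nonneg_right this (by positivity : 0 ≤ k1 ^ 2 + k2 ^ 2)]
    have a3 : -(48 + 16 * t ^ 2) * (t * (g1 * k1 + g2 * k2)) ≤
        64 * ((M * t ^ 2 + (k1 ^ 2 + k2 ^ 2)) / 2) := by
      have h1 : |t * (g1 * k1 + g2 * k2)| ≤ (M * t ^ 2 + (k1 ^ 2 + k2 ^ 2)) / 2 := by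
        apply abs_le_half_of_sq_le (by positivity) (by positivity)
        rw [mul_pow]
        linarith [mul_le_mul_of_nonneg_left gk (sq_nonneg t)]
      have h2' : |(48 + 16 * t ^ 2)| ≤ 64 := by
        rw [abs_le]; constructor <;> linarith [sq_nonneg t]
      have := mul_bd (x := t * (g1 * k1 + g2 * k2)) h2'
      linarith
    have a4 : |g1 * e1 + g2 * e2| ≤ M * E0 := by
      apply abs_le_of_sq_le_sq _ (by positivity)
      have : M ≤ M ^ 2 := by nlinarith only [hM]
      rw [mul_pow]
      exact ge.trans (by gcongr)
    have a4' := (abs_le.1 a4).1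
    have a5 : k1 ^ 2 + k2 ^ 2 ≤ M * (k1 ^ 2 + k2 ^ 2) := by
      exact le_mul_of_one_le_left (by positivity) hM
    have a6 : 0 ≤ e1 ^ 2 + e2 ^ 2 := by positivity
    have a7 : 0 ≤ M * t ^ 2 := by positivity
    have a8 : 0 ≤ M * E0 := by positivity
    have a9 : 0 ≤ M * (k1 ^ 2 + k2 ^ 2) := by positivity
    rw [hD]
    linarith
  have f2 : 3 / 2 * yz * ((1 + t) * (yx ^ 2 - yz ^ 2) + (1 - t) * (yy ^ 2 - yz ^ 2)) ≤
      3 / 2 * (11 * M) * (h2 * (200 * M * D)) := by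
    refine (mul_le_mul_of_nonneg_left f1 (by positivity)).trans ?_
    gcongr
  have cx' := mul_le_mul_of_nonneg_left cx (by linarith : 0 ≤ 1 + t)
  have cy' := mul_le_mul_of_nonneg_left cy (by linarith : 0 ≤ 1 - t)
  have ex' := mul_le_mul_of_nonneg_left ex (by linarith : 0 ≤ 1 + t)
  have ey' := mul_le_mul_of_nonneg_left ey (by linarith : 0 ≤ 1 - t)
  have pD : 0 ≤ M ^ 2 * (h2 * D) := by positivity
  linarith

/-! ### The inequality at an interior minimum -/

set_option maxHeartbeats 2000000 in
/-- The inequality obtained at an interior minimum of the two-point function by tracing the second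
order condition against the covariance of `psd_form` and inserting the three equations. -/
lemma core_ineq (A11 A12 A22 X11 X12 X22 Y11 Y12 Y22 q q1 q2 q11 q12 q22 : ℝ)
    (l1 l2 m μ δ t g1 g2 k1 k2 e1 e2 M E0 h2 κ θx θy θz : ℝ)
    (hQ : ∀ x1 x2 y1 y2 : ℝ, 0 ≤
      (A11 * ((x1 + y1) / 2) ^ 2 + 2 * A12 * ((x1 + y1) / 2) * ((x2 + y2) / 2)
        + A22 * ((x2 + y2) / 2) ^ 2)
      - m * (X11 * x1 ^ 2 + 2 * X12 * x1 * x2 + X22 * x2 ^ 2)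
      - m * (Y11 * y1 ^ 2 + 2 * Y12 * y1 * y2 + Y22 * y2 ^ 2)
      - (μ * (g1 - k1) * x1 + μ * (g2 - k2) * x2 + μ * (g1 + k1) * y1
          + μ * (g2 + k2) * y2) ^ 2 / 2
      - δ * (2 * q * ((x1 - y1) ^ 2 + (x2 - y2) ^ 2)
        + (l1 ^ 2 + l2 ^ 2) * (q11 * ((x1 + y1) / 2) ^ 2
          + 2 * q12 * ((x1 + y1) / 2) * ((x2 + y2) / 2) + q22 * ((x2 + y2) / 2) ^ 2)
        + 4 * (l1 * (x1 - y1) + l2 * (x2 - y2))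
          * (q1 * ((x1 + y1) / 2) + q2 * ((x2 + y2) / 2))))
    (hA : A11 * (1 + h2 * (2 * g2 + e2) ^ 2) - 2 * A12 * (h2 * (2 * g1 + e1) * (2 * g2 + e2))
      + A22 * (1 + h2 * (2 * g1 + e1) ^ 2) = -2 * θz)
    (hX : (1 + t) * m * (X11 * (1 + h2 * (2 * (1 + t) * (g2 - k2)) ^ 2)
      - 2 * X12 * (h2 * (2 * (1 + t) * (g1 - k1)) * (2 * (1 + t) * (g2 - k2)))
      + X22 * (1 + h2 * (2 * (1 + t) * (g1 - k1)) ^ 2))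
      = -(θx + μ ^ 2 * ((g1 - k1) ^ 2 + (g2 - k2) ^ 2)))
    (hY : (1 - t) * m * (Y11 * (1 + h2 * (2 * (1 - t) * (g2 + k2)) ^ 2)
      - 2 * Y12 * (h2 * (2 * (1 - t) * (g1 + k1)) * (2 * (1 - t) * (g2 + k2)))
      + Y22 * (1 + h2 * (2 * (1 - t) * (g1 + k1)) ^ 2))
      = -(θy + μ ^ 2 * ((g1 + k1) ^ 2 + (g2 + k2) ^ 2)))
    (hab : 300 * M * h2 ≤ (1 + t) * (1 - t))
    (ht : |t| < 1) (hM : 1 ≤ M) (hg : g1 ^ 2 + g2 ^ 2 ≤ M) (hk : k1 ^ 2 + k2 ^ 2 ≤ 1)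
    (he : e1 ^ 2 + e2 ^ 2 ≤ E0 ^ 2) (hE0 : 0 ≤ E0) (hE1 : E0 ≤ 1) (hh : 0 ≤ h2)
    (hκ : κ = 50 * M * h2 * (k1 ^ 2 + k2 ^ 2 + E0)) :
    0 ≤ (1 + t) * θx + (1 - t) * θy - 2 * (1 - κ) * θz
      + 2 * ((1 + t) * (1 - t)) * (μ ^ 2 * (k1 ^ 2 + k2 ^ 2))
      + 2 * κ * μ ^ 2 * ((g1 ^ 2 + g2 ^ 2) - (k1 ^ 2 + k2 ^ 2))
      - 2 * (1 - κ) * h2 * μ ^ 2 * ((e1 * g2 - e2 * g1) ^ 2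
          - (2 * (g1 * k2 - g2 * k1) + (e1 * k2 - e2 * k1)) ^ 2)
      - δ * (1 - κ) * ((l1 ^ 2 + l2 ^ 2) * (q11 * (1 + h2 * (2 * g2 + e2) ^ 2)
          - 2 * q12 * (h2 * (2 * g1 + e1) * (2 * g2 + e2)) + q22 * (1 + h2 * (2 * g1 + e1) ^ 2)))
      - 2 * δ * q * (8 * t ^ 2 + 8 * κ + h2 * (8 * (1 + t) ^ 4 * ((g1 - k1) ^ 2 + (g2 - k2) ^ 2)
          + 8 * (1 - t) ^ 4 * ((g1 + k1) ^ 2 + (g2 + k2) ^ 2)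
          - 4 * (1 - κ) * ((2 * g1 + e1) ^ 2 + (2 * g2 + e2) ^ 2)))
      - 2 * δ * (4 * t * (l1 * q1 + l2 * q2)
          + 4 * h2 * ((1 + t) ^ 4 * ((g1 - k1) * l2 - (g2 - k2) * l1)
              * ((g1 - k1) * q2 - (g2 - k2) * q1)
            - (1 - t) ^ 4 * ((g1 + k1) * l2 - (g2 + k2) * l1)
              * ((g1 + k1) * q2 - (g2 + k2) * q1))) := by
  have psd := psd_form t g1 g2 k1 k2 e1 e2 M E0 h2 κ hab ht hM hg hk he hE0 hE1 hh hκ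
  have tr := core_trace A11 A12 A22 X11 X12 X22 Y11 Y12 Y22 q q1 q2 q11 q12 q22
    (μ * (g1 - k1)) (μ * (g2 - k2)) (μ * (g1 + k1)) (μ * (g2 + k2)) l1 l2 m δ hQ
    ((1 + t) ^ 2 * (1 + h2 * (2 * (1 + t) * (g2 - k2)) ^ 2))
    (-((1 + t) ^ 2 * (h2 * (2 * (1 + t) * (g1 - k1)) * (2 * (1 + t) * (g2 - k2)))))
    ((1 + t) ^ 2 * (1 + h2 * (2 * (1 + t) * (g1 - k1)) ^ 2))
    ((1 - t) ^ 2 * (1 + h2 * (2 * (1 - t) * (g2 + k2)) ^ 2))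
    (-((1 - t) ^ 2 * (h2 * (2 * (1 - t) * (g1 + k1)) * (2 * (1 - t) * (g2 + k2)))))
    ((1 - t) ^ 2 * (1 + h2 * (2 * (1 - t) * (g1 + k1)) ^ 2))
    (2 * (1 - κ) * (1 + h2 * (2 * g2 + e2) ^ 2)
      - ((1 + t) ^ 2 * (1 + h2 * (2 * (1 + t) * (g2 - k2)) ^ 2)
        + (1 - t) ^ 2 * (1 + h2 * (2 * (1 - t) * (g2 + k2)) ^ 2)) / 2)
    (-(2 * (1 - κ) * (h2 * (2 * g1 + e1) * (2 * g2 + e2)))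
      + ((1 + t) ^ 2 * (h2 * (2 * (1 + t) * (g1 - k1)) * (2 * (1 + t) * (g2 - k2)))
        + (1 - t) ^ 2 * (h2 * (2 * (1 - t) * (g1 + k1)) * (2 * (1 - t) * (g2 + k2)))) / 2)
    (2 * (1 - κ) * (1 + h2 * (2 * g1 + e1) ^ 2)
      - ((1 + t) ^ 2 * (1 + h2 * (2 * (1 + t) * (g1 - k1)) ^ 2)
        + (1 - t) ^ 2 * (1 + h2 * (2 * (1 - t) * (g1 + k1)) ^ 2)) / 2)
    (by
      intro x1 x2 y1 y2
      refine (psd x1 x2 y1 y2).trans (le_of_eq ?_)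
      ring)
  refine tr.trans (le_of_eq ?_)
  linear_combination (1 - κ) * hA - (1 + t) * hX - (1 - t) * hY

/-! ### Smallness of the error terms -/

/-- The trace of the `h²` part of the covariance of the difference `x - y` is bounded below by a
small negative quantity. -/
lemma est_trD (t g1 g2 k1 k2 e1 e2 M E0 κ : ℝ) (ht : |t| ≤ 1) (hM : 1 ≤ M)
    (hg : g1 ^ 2 + g2 ^ 2 ≤ M)
    (he : e1 ^ 2 + e2 ^ 2 ≤ E0 ^ 2) (hE0 : 0 ≤ E0) (hE1 : E0 ≤ 1) (hκ : 0 ≤ κ) :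
    -(200 * M * (t ^ 2 + (k1 ^ 2 + k2 ^ 2) + E0)) ≤
      8 * (1 + t) ^ 4 * ((g1 - k1) ^ 2 + (g2 - k2) ^ 2)
          + 8 * (1 - t) ^ 4 * ((g1 + k1) ^ 2 + (g2 + k2) ^ 2)
          - 4 * (1 - κ) * ((2 * g1 + e1) ^ 2 + (2 * g2 + e2) ^ 2) := by
  obtain ⟨ht1, ht2⟩ := abs_le.1 ht
  have hT : t ^ 2 ≤ 1 := by nlinarith only [ht1, ht2]
  have hM0 : 0 ≤ M := by linarith
  have gk := (dot_bounds g1 g2 k1 k2 M _ hM0 hg le_rfl).1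
  have ge := (dot_bounds g1 g2 e1 e2 M (E0 ^ 2) hM0 hg he).1
  have a3 : (128 * (1 + t ^ 2)) * (t * (g1 * k1 + g2 * k2)) ≤
        256 * ((M * t ^ 2 + (k1 ^ 2 + k2 ^ 2)) / 2) := by
    have h1 : |t * (g1 * k1 + g2 * k2)| ≤ (M * t ^ 2 + (k1 ^ 2 + k2 ^ 2)) / 2 := by
      apply abs_le_half_of_sq_le (by positivity) (by positivity)
      rw [mul_pow]
      linarith [mul_le_mul_of_nonneg_left gk (sq_nonneg t)]
    have h2' : |-(128 * (1 + t ^ 2))| ≤ 256 := by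
      rw [abs_le]; constructor <;> linarith [sq_nonneg t]
    have := mul_bd (x := t * (g1 * k1 + g2 * k2)) h2'
    linarith
  have a4 : |g1 * e1 + g2 * e2| ≤ M * E0 := by
    apply abs_le_of_sq_le_sq _ (by positivity)
    have : M ≤ M ^ 2 := by nlinarith only [hM]
    rw [mul_pow]
    exact ge.trans (by gcongr)
  have a4' := (abs_le.1 a4).2
  have a5 : k1 ^ 2 + k2 ^ 2 ≤ M * (k1 ^ 2 + k2 ^ 2) := by
    exact le_mul_of_one_le_left (by positivity) hM
  have a6 : e1 ^ 2 + e2 ^ 2 ≤ M * E0 := he.trans (by nlinarith only [hE0, hE1, hM])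
  have a7 : 0 ≤ M * t ^ 2 := by positivity
  have a8 : 0 ≤ M * E0 := by positivity
  have a9 : 0 ≤ M * (k1 ^ 2 + k2 ^ 2) := by positivity
  have a10 : 0 ≤ κ * ((2 * g1 + e1) ^ 2 + (2 * g2 + e2) ^ 2) := by positivity
  have a11 : 0 ≤ (96 * t ^ 2 + 16 * t ^ 4) * (g1 ^ 2 + g2 ^ 2) := by positivity
  have a12 : 0 ≤ (16 + 96 * t ^ 2 + 16 * t ^ 4) * (k1 ^ 2 + k2 ^ 2) := by positivity
  linarith

/-- The mixed terms from the `h²` part of the covariance between sum and difference of the two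
points are bounded by a quadratic expression in small quantities. -/
lemma est_cross (t Gl Gd Kl Kd M Lam : ℝ) (K : ℝ) (ht : |t| ≤ 1) (hM : 1 ≤ M) (hLam : 0 ≤ Lam)
    (hK : 0 ≤ K) (hK1 : K ≤ 1)
    (h1 : |Gl * Gd| ≤ M * Lam) (h2 : |Kl * Kd| ≤ K * Lam) (h3 : (Gl * Kd) ^ 2 ≤ M * K * Lam ^ 2)
    (h4 : (Kl * Gd) ^ 2 ≤ M * K * Lam ^ 2) :
    |(1 + t) ^ 4 * (Gl - Kl) * (Gd - Kd) - (1 - t) ^ 4 * (Gl + Kl) * (Gd + Kd)| ≤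
      100 * M * (t ^ 2 + K + Lam ^ 2) := by
  obtain ⟨ht1, ht2⟩ := abs_le.1 ht
  have hT : t ^ 2 ≤ 1 := by nlinarith only [ht1, ht2]
  have hT4 : t ^ 4 ≤ 1 := by nlinarith only [hT, sq_nonneg t]
  have id : (1 + t) ^ 4 * (Gl - Kl) * (Gd - Kd) - (1 - t) ^ 4 * (Gl + Kl) * (Gd + Kd) =
      8 * (1 + t ^ 2) * (t * (Gl * Gd + Kl * Kd))
        + (-(2 + 12 * t ^ 2 + 2 * t ^ 4)) * (Gl * Kd + Kl * Gd) := by ring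
  rw [id]
  refine (abs_add_le _ _).trans ?_
  rw [abs_mul (8 * (1 + t ^ 2)), abs_mul t, abs_mul (-(2 + 12 * t ^ 2 + 2 * t ^ 4)), abs_neg]
  have c1 : |8 * (1 + t ^ 2)| ≤ 16 := by
    rw [abs_of_nonneg (by positivity)]; linarith
  have c2 : |2 + 12 * t ^ 2 + 2 * t ^ 4| ≤ 16 := by
    rw [abs_of_nonneg (by positivity)]; linarith
  have b1 : |Gl * Gd + Kl * Kd| ≤ 2 * M * Lam := by
    refine (abs_add_le _ _).trans ?_
    nlinarith only [h1, h2, hM, hK1, hLam]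
  have b2 : |t| * |Gl * Gd + Kl * Kd| ≤ M * (t ^ 2 + Lam ^ 2) := by
    have := mul_le_mul_of_nonneg_left b1 (abs_nonneg t)
    have h5 : 2 * (|t| * Lam) ≤ t ^ 2 + Lam ^ 2 := by
      nlinarith only [sq_nonneg (|t| - Lam), sq_abs t]
    nlinarith only [this, h5, hM]
  have b3 : |Gl * Kd| ≤ M * (K + Lam ^ 2) := by
    have := abs_le_half_of_sq_le (x := Gl * Kd) (A := M * K) (B := Lam ^ 2) (by positivity)
      (by positivity) h3
    nlinarith only [this, hM, sq_nonneg Lam, hK]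
  have b4 : |Kl * Gd| ≤ M * (K + Lam ^ 2) := by
    have := abs_le_half_of_sq_le (x := Kl * Gd) (A := M * K) (B := Lam ^ 2) (by positivity)
      (by positivity) h4
    nlinarith only [this, hM, sq_nonneg Lam, hK]
  have b5 : |Gl * Kd + Kl * Gd| ≤ 2 * (M * (K + Lam ^ 2)) := by
    refine (abs_add_le _ _).trans ?_
    linarith
  have d1 : |8 * (1 + t ^ 2)| * (|t| * |Gl * Gd + Kl * Kd|) ≤ 16 * (M * (t ^ 2 + Lam ^ 2)) := by
    gcongr
  have d2 : |2 + 12 * t ^ 2 + 2 * t ^ 4| * |Gl * Kd + Kl * Gd|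
      ≤ 16 * (2 * (M * (K + Lam ^ 2))) := by gcongr
  have p1 : 0 ≤ M * t ^ 2 := by positivity
  have p2 : 0 ≤ M * K := by positivity
  have p3 : 0 ≤ M * Lam ^ 2 := by positivity
  linarith

set_option maxHeartbeats 2000000 in
/-- With the bounds available at the minimum, the inequality of `core_ineq` is contradictory. -/
lemma core_est (q q1 q2 q11 q12 q22 : ℝ)
    (l1 l2 μ δ t g1 g2 k1 k2 e1 e2 M E0 h2 κ yx yy yz S c2 : ℝ)
    (ht : |t| ≤ 1) (hM : 1 ≤ M) (hg : g1 ^ 2 + g2 ^ 2 ≤ M) (hk : k1 ^ 2 + k2 ^ 2 ≤ 1)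
    (he : e1 ^ 2 + e2 ^ 2 ≤ E0 ^ 2) (hE0 : 0 ≤ E0) (hE1 : E0 ≤ 1) (hh : 0 ≤ h2) (hh1 : h2 ≤ 1)
    (hκ : κ = 50 * M * h2 * (k1 ^ 2 + k2 ^ 2 + E0))
    (hx : yx ^ 2 = 1 + h2 * (4 * (1 + t) ^ 2 * ((g1 - k1) ^ 2 + (g2 - k2) ^ 2)))
    (hy : yy ^ 2 = 1 + h2 * (4 * (1 - t) ^ 2 * ((g1 + k1) ^ 2 + (g2 + k2) ^ 2)))
    (hz : yz ^ 2 = 1 + h2 * ((2 * g1 + e1) ^ 2 + (2 * g2 + e2) ^ 2))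
    (hx0 : 0 ≤ yx) (hy0 : 0 ≤ yy) (hz0 : 0 ≤ yz)
    (hS : 0 < S) (hc2 : 0 < c2) (hc2' : c2 ≤ 1) (hδ : 0 < δ) (hδ1 : δ ≤ 1)
    (hq1 : 1 ≤ q) (hqM : q ≤ M)
    (hk' : k1 ^ 2 + k2 ^ 2 ≤ M * (δ ^ 2 * S)) (hE' : E0 ≤ M * (δ * S))
    (hμk : μ ^ 2 * (k1 ^ 2 + k2 ^ 2) ≤ M * (δ ^ 2 * S)) (hμE : μ ^ 2 * E0 ≤ M * (δ * S))
    (hlap : c2 * S ≤ (l1 ^ 2 + l2 ^ 2) * (q11 + q22))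
    (h11 : |(l1 ^ 2 + l2 ^ 2) * q11| ≤ M * S) (h12 : |(l1 ^ 2 + l2 ^ 2) * q12| ≤ M * S)
    (h22 : |(l1 ^ 2 + l2 ^ 2) * q22| ≤ M * S)
    (hDq : (l1 ^ 2 + l2 ^ 2) * (q1 ^ 2 + q2 ^ 2) ≤ c2 / 16 * (q * S))
    (hδs : 100000 * M * δ ≤ c2) (hhs : 1000000 * M ^ 4 * h2 ≤ c2 * δ)
    (main : 0 ≤ (1 + t) * yx ^ 3 + (1 - t) * yy ^ 3 - 2 * (1 - κ) * yz ^ 3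
      + 2 * ((1 + t) * (1 - t)) * (μ ^ 2 * (k1 ^ 2 + k2 ^ 2))
      + 2 * κ * μ ^ 2 * ((g1 ^ 2 + g2 ^ 2) - (k1 ^ 2 + k2 ^ 2))
      - 2 * (1 - κ) * h2 * μ ^ 2 * ((e1 * g2 - e2 * g1) ^ 2
          - (2 * (g1 * k2 - g2 * k1) + (e1 * k2 - e2 * k1)) ^ 2)
      - δ * (1 - κ) * ((l1 ^ 2 + l2 ^ 2) * (q11 * (1 + h2 * (2 * g2 + e2) ^ 2)
          - 2 * q12 * (h2 * (2 * g1 + e1) * (2 * g2 + e2)) + q22 * (1 + h2 * (2 * g1 + e1) ^ 2)))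
      - 2 * δ * q * (8 * t ^ 2 + 8 * κ + h2 * (8 * (1 + t) ^ 4 * ((g1 - k1) ^ 2 + (g2 - k2) ^ 2)
          + 8 * (1 - t) ^ 4 * ((g1 + k1) ^ 2 + (g2 + k2) ^ 2)
          - 4 * (1 - κ) * ((2 * g1 + e1) ^ 2 + (2 * g2 + e2) ^ 2)))
      - 2 * δ * (4 * t * (l1 * q1 + l2 * q2)
          + 4 * h2 * ((1 + t) ^ 4 * ((g1 - k1) * l2 - (g2 - k2) * l1)
              * ((g1 - k1) * q2 - (g2 - k2) * q1)
            - (1 - t) ^ 4 * ((g1 + k1) * l2 - (g2 + k2) * l1)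
              * ((g1 + k1) * q2 - (g2 + k2) * q1)))) : False := by
  revert main
  obtain ⟨ht1, ht2⟩ := abs_le.1 ht
  have hT : t ^ 2 ≤ 1 := by nlinarith only [ht1, ht2]
  have hM0 : 0 ≤ M := by linarith
  have hT0 := sq_nonneg t
  obtain ⟨th1, th2⟩ := theta_part t g1 g2 k1 k2 e1 e2 M E0 h2 yx yy yz ht hM hg hk he hE0 hE1 hh hh1
    hx hy hz hx0 hy0 hz0
  clear hx hy hz
  have hκ0 : 0 ≤ κ := by rw [hκ]; positivity
  have trD := est_trD t g1 g2 k1 k2 e1 e2 M E0 κ ht hM hg he hE0 hE1 hκ0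
  have hM2 : M ≤ M ^ 2 := by nlinarith only [hM]
  have hM3 : M ^ 2 ≤ M ^ 3 := by
    have := mul_le_mul_of_nonneg_left hM (by positivity : 0 ≤ M ^ 2); linarith
  have hM4 : M ^ 3 ≤ M ^ 4 := by
    have := mul_le_mul_of_nonneg_left hM (by positivity : 0 ≤ M ^ 3); linarith
  have hM21 : 1 ≤ M ^ 2 := by linarith
  have hh1' : 1000000 * M ^ 4 * h2 ≤ c2 := hhs.trans (by nlinarith only [hc2, hδ1])
  set K := k1 ^ 2 + k2 ^ 2 with hK
  have hK0 : 0 ≤ K := by positivity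
  clear_value K
  set D := t ^ 2 + K + E0 with hD
  have hD0 : 0 ≤ D := by positivity
  clear_value D
  have hδS : 0 < δ * S := by positivity
  have hδ2S : δ ^ 2 * S ≤ δ * S := by
    have : δ ^ 2 ≤ δ := by nlinarith only [hδ, hδ1]
    gcongr
  have hδSS : δ * S ≤ S := by nlinarith only [hδ1, hS]
  have hDb : D ≤ t ^ 2 + 2 * M * (δ * S) := by
    rw [hD]
    have : M * (δ ^ 2 * S) ≤ M * (δ * S) := by gcongr
    linarith
  have hDb' : D ≤ t ^ 2 + 2 * M * S := by
    have : M * (δ * S) ≤ M * S := by gcongr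
    linarith
  have hκD : κ ≤ 50 * M * (h2 * D) := by
    rw [hκ]
    have : K + E0 ≤ D := by rw [hD]; linarith
    have : M * h2 * (K + E0) ≤ M * h2 * D := by gcongr
    linarith
  have hκ1 : κ ≤ 1 / 8 := by
    have h3 : M * h2 ≤ M ^ 4 * h2 := by
      have : M ≤ M ^ 4 := by linarith
      gcongr
    have : M * h2 * (K + E0) ≤ M * h2 * 2 := by
      have : K + E0 ≤ 2 := by linarith
      gcongr
    rw [hκ]
    linarith
  have T1 : (1 + t) * yx ^ 3 + (1 - t) * yy ^ 3 - 2 * (1 - κ) * yz ^ 3 ≤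
      33000 * M ^ 3 * (h2 * D) := by
    have h0 : κ * yz ^ 3 ≤ (50 * M * (h2 * D)) * (121 * M ^ 2) := by gcongr
    have h1 : M ^ 2 * (h2 * D) ≤ M ^ 3 * (h2 * D) := by gcongr
    have h2' : 0 ≤ M ^ 3 * (h2 * D) := by positivity
    nlinarith only [h0, h1, h2', th1]
  have T2 : 2 * ((1 + t) * (1 - t)) * (μ ^ 2 * K) ≤ 2 * (M * (δ ^ 2 * S)) := by
    have h0 : (1 + t) * (1 - t) ≤ 1 := by nlinarith only [hT0]
    have h1 : 0 ≤ μ ^ 2 * K := by positivity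
    nlinarith only [h0, h1, hμk]
  have T3 : 2 * κ * μ ^ 2 * ((g1 ^ 2 + g2 ^ 2) - K) ≤ 200 * M ^ 3 * (h2 * (δ * S)) := by
    have h0 : κ * μ ^ 2 = 50 * M * h2 * (μ ^ 2 * K + μ ^ 2 * E0) := by rw [hκ]; ring
    have h1 : κ * μ ^ 2 ≤ 50 * M * h2 * (M * (δ * S) + M * (δ * S)) := by
      rw [h0]
      have : M * (δ ^ 2 * S) ≤ M * (δ * S) := by gcongr
      exact mul_le_mul_of_nonneg_left (by linarith) (by positivity)
    have h2' : 0 ≤ κ * μ ^ 2 := by positivity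
    have h3 : (κ * μ ^ 2) * ((g1 ^ 2 + g2 ^ 2) - K)
        ≤ (50 * M * h2 * (M * (δ * S) + M * (δ * S))) * M := by
      calc _ ≤ (κ * μ ^ 2) * M := by gcongr; linarith
        _ ≤ _ := by gcongr
    nlinarith only [h3]
  have T4 : - (2 * (1 - κ) * h2 * μ ^ 2 * ((e1 * g2 - e2 * g1) ^ 2
          - (2 * (g1 * k2 - g2 * k1) + (e1 * k2 - e2 * k1)) ^ 2)) ≤
      20 * M ^ 2 * (h2 * (δ * S)) := by
    have b1 := (dot_bounds g1 g2 k1 k2 M K hM0 hg hK.ge).2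
    have b2 := (dot_bounds e1 e2 k1 k2 1 K zero_le_one
      (he.trans (by nlinarith only [hE0, hE1])) hK.ge).2
    have b3 : (2 * (g1 * k2 - g2 * k1) + (e1 * k2 - e2 * k1)) ^ 2 ≤ 10 * M * K := by
      have : K ≤ M * K := le_mul_of_one_le_left hK0 hM
      nlinarith only [b1, b2, this,
        sq_nonneg (2 * (g1 * k2 - g2 * k1) - (e1 * k2 - e2 * k1))]
    have b4 : 0 ≤ (1 - κ) * h2 * μ ^ 2 * (e1 * g2 - e2 * g1) ^ 2 := by
      have : 0 ≤ 1 - κ := by linarith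
      positivity
    have b5 : (1 - κ) * (h2 * μ ^ 2 * (2 * (g1 * k2 - g2 * k1) + (e1 * k2 - e2 * k1)) ^ 2)
        ≤ 1 * (h2 * μ ^ 2 * (10 * M * K)) := by
      gcongr
      linarith
    have b6 : h2 * (10 * M) * (μ ^ 2 * K) ≤ h2 * (10 * M) * (M * (δ * S)) := by
      have : M * (δ ^ 2 * S) ≤ M * (δ * S) := by gcongr
      exact mul_le_mul_of_nonneg_left (by linarith) (by positivity)
    linarith only [b4, b5, b6]
  have hP : (2 * g1 + e1) ^ 2 + (2 * g2 + e2) ^ 2 ≤ 10 * M := by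
    nlinarith only [sq_nonneg (2 * g1 - e1), sq_nonneg (2 * g2 - e2), hg, he, hM, hE0, hE1]
  have hh7 : 100000 * (M ^ 2 * h2) ≤ c2 := by
    have : M ^ 2 * h2 ≤ M ^ 4 * h2 := by gcongr; linarith
    linarith
  have T5 : c2 / 2 * S ≤ (1 - κ) * ((l1 ^ 2 + l2 ^ 2) * (q11 * (1 + h2 * (2 * g2 + e2) ^ 2)
          - 2 * q12 * (h2 * (2 * g1 + e1) * (2 * g2 + e2))
          + q22 * (1 + h2 * (2 * g1 + e1) ^ 2))) := by
    set R := l1 ^ 2 + l2 ^ 2 with hR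
    clear_value R
    have b1 : |h2 * (2 * g2 + e2) ^ 2 * (R * q11)| ≤ h2 * (10 * M) * (M * S) := by
      rw [abs_mul, abs_of_nonneg (by positivity : 0 ≤ h2 * (2 * g2 + e2) ^ 2)]
      gcongr
      linarith [sq_nonneg (2 * g1 + e1)]
    have b2 : |h2 * (2 * g1 + e1) ^ 2 * (R * q22)| ≤ h2 * (10 * M) * (M * S) := by
      rw [abs_mul, abs_of_nonneg (by positivity : 0 ≤ h2 * (2 * g1 + e1) ^ 2)]
      gcongr
      linarith [sq_nonneg (2 * g2 + e2)]
    have b3 : |h2 * (2 * ((2 * g1 + e1) * (2 * g2 + e2))) * (R * q12)|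
        ≤ h2 * (10 * M) * (M * S) := by
      rw [abs_mul, abs_mul, abs_of_nonneg hh]
      gcongr
      rw [abs_le]
      constructor <;> nlinarith only [hP, sq_nonneg ((2 * g1 + e1) - (2 * g2 + e2)),
        sq_nonneg ((2 * g1 + e1) + (2 * g2 + e2))]
    have b1' := (abs_le.1 b1).1
    have b2' := (abs_le.1 b2).1
    have b3' := (abs_le.1 b3).2
    have b4 : 30 * (M ^ 2 * h2) * S ≤ c2 / 4 * S := by gcongr; linarith
    have b5 : 3 / 4 * (c2 * S) ≤ R * (q11 * (1 + h2 * (2 * g2 + e2) ^ 2)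
          - 2 * q12 * (h2 * (2 * g1 + e1) * (2 * g2 + e2))
          + q22 * (1 + h2 * (2 * g1 + e1) ^ 2)) := by
      linarith only [b1', b2', b3', b4, hlap]
    have b6 : (7 / 8) * (3 / 4 * (c2 * S)) ≤ (1 - κ) * (R * (q11 * (1 + h2 * (2 * g2 + e2) ^ 2)
          - 2 * q12 * (h2 * (2 * g1 + e1) * (2 * g2 + e2))
          + q22 * (1 + h2 * (2 * g1 + e1) ^ 2))) := by
      apply mul_le_mul (by linarith) b5 (by positivity) (by linarith)
    have : 0 < c2 * S := by positivity
    linarith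
  have T5' := mul_le_mul_of_nonneg_left T5 hδ.le
  have T6 : 8 * t ^ 2 - 200 * M * (h2 * D) ≤ 8 * t ^ 2 + 8 * κ
      + h2 * (8 * (1 + t) ^ 4 * ((g1 - k1) ^ 2 + (g2 - k2) ^ 2)
          + 8 * (1 - t) ^ 4 * ((g1 + k1) ^ 2 + (g2 + k2) ^ 2)
          - 4 * (1 - κ) * ((2 * g1 + e1) ^ 2 + (2 * g2 + e2) ^ 2)) := by
    have := mul_le_mul_of_nonneg_left trD hh
    linarith only [this, hκ0]
  have T6' := mul_le_mul_of_nonneg_left T6 (by positivity : 0 ≤ 2 * δ * q)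
  have T6'' : 2 * δ * q * (200 * M * (h2 * D)) ≤ 400 * M ^ 2 * (h2 * D) := by
    have : δ * q ≤ 1 * M := by gcongr
    calc 2 * δ * q * (200 * M * (h2 * D)) = (δ * q) * (400 * M * (h2 * D)) := by ring
      _ ≤ (1 * M) * (400 * M * (h2 * D)) := by gcongr
      _ = _ := by ring
  set Λ2 := (l1 ^ 2 + l2 ^ 2) * (q1 ^ 2 + q2 ^ 2) with hΛ2
  have hΛ0 : 0 ≤ Λ2 := by positivity
  clear_value Λ2
  have hΛS : Λ2 ≤ M * S := by
    have : c2 / 16 * (q * S) ≤ 1 * (M * S) := by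
      gcongr
      linarith
    linarith
  have T7 : -(8 * δ * (t * (l1 * q1 + l2 * q2))) ≤ δ * (8 * q * t ^ 2 + c2 / 8 * S) := by
    have b1 := (dot_bounds l1 l2 q1 q2 _ _ (by positivity) le_rfl le_rfl).1
    rw [← hΛ2] at b1
    have b2 : |t * (l1 * q1 + l2 * q2)| ≤ (2 * q * t ^ 2 + c2 / 32 * S) / 2 := by
      apply abs_le_half_of_sq_le (by positivity) (by positivity)
      rw [mul_pow]
      calc t ^ 2 * (l1 * q1 + l2 * q2) ^ 2 ≤ t ^ 2 * (c2 / 16 * (q * S)) := by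
            gcongr; exact b1.trans hDq
        _ = _ := by ring
    have b3 := (abs_le.1 b2).1
    have : δ * (-(t * (l1 * q1 + l2 * q2))) ≤ δ * ((2 * q * t ^ 2 + c2 / 32 * S) / 2) := by
      gcongr; linarith
    nlinarith only [this, (by positivity : 0 ≤ δ * (q * t ^ 2))]
  have T8 : -(8 * δ * (h2 * ((1 + t) ^ 4 * ((g1 - k1) * l2 - (g2 - k2) * l1)
              * ((g1 - k1) * q2 - (g2 - k2) * q1)
            - (1 - t) ^ 4 * ((g1 + k1) * l2 - (g2 + k2) * l1)
              * ((g1 + k1) * q2 - (g2 + k2) * q1)))) ≤ 800 * M * (h2 * (D + M * S)) := by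
    have gl := (dot_bounds g1 g2 l1 l2 M _ hM0 hg le_rfl).2
    have gd := (dot_bounds g1 g2 q1 q2 M _ hM0 hg le_rfl).2
    have kl := (dot_bounds k1 k2 l1 l2 K _ hK0 hK.ge le_rfl).2
    have kd := (dot_bounds k1 k2 q1 q2 K _ hK0 hK.ge le_rfl).2
    have hsq : Real.sqrt Λ2 ^ 2 = Λ2 := Real.sq_sqrt hΛ0
    have b := est_cross t (g1 * l2 - g2 * l1) (g1 * q2 - g2 * q1) (k1 * l2 - k2 * l1)
      (k1 * q2 - k2 * q1) M (Real.sqrt Λ2) K ht hM (Real.sqrt_nonneg _) hK0 hk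
      (by
        apply abs_le_of_sq_le_sq _ (by positivity)
        rw [mul_pow, mul_pow, hsq, hΛ2]
        calc _ ≤ (M * (l1 ^ 2 + l2 ^ 2)) * (M * (q1 ^ 2 + q2 ^ 2)) := by gcongr
          _ = _ := by ring)
      (by
        apply abs_le_of_sq_le_sq _ (by positivity)
        rw [mul_pow, mul_pow, hsq, hΛ2]
        calc _ ≤ (K * (l1 ^ 2 + l2 ^ 2)) * (K * (q1 ^ 2 + q2 ^ 2)) := by gcongr
          _ = _ := by ring)
      (by
        rw [mul_pow, hsq, hΛ2]
        calc _ ≤ (M * (l1 ^ 2 + l2 ^ 2)) * (K * (q1 ^ 2 + q2 ^ 2)) := by gcongr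
          _ = _ := by ring)
      (by
        rw [mul_pow, hsq, hΛ2]
        calc _ ≤ (K * (l1 ^ 2 + l2 ^ 2)) * (M * (q1 ^ 2 + q2 ^ 2)) := by gcongr
          _ = _ := by ring)
    rw [hsq] at b
    have r1 : ∀ w1 w2 : ℝ, (g1 - k1) * w2 - (g2 - k2) * w1
      = (g1 * w2 - g2 * w1) - (k1 * w2 - k2 * w1) := fun _ _ => by ring
    have r2 : ∀ w1 w2 : ℝ, (g1 + k1) * w2 - (g2 + k2) * w1
      = (g1 * w2 - g2 * w1) + (k1 * w2 - k2 * w1) := fun _ _ => by ring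
    simp only [r1, r2]
    have b' := (abs_le.1 b).1
    have b'' : 100 * M * (t ^ 2 + K + Λ2) ≤ 100 * M * (D + M * S) := by
      gcongr
      rw [hD]; linarith
    set W := (1 + t) ^ 4 * ((g1 * l2 - g2 * l1) - (k1 * l2 - k2 * l1))
              * ((g1 * q2 - g2 * q1) - (k1 * q2 - k2 * q1))
            - (1 - t) ^ 4 * ((g1 * l2 - g2 * l1) + (k1 * l2 - k2 * l1))
              * ((g1 * q2 - g2 * q1) + (k1 * q2 - k2 * q1)) with hW
    clear_value W
    have b3 : -W ≤ 100 * M * (D + M * S) := by linarith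
    have b4 : δ * (h2 * (-W)) ≤ 1 * (h2 * (100 * M * (D + M * S))) := by
      calc δ * (h2 * (-W)) ≤ δ * (h2 * (100 * M * (D + M * S))) := by gcongr
        _ ≤ _ := by gcongr
    linarith only [b4]
  have hM3' : M ≤ M ^ 3 := by linarith
  have s1 : M ^ 2 * (h2 * D) ≤ M ^ 3 * (h2 * D) := by gcongr
  have s2 : M * (h2 * D) ≤ M ^ 3 * (h2 * D) := by gcongr
  have s3 : M ^ 3 * (h2 * D) ≤ M ^ 3 * (h2 * (t ^ 2 + 2 * M * S)) := by gcongr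
  have s4 : M ^ 3 * (h2 * (δ * S)) ≤ M ^ 4 * h2 * S := by
    calc M ^ 3 * (h2 * (δ * S)) ≤ M ^ 4 * (h2 * S) := by gcongr
      _ = _ := by ring
  have s5 : M ^ 2 * (h2 * (δ * S)) ≤ M ^ 4 * h2 * S := by
    calc M ^ 2 * (h2 * (δ * S)) ≤ M ^ 4 * (h2 * S) := by gcongr; linarith
      _ = _ := by ring
  have s6 : M ^ 2 * (h2 * S) ≤ M ^ 4 * h2 * S := by
    calc M ^ 2 * (h2 * S) ≤ M ^ 4 * (h2 * S) := by gcongr; linarith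
      _ = _ := by ring
  have s7 : M ^ 3 * (h2 * t ^ 2) ≤ M ^ 4 * h2 * t ^ 2 := by
    calc M ^ 3 * (h2 * t ^ 2) ≤ M ^ 4 * (h2 * t ^ 2) := by gcongr
      _ = _ := by ring
  have s8 : 1000000 * (M ^ 4 * h2 * S) ≤ c2 * δ * S := by
    calc 1000000 * (M ^ 4 * h2 * S) = (1000000 * M ^ 4 * h2) * S := by ring
      _ ≤ _ := by gcongr
  have s9 : 1000000 * (M ^ 4 * h2 * t ^ 2) ≤ δ * t ^ 2 := by
    calc 1000000 * (M ^ 4 * h2 * t ^ 2) = (1000000 * M ^ 4 * h2) * t ^ 2 := by ring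
      _ ≤ (c2 * δ) * t ^ 2 := by gcongr
      _ ≤ (1 * δ) * t ^ 2 := by gcongr
      _ = _ := by ring
  have s10 : 100000 * (M * (δ ^ 2 * S)) ≤ c2 * δ * S := by
    calc 100000 * (M * (δ ^ 2 * S)) = (100000 * M * δ) * (δ * S) := by ring
      _ ≤ c2 * (δ * S) := by gcongr
      _ = _ := by ring
  have s11 : δ * t ^ 2 ≤ δ * q * t ^ 2 := by
    have : δ * t ^ 2 * 1 ≤ δ * t ^ 2 * q := by gcongr
    linarith
  have pos : 0 < c2 * δ * S := by positivity
  have pos2 : 0 ≤ δ * t ^ 2 := by positivity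
  intro main
  linarith only [main, T1, T2, T3, T4, T5', T6', T6'', T7, T8, s1, s2, s3, s4, s5, s6, s7, s8, s9,
    s10, s11, pos, pos2]

open Filter Topology Asymptotics

/-! ### Second order expansions along lines -/

/-- `g τ = a + b τ + c τ² + o(τ²)` as `τ → 0`. -/
def T2 (g : ℝ → ℝ) (a b c : ℝ) : Prop :=
  (fun τ => g τ - (a + b * τ + c * τ ^ 2)) =o[𝓝 0] (fun τ : ℝ => τ ^ 2)

lemma T2.value {g : ℝ → ℝ} {a b c : ℝ} (h : T2 g a b c) : g 0 = a := by
  have := (h.def zero_lt_one).self_of_nhds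
  simp at this
  linarith

lemma T2.of_eq {g : ℝ → ℝ} {a b c a' b' c' : ℝ} (h : T2 g a b c) (ha : a = a') (hb : b = b')
    (hc : c = c') : T2 g a' b' c' := by subst ha hb hc; exact h

lemma T2.congr {g k : ℝ → ℝ} {a b c : ℝ} (h : T2 g a b c) (hk : ∀ τ, k τ = g τ) : T2 k a b c := by
  have : k = g := funext hk
  rwa [this]

lemma T2.poly (a b c : ℝ) : T2 (fun τ => a + b * τ + c * τ ^ 2) a b c := by
  simp [T2]

lemma T2.add {g k : ℝ → ℝ} {a b c a' b' c' : ℝ} (h : T2 g a b c) (h' : T2 k a' b' c') :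
    T2 (fun τ => g τ + k τ) (a + a') (b + b') (c + c') := by
  refine (IsLittleO.add h h').congr_left fun τ => ?_
  ring

lemma T2.const_mul {g : ℝ → ℝ} {a b c : ℝ} (d : ℝ) (h : T2 g a b c) :
    T2 (fun τ => d * g τ) (d * a) (d * b) (d * c) := by
  refine (IsLittleO.const_mul_left h d).congr_left fun τ => ?_
  ring

lemma T2.sub {g k : ℝ → ℝ} {a b c a' b' c' : ℝ} (h : T2 g a b c) (h' : T2 k a' b' c') :
    T2 (fun τ => g τ - k τ) (a - a') (b - b') (c - c') := by
  refine (IsLittleO.sub h h').congr_left fun τ => ?_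
  ring

lemma cube_isLittleO {p : ℝ → ℝ} (hp : ContinuousAt p 0) :
    (fun τ : ℝ => τ ^ 3 * p τ) =o[𝓝 0] (fun τ : ℝ => τ ^ 2) := by
  have h1 : (fun τ : ℝ => τ * p τ) =o[𝓝 0] (fun _ : ℝ => (1 : ℝ)) := by
    rw [isLittleO_one_iff]
    have : ContinuousAt (fun τ : ℝ => τ * p τ) 0 := continuousAt_id.mul hp
    simpa [ContinuousAt] using this
  have := (isBigO_refl (fun τ : ℝ => τ ^ 2) (𝓝 0)).mul_isLittleO h1
  refine this.congr (fun τ => by ring) (fun τ => by ring)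

lemma T2.tendsto {g : ℝ → ℝ} {a b c : ℝ} (h : T2 g a b c) : Tendsto g (𝓝 0) (𝓝 a) := by
  have h1 : Tendsto (fun τ => g τ - (a + b * τ + c * τ ^ 2)) (𝓝 0) (𝓝 0) := by
    refine h.trans_tendsto ?_
    have : ContinuousAt (fun τ : ℝ => τ ^ 2) 0 := by fun_prop
    simpa [ContinuousAt] using this
  have h2 : Tendsto (fun τ => a + b * τ + c * τ ^ 2) (𝓝 0) (𝓝 a) := by
    have : ContinuousAt (fun τ : ℝ => a + b * τ + c * τ ^ 2) 0 := by fun_prop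
    simpa [ContinuousAt] using this
  simpa using h1.add h2

lemma T2.mul {g k : ℝ → ℝ} {a b c a' b' c' : ℝ} (h : T2 g a b c) (h' : T2 k a' b' c') :
    T2 (fun τ => g τ * k τ) (a * a') (a * b' + b * a') (a * c' + b * b' + c * a') := by
  have h1 : (fun τ => (g τ - (a + b * τ + c * τ ^ 2)) * k τ) =o[𝓝 0] (fun τ : ℝ => τ ^ 2) := by
    have := h.mul_isBigO (h'.tendsto.isBigO_one ℝ)
    simpa using this
  have h2 : (fun τ => (a + b * τ + c * τ ^ 2) * (k τ - (a' + b' * τ + c' * τ ^ 2)))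
      =o[𝓝 0] (fun τ : ℝ => τ ^ 2) := by
    have := ((T2.poly a b c).tendsto.isBigO_one ℝ).mul_isLittleO h'
    simpa using this
  have h3 := cube_isLittleO (p := fun τ => (b * c' + c * b') + c * c' * τ) (by fun_prop)
  refine ((h1.add h2).add h3).congr_left fun τ => ?_
  ring

lemma T2.sqrt {g : ℝ → ℝ} {a b c s : ℝ} (h : T2 g a b c) (hs : 0 < s) (ha : a = s ^ 2) :
    T2 (fun τ => √(g τ)) s (b / (2 * s)) (c / (2 * s) - b ^ 2 / (8 * s ^ 3)) := by
  set β := b / (2 * s) with hβ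
  set γ := c / (2 * s) - b ^ 2 / (8 * s ^ 3) with hγ
  have hb : b = 2 * s * β := by rw [hβ]; field_simp
  have hc : c = 2 * s * γ + β ^ 2 := by rw [hγ, hβ]; field_simp; ring
  clear_value β γ
  have h3 := cube_isLittleO (p := fun τ => 2 * β * γ + γ ^ 2 * τ) (by fun_prop)
  have h4 : (fun τ => g τ - (s + β * τ + γ * τ ^ 2) ^ 2) =o[𝓝 0] (fun τ : ℝ => τ ^ 2) := by
    refine (IsLittleO.sub h h3).congr_left fun τ => ?_
    rw [ha, hb, hc]; ring
  have hg : ∀ᶠ τ in 𝓝 0, 0 < g τ := h.tendsto.eventually_const_lt (by rw [ha]; positivity)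
  have hp : ∀ᶠ τ in 𝓝 0, s / 2 < s + β * τ + γ * τ ^ 2 :=
    (T2.poly s β γ).tendsto.eventually_const_lt (by linarith)
  refine IsBigO.trans_isLittleO ?_ h4
  refine IsBigO.of_bound (2 / s) ?_
  filter_upwards [hg, hp] with τ h1 h2
  set p := s + β * τ + γ * τ ^ 2
  have hsq := Real.sq_sqrt h1.le
  have h0 := Real.sqrt_nonneg (g τ)
  have : g τ - p ^ 2 = (√(g τ) - p) * (√(g τ) + p) := by linear_combination -hsq
  rw [Real.norm_eq_abs, Real.norm_eq_abs, this, abs_mul, abs_of_pos (by linarith : 0 < √(g τ) + p)]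
  have : 1 ≤ 2 / s * (√(g τ) + p) := by
    rw [div_mul_eq_mul_div, le_div_iff₀ hs]; linarith
  nlinarith [abs_nonneg (√(g τ) - p)]

lemma T2.local_min {g : ℝ → ℝ} {a b c : ℝ} (h : T2 g a b c) (hm : ∀ᶠ τ in 𝓝 0, g 0 ≤ g τ) :
    b = 0 ∧ 0 ≤ c := by
  have hd : ∀ ε > 0, ∃ r > 0, ∀ τ, |τ| < r → 0 ≤ b * τ + (c + ε) * τ ^ 2 := by
    intro ε hε
    have := hm.and (h.def hε)
    rw [Metric.eventually_nhds_iff] at this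
    obtain ⟨r, hr, H⟩ := this
    refine ⟨r, hr, fun τ hτ => ?_⟩
    obtain ⟨h1, h2⟩ := H (y := τ) (by simpa using hτ)
    rw [h.value] at h1
    rw [Real.norm_eq_abs, Real.norm_eq_abs, abs_of_nonneg (sq_nonneg τ)] at h2
    have := (abs_le.1 h2).2
    linarith
  have hb : b = 0 := by
    obtain ⟨r, hr, H⟩ := hd 1 one_pos
    by_contra hb
    have hb' : 0 < |b| := abs_pos.2 hb
    set s := min (r / 2) (|b| / (2 * (|c| + 1))) with hs
    have hs0 : 0 < s := by positivity
    have hsr : s < r := (min_le_left _ _).trans_lt (by linarith)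
    have hs2 : s * (2 * (|c| + 1)) ≤ |b| := by
      rw [← le_div_iff₀ (by positivity)]; exact min_le_right _ _
    have h1 := H s (by rwa [abs_of_pos hs0])
    have h2 := H (-s) (by rwa [abs_neg, abs_of_pos hs0])
    have hc := le_abs_self c
    have h3 : |b| * s ≤ (|c| + 1) * s ^ 2 := by
      rcases abs_cases b with ⟨e, _⟩ | ⟨e, _⟩ <;> rw [e] <;> nlinarith [sq_nonneg s]
    nlinarith [mul_pos hb' hs0, mul_le_mul_of_nonneg_right hs2 hs0.le]
  refine ⟨hb, ?_⟩
  by_contra hc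
  push Not at hc
  obtain ⟨r, hr, H⟩ := hd (-c / 2) (by linarith)
  have := H (r / 2) (by rw [abs_of_pos] <;> linarith)
  rw [hb] at this
  nlinarith [mul_pos hr hr]

/-- Peano form of Taylor's formula: only differentiability of `g'` at `0` is needed. -/
lemma T2.of_deriv {g g' : ℝ → ℝ} {c : ℝ} (h1 : ∀ᶠ τ in 𝓝 0, HasDerivAt g (g' τ) τ)
    (h2 : HasDerivAt g' c 0) : T2 g (g 0) (g' 0) (c / 2) := by
  rw [T2, isLittleO_iff]
  intro ε hε
  have h3 := (hasDerivAt_iff_isLittleO.1 h2).def hε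
  have := h1.and h3
  rw [Metric.eventually_nhds_iff_ball] at this
  obtain ⟨r, hr, H⟩ := this
  filter_upwards [Metric.ball_mem_nhds 0 hr] with τ hτ
  have hτ' : |τ| < r := by simpa using hτ
  have key : ∀ t ∈ Metric.closedBall (0 : ℝ) |τ|, HasDerivWithinAt
      (fun t => g t - (g 0 + g' 0 * t + c / 2 * t ^ 2)) (g' t - (g' 0 + c * t))
      (Metric.closedBall (0 : ℝ) |τ|) t := by
    intro t ht
    have ht' : t ∈ Metric.ball (0 : ℝ) r := by
      simp at ht ⊢; linarith
    refine HasDerivAt.hasDerivWithinAt ?_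
    have hp : HasDerivAt (fun t => g 0 + g' 0 * t + c / 2 * t ^ 2) (g' 0 + c * t) t := by
      have := (((hasDerivAt_id t).const_mul (g' 0)).const_add (g 0)).add
        (((hasDerivAt_id t).pow 2).const_mul (c / 2))
      refine this.congr_deriv ?_
      simp; ring
    exact (H t ht').1.sub hp
  have bd : ∀ t ∈ Metric.closedBall (0 : ℝ) |τ|, ‖g' t - (g' 0 + c * t)‖ ≤ ε * |τ| := by
    intro t ht
    have ht1 : |t| ≤ |τ| := by simpa using ht
    have ht' : t ∈ Metric.ball (0 : ℝ) r := by
      simp at ht ⊢; linarith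
    have := (H t ht').2
    simp only [sub_zero, smul_eq_mul, Real.norm_eq_abs] at this
    rw [Real.norm_eq_abs]
    calc _ = |g' t - g' 0 - t * c| := by ring_nf
      _ ≤ _ := this
      _ ≤ _ := by gcongr
  have := (convex_closedBall (0 : ℝ) |τ|).norm_image_sub_le_of_norm_hasDerivWithin_le key bd
    (Metric.mem_closedBall_self (abs_nonneg _)) (show τ ∈ Metric.closedBall (0 : ℝ) |τ| by simp)
  simp only [sub_zero, Real.norm_eq_abs] at this ⊢
  rw [abs_of_nonneg (sq_nonneg τ)]
  simp at this
  have hsq : |τ| * |τ| = τ ^ 2 := by rw [abs_mul_abs_self, sq]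
  rw [mul_assoc, hsq] at this
  exact this

/-- The second order jet of `v` at `z`, in coordinates: `v` expands to second order along every
line through `z`, with gradient `(v1, v2)` and Hessian `(v11, v12; v12, v22)`. -/
def Jet (v : E2 → ℝ) (z : E2) (v1 v2 v11 v12 v22 : ℝ) : Prop :=
  ∀ ζ : E2, T2 (fun τ => v (z + τ • ζ)) (v z) (v1 * ζ 0 + v2 * ζ 1)
    ((v11 * ζ 0 ^ 2 + 2 * v12 * ζ 0 * ζ 1 + v22 * ζ 1 ^ 2) / 2)

lemma e2_decomp (ζ : E2) : ζ = ζ 0 • e2 0 + ζ 1 • e2 1 := by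
  ext i; fin_cases i <;> simp [e2]

lemma hess2_eq {u : E2 → ℝ} {x : E2} (hu : ContDiffAt ℝ 2 u x) (a b : E2) :
    hess2 u x a b = fderiv ℝ (fderiv ℝ u) x a b := by
  have h1 : DifferentiableAt ℝ (fderiv ℝ u) x :=
    (hu.fderiv_right (m := 1) (by norm_num)).differentiableAt (by norm_num)
  unfold hess2
  rw [fderiv_clm_apply h1 (by fun_prop)]
  simp

lemma ContDiffAt.t2_line {u : E2 → ℝ} {x : E2} (hu : ContDiffAt ℝ 2 u x) (ζ : E2) :
    T2 (fun τ => u (x + τ • ζ)) (u x) (fderiv ℝ u x ζ) (hess2 u x ζ ζ / 2) := by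
  have hl : ∀ τ : ℝ, HasDerivAt (fun τ : ℝ => x + τ • ζ) ζ τ := fun τ => by
    simpa using ((hasDerivAt_id τ).smul_const ζ).const_add x
  have h0 : Tendsto (fun τ : ℝ => x + τ • ζ) (𝓝 0) (𝓝 x) := by
    have : ContinuousAt (fun τ : ℝ => x + τ • ζ) 0 := by fun_prop
    simpa [ContinuousAt] using this
  have hd : ∀ᶠ y in 𝓝 x, DifferentiableAt ℝ u y :=
    (hu.eventually (by norm_num)).mono fun y hy => hy.differentiableAt (by norm_num)
  have h1 : ∀ᶠ τ in 𝓝 (0:ℝ), HasDerivAt (fun τ => u (x + τ • ζ)) (fderiv ℝ u (x + τ • ζ) ζ) τ := by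
    filter_upwards [h0.eventually hd] with τ hτ
    exact hτ.hasFDerivAt.comp_hasDerivAt τ (hl τ)
  have hf : DifferentiableAt ℝ (fderiv ℝ u) x :=
    (hu.fderiv_right (m := 1) (by norm_num)).differentiableAt (by norm_num)
  have h2 : HasDerivAt (fun τ : ℝ => fderiv ℝ u (x + τ • ζ) ζ) (hess2 u x ζ ζ) 0 := by
    rw [hess2_eq hu]
    have e : x + (0:ℝ) • ζ = x := by simp
    have hf' : HasFDerivAt (fderiv ℝ u) (fderiv ℝ (fderiv ℝ u) x) (x + (0:ℝ) • ζ) := by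
      rw [e]; exact hf.hasFDerivAt
    have h3 := hf'.comp_hasDerivAt (0:ℝ) (hl 0)
    have h4 := (ContinuousLinearMap.apply ℝ ℝ ζ).hasFDerivAt.comp_hasDerivAt (0:ℝ) h3
    exact h4
  have := T2.of_deriv h1 h2
  simpa using this

lemma ContDiffAt.jet {u : E2 → ℝ} {x : E2} (hu : ContDiffAt ℝ 2 u x) :
    Jet u x (fderiv ℝ u x (e2 0)) (fderiv ℝ u x (e2 1)) (hess2 u x (e2 0) (e2 0))
      (hess2 u x (e2 0) (e2 1)) (hess2 u x (e2 1) (e2 1)) := by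
  intro ζ
  have hs : fderiv ℝ (fderiv ℝ u) x (e2 1) (e2 0) = fderiv ℝ (fderiv ℝ u) x (e2 0) (e2 1) :=
    (hu.isSymmSndFDerivAt (by simp)) _ _
  refine (hu.t2_line ζ).of_eq rfl ?_ ?_
  · conv_lhs => rw [e2_decomp ζ]
    simp only [map_add, map_smul, smul_eq_mul]; ring
  · simp only [hess2_eq hu]
    conv_lhs => rw [e2_decomp ζ]
    simp only [map_add, map_smul, smul_eq_mul, add_apply,
      smul_apply, hs]
    ring

/-! ### The mean curvature operator in coordinates -/

lemma e2_inner (i : Fin 2) (g : E2) : ⟪g, e2 i⟫ = g i := by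
  simp [e2, EuclideanSpace.inner_single_right]

lemma norm_sq2 (x : E2) : ‖x‖ ^ 2 = x 0 ^ 2 + x 1 ^ 2 := by
  rw [EuclideanSpace.real_norm_sq_eq]; simp [Fin.sum_univ_two]

lemma inner2 (x y : E2) : ⟪x, y⟫ = x 0 * y 0 + x 1 * y 1 := by
  simp [PiLp.inner_apply, Fin.sum_univ_two]; ring

lemma gradient_coord {u : E2 → ℝ} {y : E2} (i : Fin 2) :
    gradient u y i = fderiv ℝ u y (e2 i) := by
  rw [← e2_inner i, gradient, InnerProductSpace.toDual_symm_apply]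

lemma fderiv_grad {u : E2 → ℝ} {y : E2} (w : E2) : fderiv ℝ u y w = ⟪gradient u y, w⟫ := by
  rw [gradient, InnerProductSpace.toDual_symm_apply]

/-- Nondivergence form of the mean curvature operator. -/
lemma mc_expand {u : E2 → ℝ} {x : E2} (hu : ContDiffAt ℝ 2 u x) :
    hess2 u x (e2 0) (e2 0) * (1 + fderiv ℝ u x (e2 1) ^ 2)
      - 2 * fderiv ℝ u x (e2 0) * fderiv ℝ u x (e2 1) * hess2 u x (e2 0) (e2 1)
      + hess2 u x (e2 1) (e2 1) * (1 + fderiv ℝ u x (e2 0) ^ 2)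
      = mcDiv u x * √(1 + fderiv ℝ u x (e2 0) ^ 2 + fderiv ℝ u x (e2 1) ^ 2) ^ 3 := by
  have hf : DifferentiableAt ℝ (fderiv ℝ u) x :=
    (hu.fderiv_right (m := 1) (by norm_num)).differentiableAt (by norm_num)
  have hs : hess2 u x (e2 1) (e2 0) = hess2 u x (e2 0) (e2 1) := by
    rw [hess2_eq hu, hess2_eq hu]
    exact (hu.isSymmSndFDerivAt (by simp)) _ _
  have hN : ∀ y, ‖gradient u y‖ ^ 2 = fderiv ℝ u y (e2 0) ^ 2 + fderiv ℝ u y (e2 1) ^ 2 := by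
    intro y; rw [norm_sq2, gradient_coord, gradient_coord]
  have hd : ∀ i, DifferentiableAt ℝ (fun y => fderiv ℝ u y (e2 i)) x := fun i =>
    hf.clm_apply (differentiableAt_const _)
  have hgr : DifferentiableAt ℝ (gradient u) x := by
    have := (InnerProductSpace.toDual ℝ E2).symm.differentiable.differentiableAt.comp x hf
    exact this
  set N : E2 → ℝ := fun y => 1 + fderiv ℝ u y (e2 0) ^ 2 + fderiv ℝ u y (e2 1) ^ 2 with hNdef
  have hNpos : ∀ y, 0 < N y := fun y => by rw [hNdef]; positivity
  have hNd : DifferentiableAt ℝ N x := by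
    have h0 := hd 0
    have h1 := hd 1
    simp only [hNdef]; fun_prop
  have hsd : DifferentiableAt ℝ (fun y => √(N y)) x := hNd.sqrt (hNpos x).ne'
  have hFeq : (fun y => (√(1 + ‖gradient u y‖ ^ 2))⁻¹ • gradient u y)
      = fun y => (√(N y))⁻¹ • gradient u y := by
    funext y; rw [hN, ← add_assoc]
  have hsx : 0 < √(N x) := Real.sqrt_pos.2 (hNpos x)
  have hid : DifferentiableAt ℝ (fun y => (√(N y))⁻¹) x := hsd.inv hsx.ne'
  have hF : DifferentiableAt ℝ (fun y => (√(N y))⁻¹ • gradient u y) x := hid.smul hgr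
  have hN' : ∀ w, fderiv ℝ N x w = 2 * fderiv ℝ u x (e2 0) * hess2 u x w (e2 0)
      + 2 * fderiv ℝ u x (e2 1) * hess2 u x w (e2 1) := by
    intro w
    have h0 := (hd 0).hasFDerivAt.pow 2
    have h1 := (hd 1).hasFDerivAt.pow 2
    have := ((h0.const_add 1).add h1).fderiv
    have e : N = ((fun y => 1 + fderiv ℝ u y (e2 0) ^ 2) + fun y => fderiv ℝ u y (e2 1) ^ 2) := by
      funext y; rfl
    rw [e]
    refine (congrArg (fun (L : E2 →L[ℝ] ℝ) => L w) this).trans ?_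
    simp [hess2]
  have hinv : ∀ w, fderiv ℝ (fun y => (√(N y))⁻¹) x w = - (fderiv ℝ N x w) / (2 * √(N x) ^ 3) := by
    intro w
    have h1 := (hNd.hasFDerivAt.sqrt (hNpos x).ne')
    have h2 := (hasDerivAt_inv hsx.ne').comp_hasFDerivAt x h1
    have h3 := h2.fderiv
    refine (congrArg (fun (L : E2 →L[ℝ] ℝ) => L w) h3).trans ?_
    simp
    field_simp
  have comp : ∀ i, fderiv ℝ (fun y => (√(N y))⁻¹ • gradient u y) x (e2 i) i
      = (√(N x))⁻¹ * hess2 u x (e2 i) (e2 i)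
        - fderiv ℝ u x (e2 i) * (fderiv ℝ N x (e2 i)) / (2 * √(N x) ^ 3) := by
    intro i
    have h1 := (EuclideanSpace.proj (𝕜 := ℝ) i).hasFDerivAt.comp x hF.hasFDerivAt
    have h2 : ((EuclideanSpace.proj (𝕜 := ℝ) i) ∘ fun y => (√(N y))⁻¹ • gradient u y)
        = fun y => (√(N y))⁻¹ * fderiv ℝ u y (e2 i) := by
      funext y; simp [gradient_coord]
    rw [h2] at h1
    have h3 := hid.hasFDerivAt.mul (hd i).hasFDerivAt
    have h4 := h1.unique h3
    have h5 := congrArg (fun (L : E2 →L[ℝ] ℝ) => L (e2 i)) h4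
    have h6 : fderiv ℝ (fun y => (√(N y))⁻¹ • gradient u y) x (e2 i) i
      = (√(N x))⁻¹ * hess2 u x (e2 i) (e2 i)
        + fderiv ℝ u x (e2 i) * fderiv ℝ (fun y => (√(N y))⁻¹) x (e2 i) := h5
    rw [h6, hinv]; ring
  unfold mcDiv
  rw [hFeq]
  simp only [comp, Fin.sum_univ_two, hN', hs]
  have hsq : √(N x) ^ 2 = 1 + fderiv ℝ u x (e2 0) ^ 2 + fderiv ℝ u x (e2 1) ^ 2 :=
    Real.sq_sqrt (hNpos x).le
  change _ = _ * √(N x) ^ 3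
  generalize √(N x) = s at *
  generalize hess2 u x (e2 0) (e2 0) = a at *
  generalize hess2 u x (e2 0) (e2 1) = b at *
  generalize hess2 u x (e2 1) (e2 1) = c at *
  field_simp
  linear_combination (-a - c) * hsq

/-! ### Rescaled solutions and uniform domain data -/

/-- `v` solves the equation obtained from (*) with `H = -h` through the substitution `u = h v`, in
nondivergence form multiplied by `(1 + h²|Dv|²)^{3/2}`, and vanishes on the boundary. -/
def IsSol (U : Set E2) (h : ℝ) (v : E2 → ℝ) : Prop :=
  ContinuousOn v (closure U) ∧ (∀ x ∈ frontier U, v x = 0) ∧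
    ∀ z ∈ U, ∃ v1 v2 v11 v12 v22, Jet v z v1 v2 v11 v12 v22 ∧
      v11 * (1 + h ^ 2 * v2 ^ 2) - 2 * v12 * (h ^ 2 * v1 * v2) + v22 * (1 + h ^ 2 * v1 ^ 2)
        = -2 * √(1 + h ^ 2 * (v1 ^ 2 + v2 ^ 2)) ^ 3

/-- Quantitative data of a convex domain `U` with defining function `f` that enter the estimates:
all constants below depend only on `R`, `L`, `c`, `t0`. -/
structure Good (f : E2 → ℝ) (R L c t0 : ℝ) (U : Set E2) : Prop where
  isOpen : IsOpen U
  conv : Convex ℝ U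
  bdd : ∀ x ∈ closure U, ‖x‖ ≤ R
  neg : ∀ x ∈ U, f x < 0
  zero : ∀ x ∈ frontier U, f x = 0
  jets : ∀ x ∈ U, ∃ f1 f2 f11 f12 f22, Jet f x f1 f2 f11 f12 f22 ∧ |f1| ≤ L ∧ |f2| ≤ L ∧
    |f11| ≤ L ∧ |f12| ≤ L ∧ |f22| ≤ L ∧ c ≤ -f x + (f1 ^ 2 + f2 ^ 2)
  low : ∀ x ∈ closure U, -f x ≤ L
  lip : ∀ x ∈ closure U, ∀ y ∈ closure U, |f x - f y| ≤ L * ‖x - y‖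
  mid : ∀ x ∈ closure U, ∀ y ∈ closure U, c * ‖x - y‖ ^ 2 ≤ -f ((1 / 2 : ℝ) • (x + y))
  inward : ∀ y ∈ closure U, ∀ t, 0 ≤ t → t ≤ t0 →
    ∃ y' ∈ closure U, ‖y' - y‖ ≤ L * t ∧ c * t ≤ -f y'

lemma Jet.add {u v : E2 → ℝ} {z : E2} {u1 u2 u11 u12 u22 v1 v2 v11 v12 v22 : ℝ}
    (hu : Jet u z u1 u2 u11 u12 u22) (hv : Jet v z v1 v2 v11 v12 v22) :
    Jet (fun x => u x + v x) z (u1 + v1) (u2 + v2) (u11 + v11) (u12 + v12) (u22 + v22) :=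
  fun ζ => ((hu ζ).add (hv ζ)).of_eq rfl (by ring) (by ring)

lemma Jet.sub {u v : E2 → ℝ} {z : E2} {u1 u2 u11 u12 u22 v1 v2 v11 v12 v22 : ℝ}
    (hu : Jet u z u1 u2 u11 u12 u22) (hv : Jet v z v1 v2 v11 v12 v22) :
    Jet (fun x => u x - v x) z (u1 - v1) (u2 - v2) (u11 - v11) (u12 - v12) (u22 - v22) :=
  fun ζ => ((hu ζ).sub (hv ζ)).of_eq rfl (by ring) (by ring)

lemma Jet.const_mul {u : E2 → ℝ} {z : E2} {u1 u2 u11 u12 u22 : ℝ} (d : ℝ)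
    (hu : Jet u z u1 u2 u11 u12 u22) :
    Jet (fun x => d * u x) z (d * u1) (d * u2) (d * u11) (d * u12) (d * u22) :=
  fun ζ => ((hu ζ).const_mul d).of_eq rfl (by ring) (by ring)

lemma Jet.dilate {u : E2 → ℝ} {p : E2} {u1 u2 u11 u12 u22 lam : ℝ} (hl : 0 < lam)
    (hu : Jet u (lam • p) u1 u2 u11 u12 u22) :
    Jet (fun x => lam⁻¹ * u (lam • x)) p u1 u2 (lam * u11) (lam * u12) (lam * u22) := by
  intro ζ
  refine (((hu (lam • ζ)).const_mul lam⁻¹).congr ?_).of_eq rfl ?_ ?_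
  · intro τ
    beta_reduce
    rw [smul_add, smul_comm]
  · simp; field_simp
  · simp; field_simp

lemma Jet.translate {u : E2 → ℝ} {p w : E2} {u1 u2 u11 u12 u22 : ℝ}
    (hu : Jet u (p + w) u1 u2 u11 u12 u22) : Jet (fun x => u (x + w)) p u1 u2 u11 u12 u22 := by
  intro ζ
  refine (hu ζ).congr ?_
  intro τ; rw [add_right_comm]

lemma tendsto_line (z ζ : E2) : Tendsto (fun τ : ℝ => z + τ • ζ) (𝓝 0) (𝓝 z) := by
  have : ContinuousAt (fun τ : ℝ => z + τ • ζ) 0 := by fun_prop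
  simpa [ContinuousAt] using this

lemma Jet.local_min {u : E2 → ℝ} {z : E2} {u1 u2 u11 u12 u22 : ℝ}
    (hu : Jet u z u1 u2 u11 u12 u22) (hm : ∀ᶠ x in 𝓝 z, u z ≤ u x) :
    u1 = 0 ∧ u2 = 0 ∧ ∀ a b, 0 ≤ u11 * a ^ 2 + 2 * u12 * a * b + u22 * b ^ 2 := by
  have key : ∀ a b : ℝ, u1 * a + u2 * b = 0 ∧ 0 ≤ u11 * a ^ 2 + 2 * u12 * a * b + u22 * b ^ 2 := by
    intro a b
    have h1 := (hu !₂[a, b]).local_min ?_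
    · simp at h1
      exact ⟨h1.1, by linarith [h1.2]⟩
    · filter_upwards [(tendsto_line z !₂[a, b]).eventually hm] with τ hτ
      simpa using hτ
  refine ⟨?_, ?_, fun a b => (key a b).2⟩
  · simpa using (key 1 0).1
  · simpa using (key 0 1).1

lemma T2.abs_le_of_lip {g : ℝ → ℝ} {a b c K : ℝ} (h : T2 g a b c)
    (hK : ∀ᶠ τ in 𝓝 0, |g τ - g 0| ≤ K * |τ|) : |b| ≤ K := by
  refine le_of_forall_pos_le_add fun ε hε => ?_
  have h1 := h.def one_pos
  rw [h.value] at hK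
  have := hK.and h1
  rw [Metric.eventually_nhds_iff] at this
  obtain ⟨r, hr, H⟩ := this
  set s := min (r / 2) (ε / (|c| + 1)) with hs
  have hs0 : 0 < s := by positivity
  have hsr : s < r := (min_le_left _ _).trans_lt (by linarith)
  have hs2 : s * (|c| + 1) ≤ ε := by
    rw [← le_div_iff₀ (by positivity)]; exact min_le_right _ _
  obtain ⟨h2, h3⟩ := H (y := s) (by simpa [abs_of_pos hs0] using hsr)
  rw [Real.norm_eq_abs, Real.norm_eq_abs, abs_of_pos (by positivity : 0 < s ^ 2), one_mul] at h3
  rw [abs_of_pos hs0] at h2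
  have h4 : |b| * s ≤ K * s + s ^ 2 * (|c| + 1) := by
    have e : b * s = (g s - a) - (g s - (a + b * s + c * s ^ 2)) - c * s ^ 2 := by ring
    have : |b * s| ≤ |g s - a| + |g s - (a + b * s + c * s ^ 2)| + |c * s ^ 2| := by
      conv_lhs => rw [e]
      exact (abs_sub _ _).trans (add_le_add (abs_sub _ _) le_rfl)
    rw [abs_mul, abs_mul, abs_of_pos hs0, abs_of_pos (by positivity : 0 < s ^ 2)] at this
    linarith
  have h5 : |b| * s ≤ (K + ε) * s := by nlinarith [mul_le_mul_of_nonneg_right hs2 hs0.le]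
  exact le_of_mul_le_mul_right h5 hs0

lemma one_le_theta {h a : ℝ} (ha : 0 ≤ a) : 1 ≤ √(1 + h ^ 2 * a) ^ 3 := by
  have : 1 ≤ √(1 + h ^ 2 * a) := Real.one_le_sqrt.2 (by nlinarith [mul_nonneg (sq_nonneg h) ha])
  exact one_le_pow₀ this

section
variable {f : E2 → ℝ} {R L c t0 h : ℝ} {U : Set E2} {v : E2 → ℝ}

lemma Good.compact (hG : Good f R L c t0 U) : IsCompact (closure U) :=
  Metric.isCompact_of_isClosed_isBounded isClosed_closure
    ((Metric.isBounded_closedBall (x := (0:E2)) (r := R)).subset fun x hx => by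
      simpa using hG.bdd x hx)

lemma Good.mem_or (hG : Good f R L c t0 U) {x : E2} (hx : x ∈ closure U) :
    x ∈ U ∨ x ∈ frontier U := by
  by_cases h : x ∈ U
  · exact Or.inl h
  · exact Or.inr ⟨hx, by rwa [hG.isOpen.interior_eq]⟩

lemma Good.f_le (hG : Good f R L c t0 U) {x : E2} (hx : x ∈ closure U) : f x ≤ 0 := by
  rcases hG.mem_or hx with h | h
  · exact (hG.neg x h).le
  · exact (hG.zero x h).le

lemma Good.continuousOn (hG : Good f R L c t0 U) : ContinuousOn f (closure U) := by
  have : LipschitzOnWith (Real.toNNReal L) f (closure U) := by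
    refine LipschitzOnWith.of_dist_le_mul fun x hx y hy => ?_
    rw [Real.dist_eq, dist_eq_norm]
    exact (hG.lip x hx y hy).trans (by gcongr; exact Real.le_coe_toNNReal L)
  exact this.continuousOn

/-- A small multiple of `-f` is a subsolution of the rescaled equation. -/
lemma lower_bound (hG : Good f R L c t0 U) (hv : IsSol U h v) (hL : 1 ≤ L) (hh : h ^ 2 ≤ 1) :
    ∀ x ∈ closure U, 1 / (4 * L ^ 3) * (-f x) ≤ v x := by
  intro x0 hx0
  have hL3 : L ≤ L ^ 3 := by
    calc L = L * 1 := by ring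
      _ ≤ L * L ^ 2 := by gcongr; exact one_le_pow₀ hL
      _ = L ^ 3 := by ring
  set c0 := 1 / (4 * L ^ 3) with hc0
  have hc0p : 0 < c0 := by positivity
  have hc0L : c0 * L ^ 3 = 1 / 4 := by rw [hc0]; field_simp
  have hc01 : c0 ≤ 1 := by nlinarith
  clear_value c0
  obtain ⟨z, hz, hmin⟩ := hG.compact.exists_isMinOn ⟨x0, hx0⟩
    (f := fun x => v x + c0 * f x) (hv.1.add (continuousOn_const.mul hG.continuousOn))
  have hmin' : ∀ x ∈ closure U, v z + c0 * f z ≤ v x + c0 * f x := fun x hx => hmin hx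
  suffices 0 ≤ v z + c0 * f z by linarith [hmin' x0 hx0]
  rcases hG.mem_or hz with hz | hz
  swap
  · rw [hv.2.1 z hz, hG.zero z hz]; simp
  exfalso
  obtain ⟨v1, v2, v11, v12, v22, hj, hpde⟩ := hv.2.2 z hz
  obtain ⟨f1, f2, f11, f12, f22, hjf, b1, b2, b11, b12, b22, -⟩ := hG.jets z hz
  obtain ⟨g1, g2, H⟩ := (hj.add (hjf.const_mul c0)).local_min (by
    filter_upwards [hG.isOpen.mem_nhds hz] with x hx using hmin' x (subset_closure hx))
  have hθ := one_le_theta (h := h) (a := v1 ^ 2 + v2 ^ 2) (by positivity)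
  have e1 : v1 = -(c0 * f1) := by linarith
  have e2 : v2 = -(c0 * f2) := by linarith
  have H1 := H 1 0
  have H2 := H 0 1
  have H3 := mul_nonneg (sq_nonneg h) (H (-v2) v1)
  have K1 := (abs_le.1 b11).2
  have K2 := (abs_le.1 b22).2
  have hq : f11 * f2 ^ 2 - 2 * f12 * f1 * f2 + f22 * f1 ^ 2 ≤ 4 * L ^ 3 := by
    have q1 : f1 ^ 2 ≤ L ^ 2 := by rw [← sq_abs f1]; gcongr
    have q2 : f2 ^ 2 ≤ L ^ 2 := by rw [← sq_abs f2]; gcongr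
    have a1 : f11 * f2 ^ 2 ≤ L * L ^ 2 := by
      calc _ ≤ L * f2 ^ 2 := by gcongr
        _ ≤ _ := by gcongr
    have a2 : f22 * f1 ^ 2 ≤ L * L ^ 2 := by
      calc _ ≤ L * f1 ^ 2 := by gcongr
        _ ≤ _ := by gcongr
    have a3 : |f12 * f1 * f2| ≤ L * L * L := by
      rw [abs_mul, abs_mul]; gcongr
    have := (abs_le.1 a3).1
    nlinarith
  have hT : c0 * (f11 + f22) + h ^ 2 * (c0 * (c0 ^ 2 * (f11 * f2 ^ 2 - 2 * f12 * f1 * f2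
      + f22 * f1 ^ 2))) ≥ 2 := by
    rw [e1, e2] at H3 hpde
    rw [e1, e2] at hθ
    nlinarith only [H1, H2, H3, hpde, hθ]
  have hT2 : h ^ 2 * (c0 * (c0 ^ 2 * (f11 * f2 ^ 2 - 2 * f12 * f1 * f2
      + f22 * f1 ^ 2))) ≤ 1 * (c0 * (1 * (4 * L ^ 3))) := by
    have : c0 ^ 2 ≤ 1 := by nlinarith
    calc _ ≤ h ^ 2 * (c0 * (c0 ^ 2 * (4 * L ^ 3))) := by gcongr
      _ ≤ _ := by gcongr
  nlinarith

lemma nonneg_sol (hG : Good f R L c t0 U) (hv : IsSol U h v) (hL : 1 ≤ L) (hh : h ^ 2 ≤ 1)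
    {x : E2} (hx : x ∈ closure U) : 0 ≤ v x := by
  refine le_trans ?_ (lower_bound hG hv hL hh x hx)
  have := hG.f_le hx
  have : 0 ≤ -f x := by linarith
  positivity

/-- Supporting half-plane of the convex set at a boundary point, with unit inner normal `ν`. -/
lemma Good.support (hG : Good f R L c t0 U) {b : E2} (hb : b ∈ frontier U) :
    ∃ ν : E2, ‖ν‖ = 1 ∧ ∀ x ∈ closure U, 0 ≤ ⟪ν, x - b⟫ := by
  have hbU : b ∉ U := by
    have := hb.2; rwa [hG.isOpen.interior_eq] at this
  obtain ⟨F, hF⟩ := geometric_hahn_banach_open_point hG.conv hG.isOpen hbU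
  obtain ⟨a, ha⟩ : U.Nonempty := by
    rw [← closure_nonempty_iff]; exact ⟨b, hb.1⟩
  set n := -(InnerProductSpace.toDual ℝ E2).symm F with hn
  have hFn : ∀ x, ⟪n, x⟫ = - F x := by
    intro x; rw [hn, inner_neg_left, InnerProductSpace.toDual_symm_apply]
  have hn0 : n ≠ 0 := by
    intro h0
    have h1 := hFn (b - a)
    rw [h0, inner_zero_left, map_sub] at h1
    linarith [hF a ha]
  refine ⟨‖n‖⁻¹ • n, by rw [norm_smul]; simp [hn0], fun x hx => ?_⟩
  have hcl : closure U ⊆ {x | 0 ≤ ⟪‖n‖⁻¹ • n, x - b⟫} := by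
    refine closure_minimal (fun y hy => ?_) (isClosed_le continuous_const (by fun_prop))
    simp only [mem_ofPred_eq]
    rw [inner_smul_left, hFn, map_sub]
    have := hF y hy
    simp only [conj_trivial]
    refine mul_nonneg (by positivity) (by linarith)
  exact hcl hx

/-- Boundary gradient estimate: a concave quadratic function of the distance to the supporting line
at `b` is a supersolution. -/
lemma upper_bound (hG : Good f R L c t0 U) (hv : IsSol U h v) (hR : 0 < R)
    (hh : 256 * R ^ 2 * h ^ 2 ≤ 1) :
    ∀ x ∈ closure U, ∀ b ∈ frontier U, v x ≤ 8 * R * ‖x - b‖ := by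
  intro x0 hx0 b hb
  obtain ⟨ν, hν, hs⟩ := hG.support hb
  have hsD : ∀ x ∈ closure U, ⟪ν, x - b⟫ ≤ 2 * R := by
    intro x hx
    calc ⟪ν, x - b⟫ ≤ ‖ν‖ * ‖x - b‖ := real_inner_le_norm _ _
      _ ≤ ‖x‖ + ‖b‖ := by rw [hν, one_mul]; exact norm_sub_le _ _
      _ ≤ 2 * R := by linarith [hG.bdd x hx, hG.bdd b hb.1]
  set Ψ : E2 → ℝ := fun x => 2 * (4 * R * ⟪ν, x - b⟫ - ⟪ν, x - b⟫ ^ 2) with hΨ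
  obtain ⟨z, hz, hmin⟩ := hG.compact.exists_isMinOn ⟨x0, hx0⟩
    (f := fun x => Ψ x - v x) ((by fun_prop : Continuous Ψ).continuousOn.sub hv.1)
  have hmin' : ∀ x ∈ closure U, Ψ z - v z ≤ Ψ x - v x := fun x hx => hmin hx
  have hxx : Ψ x0 ≤ 8 * R * ‖x0 - b‖ := by
    have : ⟪ν, x0 - b⟫ ≤ ‖ν‖ * ‖x0 - b‖ := real_inner_le_norm _ _
    rw [hν, one_mul] at this
    simp only [hΨ]
    nlinarith [sq_nonneg ⟪ν, x0 - b⟫]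
  suffices 0 ≤ Ψ z - v z by linarith [hmin' x0 hx0]
  have hs0 := hs z hz
  have hs1 := hsD z hz
  rcases hG.mem_or hz with hz | hz
  swap
  · rw [hv.2.1 z hz]; simp only [hΨ]
    nlinarith
  exfalso
  obtain ⟨v1, v2, v11, v12, v22, hj, hpde⟩ := hv.2.2 z hz
  set s := ⟪ν, z - b⟫ with hsd
  have hjΨ : Jet Ψ z (4 * (2 * R - s) * ν 0) (4 * (2 * R - s) * ν 1) (-4 * ν 0 ^ 2)
      (-4 * (ν 0 * ν 1)) (-4 * ν 1 ^ 2) := by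
    intro ζ
    have hl : ∀ τ : ℝ, ⟪ν, z + τ • ζ - b⟫ = s + τ * (ν 0 * ζ 0 + ν 1 * ζ 1) := by
      intro τ
      rw [add_sub_right_comm, inner_add_right, inner_smul_right, ← inner2]
    refine ((T2.poly (2 * (4 * R * s - s ^ 2)) (4 * (2 * R - s) * (ν 0 * ζ 0 + ν 1 * ζ 1))
      (-2 * (ν 0 * ζ 0 + ν 1 * ζ 1) ^ 2)).congr ?_).of_eq rfl (by ring) (by ring)
    intro τ
    simp only [hΨ, hl]; ring
  obtain ⟨g1, g2, H⟩ := (hjΨ.sub hj).local_min (by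
    filter_upwards [hG.isOpen.mem_nhds hz] with x hx using hmin' x (subset_closure hx))
  have hνn : ν 0 ^ 2 + ν 1 ^ 2 = 1 := by rw [← norm_sq2, hν]; norm_num
  have e1 : v1 = 4 * (2 * R - s) * ν 0 := by linarith
  have e2 : v2 = 4 * (2 * R - s) * ν 1 := by linarith
  have H1 := H 1 0
  have H2 := H 0 1
  have H3 := mul_nonneg (sq_nonneg h) (H (-v2) v1)
  have hy0 := Real.sqrt_nonneg (1 + h ^ 2 * (v1 ^ 2 + v2 ^ 2))
  have hy := Real.sq_sqrt (by positivity : 0 ≤ 1 + h ^ 2 * (v1 ^ 2 + v2 ^ 2))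
  have hP : v1 ^ 2 + v2 ^ 2 = 16 * (2 * R - s) ^ 2 := by
    rw [e1, e2]; linear_combination 16 * (2 * R - s) ^ 2 * hνn
  have hP2 : h ^ 2 * (v1 ^ 2 + v2 ^ 2) ≤ 1 / 4 := by
    have : (2 * R - s) ^ 2 ≤ 4 * R ^ 2 := by nlinarith
    rw [hP]
    nlinarith [mul_le_mul_of_nonneg_left this (sq_nonneg h)]
  set y := √(1 + h ^ 2 * (v1 ^ 2 + v2 ^ 2)) with hyd
  have hy1 : y ≤ 1.2 := by nlinarith only [hy, hP2, hy0]
  have hy3 : y ^ 3 ≤ 1.2 ^ 3 := by gcongr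
  clear_value y
  -- the second derivatives of the barrier only see the direction `ν`, orthogonal to `J DΨ`
  have hT : -4 * (ν 0 ^ 2 + ν 1 ^ 2) + 2 * y ^ 3 ≥ 0 := by
    have hz : h ^ 2 * (-4 * ν 0 ^ 2 * v2 ^ 2 + 8 * (ν 0 * ν 1) * v1 * v2 - 4 * ν 1 ^ 2 * v1 ^ 2)
        = 0 := by rw [e1, e2]; ring
    nlinarith only [H1, H2, H3, hpde, hz]
  rw [hνn] at hT
  norm_num at hy3
  linarith

/-- Translates of `v` are compared with the dilates `λ⁻¹ v(λ ·)`, `λ > 1`, which are strict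
supersolutions; letting `λ → 1` reduces the Lipschitz bound to the one at the boundary. -/
lemma lipschitz_interior (hG : Good f R L c t0 U) (hv : IsSol U h v) (hL : 1 ≤ L) (hR : 0 < R)
    (hh1 : h ^ 2 ≤ 1) (hh : 256 * R ^ 2 * h ^ 2 ≤ 1) :
    ∀ x ∈ U, ∀ y ∈ U, v y - v x ≤ 8 * R * ‖x - y‖ := by
  intro x hx y hy
  set w := y - x with hw
  have main : ∀ lam : ℝ, 1 < lam → lam • x ∈ closure U →
      -(8 * R * (‖w‖ + (lam - 1) * R)) ≤ lam⁻¹ * v (lam • x) - v (x + w) := by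
    intro lam hlam hlx
    have hl0 : 0 < lam := by linarith
    set K : Set E2 := {p | p + w ∈ closure U ∧ lam • p ∈ closure U} with hK
    have hcont1 : Continuous (fun p : E2 => p + w) := by fun_prop
    have hcont2 : Continuous (fun p : E2 => lam • p) := by fun_prop
    have hKc : IsCompact K := by
      refine Metric.isCompact_of_isClosed_isBounded
        ((isClosed_closure.preimage hcont1).inter (isClosed_closure.preimage hcont2)) ?_
      refine (Metric.isBounded_closedBall (x := (0:E2)) (r := R + ‖w‖)).subset fun p hp => ?_
      have h1 := hG.bdd _ hp.1
      have h2 : ‖p‖ ≤ ‖p + w‖ + ‖w‖ := by simpa using norm_sub_le (p + w) w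
      simp; linarith
    have hxK : x ∈ K := ⟨by rw [hw]; simpa using subset_closure hy, hlx⟩
    obtain ⟨p, hp, hmin⟩ := hKc.exists_isMinOn ⟨x, hxK⟩
      (f := fun p => lam⁻¹ * v (lam • p) - v (p + w))
      ((continuousOn_const.mul (hv.1.comp hcont2.continuousOn fun p hp => hp.2)).sub
        (hv.1.comp hcont1.continuousOn fun p hp => hp.1))
    have hmin' : ∀ q ∈ K, lam⁻¹ * v (lam • p) - v (p + w) ≤ lam⁻¹ * v (lam • q) - v (q + w) :=
      fun q hq => hmin hq
    refine le_trans ?_ (hmin' x hxK)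
    have hpos : 0 ≤ 8 * R * (‖w‖ + (lam - 1) * R) := by
      have : 0 ≤ lam - 1 := by linarith
      positivity
    rcases hG.mem_or hp.1 with h1 | h1
    swap
    · rw [hv.2.1 _ h1]
      have := nonneg_sol hG hv hL hh1 hp.2
      have : 0 ≤ lam⁻¹ * v (lam • p) := by positivity
      linarith
    rcases hG.mem_or hp.2 with h2 | h2
    swap
    · rw [hv.2.1 _ h2]
      have hu := upper_bound hG hv hR hh _ hp.1 _ h2
      have hpR : ‖p‖ ≤ R := by
        have := hG.bdd _ hp.2
        rw [norm_smul, Real.norm_eq_abs, abs_of_pos hl0] at this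
        nlinarith [norm_nonneg p]
      have hn : ‖p + w - lam • p‖ ≤ ‖w‖ + (lam - 1) * R := by
        have e : p + w - lam • p = w - (lam - 1) • p := by module
        rw [e]
        refine (norm_sub_le _ _).trans ?_
        rw [norm_smul, Real.norm_eq_abs, abs_of_pos (by linarith : 0 < lam - 1)]
        gcongr
      have : 8 * R * ‖p + w - lam • p‖ ≤ 8 * R * (‖w‖ + (lam - 1) * R) := by gcongr
      linarith
    exfalso
    obtain ⟨v1, v2, v11, v12, v22, hj, hpde⟩ := hv.2.2 _ h2
    obtain ⟨u1, u2, u11, u12, u22, hju, hpdeu⟩ := hv.2.2 _ h1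
    obtain ⟨g1, g2, H⟩ := ((hj.dilate hl0).sub hju.translate).local_min (by
      have n1 : ∀ᶠ q in 𝓝 p, q + w ∈ U :=
        hcont1.continuousAt.eventually_mem (hG.isOpen.mem_nhds h1)
      have n2 : ∀ᶠ q in 𝓝 p, lam • q ∈ U :=
        hcont2.continuousAt.eventually_mem (hG.isOpen.mem_nhds h2)
      filter_upwards [n1, n2] with q m1 m2
      exact hmin' q ⟨subset_closure m1, subset_closure m2⟩)
    have e1 : u1 = v1 := by linarith
    have e2 : u2 = v2 := by linarith
    rw [e1, e2] at hpdeu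
    have H1 := H 1 0
    have H2 := H 0 1
    have H3 := mul_nonneg (sq_nonneg h) (H (-v2) v1)
    have hθ := one_le_theta (h := h) (a := v1 ^ 2 + v2 ^ 2) (by positivity)
    generalize √(1 + h ^ 2 * (v1 ^ 2 + v2 ^ 2)) ^ 3 = θ at *
    have : 0 ≤ lam * (-2 * θ) - (-2 * θ) := by
      linear_combination H1 + H2 + H3 + lam * hpde - hpdeu
    nlinarith
  have hvx : ContinuousAt v x := (hv.1 x (subset_closure hx)).continuousAt
    (mem_of_superset (hG.isOpen.mem_nhds hx) subset_closure)
  have hl1 : ContinuousAt (fun lam : ℝ => lam • x) 1 := by fun_prop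
  have hlv : ContinuousAt (fun lam : ℝ => lam⁻¹ * v (lam • x) - v (x + w)) 1 := by
    refine ((continuousAt_inv₀ one_ne_zero).mul ?_).sub continuousAt_const
    exact ContinuousAt.comp (g := v) (f := fun lam : ℝ => lam • x) (by simpa using hvx) hl1
  have hr : ContinuousAt (fun lam : ℝ => -(8 * R * (‖w‖ + (lam - 1) * R))) 1 := by fun_prop
  have hev : ∀ᶠ lam in 𝓝[>] (1:ℝ), -(8 * R * (‖w‖ + (lam - 1) * R))
      ≤ lam⁻¹ * v (lam • x) - v (x + w) := by
    have n1 : ∀ᶠ lam : ℝ in 𝓝 1, lam • x ∈ U :=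
      hl1.eventually_mem (hG.isOpen.mem_nhds (by simpa using hx))
    filter_upwards [self_mem_nhdsWithin, nhdsWithin_le_nhds n1] with lam h1 h2
    exact main lam h1 (subset_closure h2)
  have := le_of_tendsto_of_tendsto (hr.tendsto.mono_left nhdsWithin_le_nhds)
    (hlv.tendsto.mono_left nhdsWithin_le_nhds) hev
  have e : x + w = y := by rw [hw]; abel
  rw [e] at this
  simp only [sub_self, zero_mul, add_zero, inv_one, one_mul, one_smul] at this
  rw [norm_sub_rev]
  linarith

lemma lipschitz_sol (hG : Good f R L c t0 U) (hv : IsSol U h v) (hL : 1 ≤ L) (hR : 0 < R)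
    (hh1 : h ^ 2 ≤ 1) (hh : 256 * R ^ 2 * h ^ 2 ≤ 1) :
    ∀ x ∈ closure U, ∀ y ∈ closure U, |v y - v x| ≤ 8 * R * ‖x - y‖ := by
  have h1 : LipschitzOnWith (Real.toNNReal (8 * R)) v U := by
    refine LipschitzOnWith.of_dist_le_mul fun x hx y hy => ?_
    rw [Real.dist_eq, dist_eq_norm, Real.coe_toNNReal _ (by positivity), abs_le]
    have a := lipschitz_interior hG hv hL hR hh1 hh x hx y hy
    have b := lipschitz_interior hG hv hL hR hh1 hh y hy x hx
    rw [norm_sub_rev] at b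
    constructor <;> linarith
  have h2 := h1.closure hv.1
  intro x hx y hy
  have := h2.dist_le_mul y hy x hx
  rwa [Real.dist_eq, dist_eq_norm, Real.coe_toNNReal _ (by positivity), norm_sub_rev] at this

lemma gradient_bound (hG : Good f R L c t0 U) (hv : IsSol U h v) (hL : 1 ≤ L) (hR : 0 < R)
    (hh1 : h ^ 2 ≤ 1) (hh : 256 * R ^ 2 * h ^ 2 ≤ 1) {z : E2} (hz : z ∈ U)
    {v1 v2 v11 v12 v22 : ℝ} (hj : Jet v z v1 v2 v11 v12 v22) : v1 ^ 2 + v2 ^ 2 ≤ (8 * R) ^ 2 := by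
  have h1 := (hj !₂[v1, v2]).abs_le_of_lip (K := 8 * R * ‖!₂[v1, v2]‖) (by
    have n1 : ∀ᶠ τ : ℝ in 𝓝 0, z + τ • !₂[v1, v2] ∈ U :=
      (tendsto_line z !₂[v1, v2]).eventually_mem (hG.isOpen.mem_nhds hz)
    filter_upwards [n1] with τ hτ
    have := lipschitz_sol hG hv hL hR hh1 hh z (subset_closure hz) _ (subset_closure hτ)
    simp only [zero_smul, add_zero]
    refine this.trans (le_of_eq ?_)
    rw [sub_add_cancel_left, norm_neg, norm_smul, Real.norm_eq_abs]; ring)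
  have h2 := norm_sq2 !₂[v1, v2]
  simp only [Matrix.cons_val_zero, Matrix.cons_val_one] at h1 h2
  have h3 : v1 * v1 + v2 * v2 = ‖!₂[v1, v2]‖ ^ 2 := by rw [h2]; ring
  rw [h3, abs_of_nonneg (by positivity)] at h1
  rw [← h2]
  have h0 := norm_nonneg !₂[v1, v2]
  generalize ‖!₂[v1, v2]‖ = n at *
  by_cases hn : n = 0
  · rw [hn]; nlinarith [sq_nonneg (8 * R)]
  have hn' : 0 < n := lt_of_le_of_ne h0 (Ne.symm hn)
  have : n ≤ 8 * R := by
    refine le_of_mul_le_mul_right ?_ hn'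
    nlinarith
  gcongr

end

/-! ### The auxiliary weight and the constants -/

/-- The constants of the two-point argument and the inequalities between them. -/
structure Consts (R L c t0 A Q B c0 d c2 Cq Mq k M δ ε : ℝ) : Prop where
  R1 : 1 ≤ R
  L1 : 1 ≤ L
  c_pos : 0 < c
  c_le : c ≤ 1
  t0_pos : 0 < t0
  A_eq : A = 8 * L ^ 2 / c
  Q_eq : Q = 3 * A * R * L + L
  B_eq : B = 2 * A * L ^ 3 + L ^ 3
  c0_eq : c0 = 1 / (4 * L ^ 3)
  d_eq : d = c0 * c
  c2_eq : c2 = c / 8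
  Cq_eq : Cq = 1 + L + 16 * Q ^ 2 * L / c2
  Mq_eq : Mq = Cq + A * R ^ 2
  k_pos : 0 < k
  k_le : k ≤ 1
  k_d : 64 * R * L * k ≤ d
  k_t : 16 * R ^ 2 * k ≤ t0
  M1 : 1 ≤ M
  M_q : Mq ≤ M
  M_B : B ≤ M
  M_R : 32 * R ^ 2 + 1 ≤ M
  M_qL : 4 * Mq ^ 2 * L ^ 3 ≤ M
  M_qc : 8 * Mq ^ 2 * L ≤ M * c0
  M_QL : Q * L ≤ M
  M_Qc : 2 * Q ≤ M * c0
  δ_pos : 0 < δ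
  δ_le : δ ≤ 1
  δ_d : 2 * δ * Mq ≤ d
  δ_k : 32 * δ * Mq ≤ d ^ 2 * k
  δ_Q : δ * Q * L ≤ c
  δ_R : 4 * δ * Mq * R ≤ 1
  δ_M : 100000 * M * δ ≤ c2
  ε_pos : 0 < ε
  ε_le : ε ^ 2 ≤ 1
  ε_R : 256 * R ^ 2 * ε ^ 2 ≤ 1
  ε_k : 300 * M * ε ^ 2 ≤ d * k / 2
  ε_M : 1000000 * M ^ 4 * ε ^ 2 ≤ c2 * δ

lemma small_pos {K b : ℝ} (hb : 0 < b) : 0 < b / (|K| + 1) ∧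
    ∀ x, 0 ≤ x → x ≤ b / (|K| + 1) → K * x ≤ b := by
  refine ⟨by positivity, fun x hx h => ?_⟩
  rw [le_div_iff₀ (by positivity)] at h
  nlinarith [le_abs_self K]

set_option maxHeartbeats 1000000 in
/-- Admissible constants exist: `k`, `M`, `δ`, `ε` are fixed one after the other. -/
lemma exists_consts {R L c t0 : ℝ} (hR : 1 ≤ R) (hL : 1 ≤ L) (hc : 0 < c) (hc1 : c ≤ 1)
    (ht : 0 < t0) : ∃ A Q B c0 d c2 Cq Mq k M δ ε, Consts R L c t0 A Q B c0 d c2 Cq Mq k M δ ε := by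
  obtain ⟨A, hA⟩ : ∃ A, A = 8 * L ^ 2 / c := ⟨_, rfl⟩
  obtain ⟨Q, hQ⟩ : ∃ Q, Q = 3 * A * R * L + L := ⟨_, rfl⟩
  obtain ⟨B, hB⟩ : ∃ B, B = 2 * A * L ^ 3 + L ^ 3 := ⟨_, rfl⟩
  obtain ⟨c0, hc0⟩ : ∃ c0, c0 = 1 / (4 * L ^ 3) := ⟨_, rfl⟩
  obtain ⟨d, hd⟩ : ∃ d, d = c0 * c := ⟨_, rfl⟩
  obtain ⟨c2, hc2⟩ : ∃ c2, c2 = c / 8 := ⟨_, rfl⟩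
  obtain ⟨Cq, hCq⟩ : ∃ Cq, Cq = 1 + L + 16 * Q ^ 2 * L / c2 := ⟨_, rfl⟩
  obtain ⟨Mq, hMq⟩ : ∃ Mq, Mq = Cq + A * R ^ 2 := ⟨_, rfl⟩
  have hc0p : 0 < c0 := by rw [hc0]; positivity
  have hdp : 0 < d := by rw [hd]; positivity
  have hc2p : 0 < c2 := by rw [hc2]; positivity
  obtain ⟨p1, s1⟩ := small_pos (K := 64 * R * L) hdp
  obtain ⟨p2, s2⟩ := small_pos (K := 16 * R ^ 2) ht
  obtain ⟨k, hk⟩ : ∃ k, k = min 1 (min (d / (|64 * R * L| + 1)) (t0 / (|16 * R ^ 2| + 1))) :=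
    ⟨_, rfl⟩
  have hkp : 0 < k := by rw [hk]; positivity
  have k1 : k ≤ 1 := by rw [hk]; exact min_le_left _ _
  have k2 : 64 * R * L * k ≤ d := s1 k hkp.le (by
    rw [hk]; exact (min_le_right _ _).trans (min_le_left _ _))
  have k3 : 16 * R ^ 2 * k ≤ t0 := s2 k hkp.le (by
    rw [hk]; exact (min_le_right _ _).trans (min_le_right _ _))
  obtain ⟨M, hM⟩ : ∃ M, M = 1 + |Mq| + |B| + (32 * R ^ 2 + 1) + 4 * Mq ^ 2 * L ^ 3
      + 8 * Mq ^ 2 * L / c0 + |Q * L| + |2 * Q| / c0 := ⟨_, rfl⟩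
  have hMp : 0 < M := by rw [hM]; positivity
  have t1 := abs_nonneg Mq
  have t2 := abs_nonneg B
  have t3 : 0 ≤ R ^ 2 := by positivity
  have t4 : 0 ≤ 4 * Mq ^ 2 * L ^ 3 := by positivity
  have t5 : 0 ≤ 8 * Mq ^ 2 * L / c0 := by positivity
  have t6 := abs_nonneg (Q * L)
  have t7 : 0 ≤ |2 * Q| / c0 := by positivity
  obtain ⟨q1, r1⟩ := small_pos (K := 2 * Mq) hdp
  obtain ⟨q2, r2⟩ := small_pos (K := 32 * Mq) (b := d ^ 2 * k) (by positivity)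
  obtain ⟨q3, r3⟩ := small_pos (K := Q * L) hc
  obtain ⟨q4, r4⟩ := small_pos (K := 4 * Mq * R) one_pos
  obtain ⟨q5, r5⟩ := small_pos (K := 100000 * M) hc2p
  obtain ⟨δ, hδp, d0, d1, d2, d3, d4, d5⟩ : ∃ δ, 0 < δ ∧ δ ≤ 1 ∧ δ ≤ d / (|2 * Mq| + 1)
      ∧ δ ≤ d ^ 2 * k / (|32 * Mq| + 1) ∧ δ ≤ c / (|Q * L| + 1) ∧ δ ≤ 1 / (|4 * Mq * R| + 1)
      ∧ δ ≤ c2 / (|100000 * M| + 1) := by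
    refine ⟨min 1 (min (d / (|2 * Mq| + 1)) (min (d ^ 2 * k / (|32 * Mq| + 1))
      (min (c / (|Q * L| + 1)) (min (1 / (|4 * Mq * R| + 1)) (c2 / (|100000 * M| + 1)))))),
      by positivity, ?_⟩
    simp
  obtain ⟨u1, w1⟩ := small_pos (K := 256 * R ^ 2) one_pos
  obtain ⟨u2, w2⟩ := small_pos (K := 300 * M) (b := d * k / 2) (by positivity)
  obtain ⟨u3, w3⟩ := small_pos (K := 1000000 * M ^ 4) (b := c2 * δ) (by positivity)
  obtain ⟨ε, hε, e0, e1, e2, e3⟩ : ∃ ε, 0 < ε ∧ ε ≤ 1 ∧ ε ≤ 1 / (|256 * R ^ 2| + 1)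
      ∧ ε ≤ d * k / 2 / (|300 * M| + 1) ∧ ε ≤ c2 * δ / (|1000000 * M ^ 4| + 1) := by
    refine ⟨min 1 (min (1 / (|256 * R ^ 2| + 1)) (min (d * k / 2 / (|300 * M| + 1))
      (c2 * δ / (|1000000 * M ^ 4| + 1)))), by positivity, ?_⟩
    simp
  have hεε : ε ^ 2 ≤ ε := by nlinarith
  have hε2 : 0 ≤ ε ^ 2 := by positivity
  refine ⟨A, Q, B, c0, d, c2, Cq, Mq, k, M, δ, ε, hR, hL, hc, hc1, ht, hA, hQ, hB, hc0, hd, hc2,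
    hCq, hMq, hkp, k1, k2, k3, ?_, ?_, ?_, ?_, ?_, ?_, ?_, ?_, hδp, d0, ?_, ?_, ?_, ?_, ?_, hε,
    hεε.trans e0, w1 _ hε2 (hεε.trans e1), w2 _ hε2 (hεε.trans e2), w3 _ hε2 (hεε.trans e3)⟩
  · linarith only [hM, t1, t2, t3, t4, t5, t6, t7]
  · linarith only [hM, t1, t2, t3, t4, t5, t6, t7, le_abs_self Mq]
  · linarith only [hM, t1, t2, t3, t4, t5, t6, t7, le_abs_self B]
  · linarith only [hM, t1, t2, t3, t4, t5, t6, t7]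
  · linarith only [hM, t1, t2, t3, t4, t5, t6, t7]
  · rw [← div_le_iff₀ hc0p]; linarith only [hM, t1, t2, t3, t4, t5, t6, t7]
  · linarith only [hM, t1, t2, t3, t4, t5, t6, t7, le_abs_self (Q * L)]
  · rw [← div_le_iff₀ hc0p]
    have : 2 * Q / c0 ≤ |2 * Q| / c0 := by gcongr; exact le_abs_self _
    linarith only [hM, t1, t2, t3, t4, t5, t6, t7, this]
  · linarith only [r1 δ hδp.le d1]
  · linarith only [r2 δ hδp.le d2]
  · linarith only [r3 δ hδp.le d3]
  · linarith only [r4 δ hδp.le d4]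
  · exact r5 δ hδp.le d5

/-- The weight of the two-point function; the term `-√(-f)` makes its Laplacian of size
`(-f)^{-3/2}` near the boundary. -/
def qf (A Cq : ℝ) (f : E2 → ℝ) (z : E2) : ℝ := Cq + A * ‖z‖ ^ 2 - √(-f z)

lemma Jet.sqrt {v : E2 → ℝ} {z : E2} {v1 v2 v11 v12 v22 s : ℝ} (hj : Jet v z v1 v2 v11 v12 v22)
    (hs : 0 < s) (hv : v z = s ^ 2) :
    Jet (fun x => √(v x)) z (v1 / (2 * s)) (v2 / (2 * s)) (v11 / (2 * s) - v1 ^ 2 / (4 * s ^ 3))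
      (v12 / (2 * s) - v1 * v2 / (4 * s ^ 3)) (v22 / (2 * s) - v2 ^ 2 / (4 * s ^ 3)) := by
  intro ζ
  refine ((hj ζ).sqrt hs hv).of_eq ?_ (by ring) (by ring)
  beta_reduce
  rw [hv, Real.sqrt_sq hs.le]

lemma normsq_jet (z : E2) (A Cq : ℝ) : Jet (fun x => Cq + A * ‖x‖ ^ 2) z (2 * A * z 0)
    (2 * A * z 1) (2 * A) 0 (2 * A) := by
  intro ζ
  refine ((T2.poly (Cq + A * ‖z‖ ^ 2) (2 * A * z 0 * ζ 0 + 2 * A * z 1 * ζ 1)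
    (A * (ζ 0 ^ 2 + ζ 1 ^ 2))).congr ?_).of_eq rfl rfl (by ring)
  intro τ
  simp only [norm_sq2, PiLp.add_apply, PiLp.smul_apply, smul_eq_mul]
  ring

section
variable {R L c t0 A Q B c0 d c2 Cq Mq k M δ ε : ℝ} {f : E2 → ℝ} {U : Set E2}

set_option maxHeartbeats 1000000 in
/-- Derivatives of the weight, measured in powers of `s = √(-f)`: the Laplacian is at least of order
`s⁻³`, the second derivatives are at most of order `s⁻³` and the gradient of order `s⁻¹`. -/
lemma q_jet (hC : Consts R L c t0 A Q B c0 d c2 Cq Mq k M δ ε) (hG : Good f R L c t0 U)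
    {z : E2} (hz : z ∈ U) :
    ∃ s q1 q2 q11 q12 q22, 0 < s ∧ s ≤ L ∧ s ^ 2 = -f z ∧ Jet (qf A Cq f) z q1 q2 q11 q12 q22 ∧
      c2 ≤ s ^ 3 * (q11 + q22) ∧ |s ^ 3 * q11| ≤ B ∧ |s ^ 3 * q12| ≤ B ∧ |s ^ 3 * q22| ≤ B ∧
      s ^ 2 * (q1 ^ 2 + q2 ^ 2) ≤ Q ^ 2 := by
  obtain ⟨f1, f2, f11, f12, f22, hjf, b1, b2, b11, b12, b22, hgr⟩ := hG.jets z hz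
  have hneg := hG.neg z hz
  have hL1 := hC.L1
  have hcp := hC.c_pos
  have hR1 := hC.R1
  have hA : 0 < A := by rw [hC.A_eq]; positivity
  have hlow := hG.low z (subset_closure hz)
  obtain ⟨s, hs⟩ : ∃ s, s = √(-f z) := ⟨_, rfl⟩
  have hs0 : 0 < s := by rw [hs]; exact Real.sqrt_pos.2 (by linarith)
  have hs2 : s ^ 2 = -f z := by rw [hs]; exact Real.sq_sqrt (by linarith)
  have hsL2 : s ^ 2 ≤ L := by linarith
  have hsL : s ≤ L := by nlinarith only [hsL2, hL1, hs0]
  have hj := (normsq_jet z A Cq).sub ((hjf.const_mul (-1)).sqrt hs0 (by linarith))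
  have hj' : Jet (qf A Cq f) z (2 * A * z 0 + f1 / (2 * s)) (2 * A * z 1 + f2 / (2 * s))
      (2 * A + f11 / (2 * s) + f1 ^ 2 / (4 * s ^ 3)) (f12 / (2 * s) + f1 * f2 / (4 * s ^ 3))
      (2 * A + f22 / (2 * s) + f2 ^ 2 / (4 * s ^ 3)) := by
    intro ζ
    refine ((hj ζ).congr ?_).of_eq ?_ (by ring) (by ring)
    · intro τ; simp [qf]
    · simp [qf]
  have sq1 : f1 ^ 2 ≤ L ^ 2 := by rw [← sq_abs f1]; gcongr
  have sq2 : f2 ^ 2 ≤ L ^ 2 := by rw [← sq_abs f2]; gcongr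
  have hs3L : s ^ 3 ≤ L ^ 3 := by gcongr
  have hs2L2 : s ^ 2 ≤ L ^ 2 := by gcongr
  have m11 : s ^ 3 * (2 * A + f11 / (2 * s) + f1 ^ 2 / (4 * s ^ 3))
      = 2 * A * s ^ 3 + s ^ 2 * f11 / 2 + f1 ^ 2 / 4 := by field_simp
  have m12 : s ^ 3 * (f12 / (2 * s) + f1 * f2 / (4 * s ^ 3))
      = s ^ 2 * f12 / 2 + f1 * f2 / 4 := by field_simp
  have m22 : s ^ 3 * (2 * A + f22 / (2 * s) + f2 ^ 2 / (4 * s ^ 3))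
      = 2 * A * s ^ 3 + s ^ 2 * f22 / 2 + f2 ^ 2 / 4 := by field_simp
  have hAs : 2 * A * s ^ 3 ≤ 2 * A * L ^ 3 := by gcongr
  have hAs0 : 0 ≤ 2 * A * s ^ 3 := by positivity
  have hLL : L ^ 2 ≤ L ^ 3 := by nlinarith only [sq_nonneg L, hL1]
  have hff : ∀ a, |a| ≤ L → |s ^ 2 * a| ≤ L ^ 3 := by
    intro a ha
    rw [abs_mul, abs_of_pos (by positivity : 0 < s ^ 2)]
    calc _ ≤ L ^ 2 * L := by gcongr
      _ = _ := by ring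
  have k11 := abs_le.1 (hff _ b11)
  have k12 := abs_le.1 (hff _ b12)
  have k22 := abs_le.1 (hff _ b22)
  have hf12 : |f1 * f2| ≤ L ^ 2 := by rw [abs_mul, sq]; gcongr
  have kf := abs_le.1 hf12
  have p1 := sq_nonneg f1
  have p2 := sq_nonneg f2
  have hAL : 0 ≤ 2 * A * L ^ 3 := by positivity
  refine ⟨s, _, _, _, _, _, hs0, hsL, hs2, hj', ?_, ?_, ?_, ?_, ?_⟩
  · rw [mul_add, m11, m22, hC.c2_eq]
    have l11 := mul_le_mul_of_nonneg_left (abs_le.1 b11).1 (sq_nonneg s)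
    have l22 := mul_le_mul_of_nonneg_left (abs_le.1 b22).1 (sq_nonneg s)
    -- either `s` is so small that the gradient term dominates, or the `A` term does
    have key : 2 * L * s ^ 2 ≤ c / 8 + 4 * A * s ^ 3 := by
      rcases le_total (16 * L * s) c with hh | hh
      · have : 16 * L * s * s ≤ c * 1 := by
          by_cases hs1 : s ≤ 1
          · gcongr
          · push Not at hs1
            nlinarith only [hC.c_le, hs1, hL1, hh, mul_pos hs0 hs0]
        have h4 : 0 ≤ 4 * A * s ^ 3 := by positivity
        linarith only [this, h4]
      · have hAc : A * c = 8 * L ^ 2 := by rw [hC.A_eq]; field_simp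
        have : L ≤ 2 * A * s := by
          have h1 : A * c ≤ A * (16 * L * s) := by gcongr
          rw [hAc] at h1
          have h2 : L * L ≤ (2 * A * s) * L := by linarith only [h1]
          exact le_of_mul_le_mul_right h2 (by linarith)
        have h3 := mul_le_mul_of_nonneg_right this (sq_nonneg s)
        linarith only [h3, hcp]
    have hLs : s ^ 2 ≤ L * s ^ 2 := by nlinarith only [sq_nonneg s, hL1]
    have hgr' : c ≤ s ^ 2 + (f1 ^ 2 + f2 ^ 2) := by rw [hs2]; exact hgr
    linarith only [key, hLs, hgr', l11, l22, mul_nonneg (by linarith : 0 ≤ L) (sq_nonneg s)]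
  · rw [m11, hC.B_eq, abs_le]
    constructor <;> linarith only [k11.1, k11.2, kf.1, kf.2, p1, p2, sq1, sq2, hAs, hAs0, hAL, hLL]
  · rw [m12, hC.B_eq, abs_le]
    constructor <;> linarith only [k12.1, k12.2, kf.1, kf.2, p1, p2, sq1, sq2, hAs, hAs0, hAL, hLL]
  · rw [m22, hC.B_eq, abs_le]
    constructor <;> linarith only [k22.1, k22.2, kf.1, kf.2, p1, p2, sq1, sq2, hAs, hAs0, hAL, hLL]
  · have hzR : z 0 ^ 2 + z 1 ^ 2 ≤ R ^ 2 := by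
      rw [← norm_sq2]; have := hG.bdd z (subset_closure hz); gcongr
    have e : s ^ 2 * ((2 * A * z 0 + f1 / (2 * s)) ^ 2 + (2 * A * z 1 + f2 / (2 * s)) ^ 2)
        = (2 * A * s * z 0 + f1 / 2) ^ 2 + (2 * A * s * z 1 + f2 / 2) ^ 2 := by
      field_simp
    rw [e]
    have a1 : (2 * A * s * z 0 + f1 / 2) ^ 2 ≤ 2 * (2 * A * s * z 0) ^ 2 + 2 * (f1 / 2) ^ 2 := by
      nlinarith only [sq_nonneg (2 * A * s * z 0 - f1 / 2)]
    have a2 : (2 * A * s * z 1 + f2 / 2) ^ 2 ≤ 2 * (2 * A * s * z 1) ^ 2 + 2 * (f2 / 2) ^ 2 := by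
      nlinarith only [sq_nonneg (2 * A * s * z 1 - f2 / 2)]
    have a3 : s ^ 2 * (z 0 ^ 2 + z 1 ^ 2) ≤ L ^ 2 * R ^ 2 := by gcongr
    have a4 := mul_le_mul_of_nonneg_left a3 (by positivity : 0 ≤ 8 * A ^ 2)
    rw [hC.Q_eq]
    have a5 : 0 ≤ A * R * L * L := by positivity
    have a6 : 0 ≤ A ^ 2 * (L ^ 2 * R ^ 2) := by positivity
    nlinarith only [a1, a2, a4, a5, a6, sq1, sq2]

lemma q_bounds (hC : Consts R L c t0 A Q B c0 d c2 Cq Mq k M δ ε) (hG : Good f R L c t0 U)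
    {z : E2} (hz : z ∈ closure U) :
    1 ≤ qf A Cq f z ∧ 16 * Q ^ 2 * L / c2 ≤ qf A Cq f z ∧ qf A Cq f z ≤ Mq := by
  have hL1 := hC.L1
  have hcp := hC.c_pos
  have hA : 0 < A := by rw [hC.A_eq]; positivity
  have hc2 : 0 < c2 := by rw [hC.c2_eq]; positivity
  have h1 : √(-f z) ≤ L := by
    rw [Real.sqrt_le_left (by linarith)]
    have := hG.low z hz
    nlinarith
  have h0 := Real.sqrt_nonneg (-f z)
  have h2 : 0 ≤ 16 * Q ^ 2 * L / c2 := by positivity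
  have h3 : A * ‖z‖ ^ 2 ≤ A * R ^ 2 := by
    have := hG.bdd z hz; gcongr
  have h4 : 0 ≤ A * ‖z‖ ^ 2 := by positivity
  have h5 := hC.Cq_eq
  have h6 := hC.Mq_eq
  unfold qf
  refine ⟨?_, ?_, ?_⟩ <;> linarith

end

/-! ### The two-point function -/

/-- The two-point function whose nonnegativity expresses a quantitative midpoint concavity
of `√v`. -/
def Zf (A Cq δ : ℝ) (f v : E2 → ℝ) (x y : E2) : ℝ :=
  v ((1 / 2 : ℝ) • (x + y)) - ((√(v x) + √(v y)) / 2) ^ 2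
    - δ * qf A Cq f ((1 / 2 : ℝ) • (x + y)) * ‖x - y‖ ^ 2

lemma Zf_comm (A Cq δ : ℝ) (f v : E2 → ℝ) (x y : E2) : Zf A Cq δ f v x y = Zf A Cq δ f v y x := by
  unfold Zf
  rw [add_comm x y, add_comm (√(v x)), norm_sub_rev]

section
variable {R L c t0 A Q B c0 d c2 Cq Mq k M δ ε h : ℝ} {f v : E2 → ℝ} {U : Set E2}

lemma Good.mid_mem (hG : Good f R L c t0 U) {x y : E2} (hx : x ∈ closure U) (hy : y ∈ closure U) :
    (1 / 2 : ℝ) • (x + y) ∈ closure U := by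
  rw [smul_add]
  exact hG.conv.closure hx hy (by norm_num) (by norm_num) (by norm_num)

lemma Good.frontier_nonempty (hG : Good f R L c t0 U) (hU : U.Nonempty) :
    (frontier U).Nonempty := by
  by_contra hne
  rw [Set.not_nonempty_iff_eq_empty] at hne
  have h1 : U = univ := (isClopen_iff_frontier_eq_empty.2 hne).eq_univ hU
  have h2 := hG.bdd (EuclideanSpace.single 0 (|R| + 1)) (by rw [h1]; simp)
  rw [PiLp.norm_single, Real.norm_eq_abs, abs_of_pos (by positivity)] at h2
  linarith [le_abs_self R]

/-- Where the two-point function is negative, the mean `m` of `√v` at the two points dominates both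
their distance and the square root of the depth of the midpoint; in particular the points differ. -/
lemma step_a (hC : Consts R L c t0 A Q B c0 d c2 Cq Mq k M δ ε) (hG : Good f R L c t0 U)
    (hv : IsSol U h v) (hh1 : h ^ 2 ≤ 1) {x y : E2} (hx : x ∈ closure U) (hy : y ∈ closure U)
    (hZ : Zf A Cq δ f v x y < 0) :
    0 < (√(v x) + √(v y)) / 2 ∧ d * ‖x - y‖ ^ 2 ≤ 2 * ((√(v x) + √(v y)) / 2) ^ 2 ∧
      c0 * (-f ((1 / 2 : ℝ) • (x + y))) ≤ 2 * ((√(v x) + √(v y)) / 2) ^ 2 ∧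
      c * ‖x - y‖ ^ 2 ≤ -f ((1 / 2 : ℝ) • (x + y)) ∧ 0 < ‖x - y‖ ^ 2 := by
  have hz := hG.mid_mem hx hy
  have hlb := lower_bound hG hv hC.L1 hh1 _ hz
  rw [← hC.c0_eq] at hlb
  have hmid := hG.mid x hx y hy
  obtain ⟨-, -, hq⟩ := q_bounds hC hG hz
  have hL1 := hC.L1
  have hc0 : 0 < c0 := by rw [hC.c0_eq]; positivity
  have hr : x ≠ y := by
    rintro rfl
    have e : (1 / 2 : ℝ) • (x + x) = x := by module
    have h0 := Real.sq_sqrt (nonneg_sol hG hv hC.L1 hh1 hx)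
    unfold Zf at hZ
    rw [e] at hZ
    simp at hZ
    linarith
  have hr' : 0 < ‖x - y‖ ^ 2 := by
    have := norm_pos_iff.2 (sub_ne_zero.2 hr); positivity
  unfold Zf at hZ
  have hw1 := Real.sqrt_nonneg (v x)
  have hw2 := Real.sqrt_nonneg (v y)
  generalize ‖x - y‖ ^ 2 = r2 at *
  generalize qf A Cq f ((1 / 2 : ℝ) • (x + y)) = q at *
  generalize f ((1 / 2 : ℝ) • (x + y)) = fz at *
  generalize v ((1 / 2 : ℝ) • (x + y)) = vz at *
  have hδ := hC.δ_pos
  have hd : d * r2 ≤ c0 * -fz := by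
    rw [hC.d_eq, mul_assoc]; gcongr
  have h1 : 2 * (δ * q * r2) ≤ d * r2 := by
    have : 2 * δ * q ≤ d := le_trans (by gcongr) hC.δ_d
    nlinarith
  have hcr := mul_pos hC.c_pos hr'
  have hcc := mul_pos hc0 (by linarith : 0 < -fz)
  have hm2 : 0 < ((√(v x) + √(v y)) / 2) ^ 2 := by linarith
  refine ⟨?_, by linarith, by linarith, hmid, hr'⟩
  rcases (by positivity : 0 ≤ (√(v x) + √(v y)) / 2).eq_or_lt with h0 | h0
  · rw [← h0] at hm2; norm_num at hm2
  · exact h0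

/-- At a negative minimum the values of `√v` at the two points are comparable. Otherwise the point
with the smaller value could be moved inwards, a distance of order `k² v x`, decreasing the
two-point function. In particular neither point lies on the boundary. -/
lemma step_b (hC : Consts R L c t0 A Q B c0 d c2 Cq Mq k M δ ε) (hG : Good f R L c t0 U)
    (hv : IsSol U h v) (hh1 : h ^ 2 ≤ 1) (hh : 256 * R ^ 2 * h ^ 2 ≤ 1)
    {x y : E2} (hx : x ∈ closure U) (hy : y ∈ closure U) (hZ : Zf A Cq δ f v x y < 0)
    (hmin : ∀ y' ∈ closure U, Zf A Cq δ f v x y ≤ Zf A Cq δ f v x y')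
    (hle : √(v y) ≤ √(v x)) : d * k / 2 * √(v x) ≤ √(v y) := by
  obtain ⟨hm, hdr, -, -, hr⟩ := step_a hC hG hv hh1 hx hy hZ
  by_contra hcon
  push Not at hcon
  have hR1 := hC.R1
  have hL1 := hC.L1
  have hcp := hC.c_pos
  have hkp := hC.k_pos
  have hδ := hC.δ_pos
  have hc0 : 0 < c0 := by rw [hC.c0_eq]; positivity
  have hd : 0 < d := by rw [hC.d_eq]; positivity
  have hd1 : d ≤ 1 := by
    have : c0 ≤ 1 := by
      rw [hC.c0_eq, div_le_one (by positivity)]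
      nlinarith [one_le_pow₀ hL1 (n := 3)]
    rw [hC.d_eq]; nlinarith [hC.c_le]
  have hvx0 := nonneg_sol hG hv hL1 hh1 hx
  have hvx : √(v x) ^ 2 = v x := Real.sq_sqrt hvx0
  have hvb : v x ≤ 16 * R ^ 2 := by
    obtain ⟨b, hb⟩ := hG.frontier_nonempty (by rw [← closure_nonempty_iff]; exact ⟨x, hx⟩)
    have h1 := upper_bound hG hv (by linarith) hh x hx b hb
    have h2 : ‖x - b‖ ≤ 2 * R := (norm_sub_le _ _).trans (by
      linarith [hG.bdd x hx, hG.bdd b hb.1])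
    have : 8 * R * ‖x - b‖ ≤ 8 * R * (2 * R) := by gcongr
    linarith
  have ht0 : 0 ≤ k ^ 2 * v x := by positivity
  have htt : k ^ 2 * v x ≤ t0 := by
    have h1 : k ^ 2 ≤ k := by nlinarith [hC.k_le]
    calc k ^ 2 * v x ≤ k * (16 * R ^ 2) := by gcongr
      _ = 16 * R ^ 2 * k := by ring
      _ ≤ t0 := hC.k_t
  obtain ⟨y', hy', hyd, hyf⟩ := hG.inward y hy _ ht0 htt
  have hm' := hmin y' hy'
  have hz := hG.mid_mem hx hy
  have hz' := hG.mid_mem hx hy'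
  have hlb := lower_bound hG hv hL1 hh1 _ hy'
  rw [← hC.c0_eq] at hlb
  have hlip := lipschitz_sol hG hv hL1 (by linarith) hh1 hh _ hz _ hz'
  have hzz : ‖(1 / 2 : ℝ) • (x + y) - (1 / 2 : ℝ) • (x + y')‖ ≤ L * (k ^ 2 * v x) / 2 := by
    have e : (1 / 2 : ℝ) • (x + y) - (1 / 2 : ℝ) • (x + y') = (-(1 / 2) : ℝ) • (y' - y) := by module
    rw [e, norm_smul]; norm_num; linarith
  obtain ⟨-, -, hq⟩ := q_bounds hC hG hz
  obtain ⟨hq', -, -⟩ := q_bounds hC hG hz'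
  have hlip' : v ((1 / 2 : ℝ) • (x + y')) - v ((1 / 2 : ℝ) • (x + y))
      ≤ 8 * R * (L * (k ^ 2 * v x) / 2) :=
    (le_abs_self _).trans (hlip.trans (by gcongr))
  have hpos' : 0 ≤ δ * qf A Cq f ((1 / 2 : ℝ) • (x + y')) * ‖x - y'‖ ^ 2 := by positivity
  have hwy' : d * k * √(v x) ≤ √(v y') := by
    refine Real.le_sqrt_of_sq_le ?_
    have h1 : d * k ^ 2 * v x ≤ v y' := by
      refine le_trans (le_trans (le_of_eq ?_) (mul_le_mul_of_nonneg_left hyf hc0.le)) hlb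
      rw [hC.d_eq]; ring
    calc (d * k * √(v x)) ^ 2 = d * (d * k ^ 2 * v x) := by
          linear_combination d ^ 2 * k ^ 2 * hvx
      _ ≤ 1 * (d * k ^ 2 * v x) := by gcongr
      _ ≤ _ := by linarith
  unfold Zf at hm'
  have hw0 := Real.sqrt_nonneg (v y)
  have hδr : δ * qf A Cq f ((1 / 2 : ℝ) • (x + y)) * ‖x - y‖ ^ 2 ≤ δ * Mq * ‖x - y‖ ^ 2 := by
    gcongr
  have hδk := hC.δ_k
  have hkd := hC.k_d
  rw [← hvx] at hlip'
  clear hZ hmin hvb ht0 htt hyd hyf hlb hlip hzz hq hq' hh hh1 hvx0 hvx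
  generalize √(v x) = a at *
  generalize √(v y) = b at *
  generalize √(v y') = b' at *
  generalize ‖x - y‖ ^ 2 = r2 at *
  generalize δ * qf A Cq f ((1 / 2 : ℝ) • (x + y')) * ‖x - y'‖ ^ 2 = T' at *
  generalize δ * qf A Cq f ((1 / 2 : ℝ) • (x + y)) * r2 = T at *
  generalize v ((1 / 2 : ℝ) • (x + y)) = vz at *
  generalize v ((1 / 2 : ℝ) • (x + y')) = vz' at *
  have ha : 0 < a := by linarith
  have hdk : 0 < d * k := by positivity
  have hba : 0 < d * k * a := by positivity
  -- moving `y` inwards raises `m²` by more than the other terms can compensate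
  have g1 : d * k * a ^ 2 / 4 ≤ ((a + b') / 2) ^ 2 - ((a + b) / 2) ^ 2 := by
    have e : ((a + b') / 2) ^ 2 - ((a + b) / 2) ^ 2 = (b' - b) / 2 * ((a + b' + a + b) / 2) := by ring
    have h1 : d * k * a / 4 ≤ (b' - b) / 2 := by linarith only [hcon, hwy']
    have h2 : a ≤ (a + b' + a + b) / 2 := by linarith only [hw0, hwy', hba]
    have := mul_le_mul h1 h2 ha.le (by linarith only [h1, hba])
    rw [e]; linarith only [this]
  have g2 : 8 * R * (L * (k ^ 2 * a ^ 2) / 2) ≤ d * k * a ^ 2 / 16 := by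
    have := mul_le_mul_of_nonneg_right hkd (by positivity : 0 ≤ k * a ^ 2)
    linarith only [this]
  have g3 : d * (δ * Mq * r2) ≤ d * (d * k * a ^ 2 / 16) := by
    have h0 : 0 ≤ δ * Mq := by
      have := hC.Mq_eq
      have h2 := hC.Cq_eq
      have hA : 0 < A := by rw [hC.A_eq]; positivity
      have hc2 : 0 < c2 := by rw [hC.c2_eq]; positivity
      have : 0 ≤ Mq := by rw [this, h2]; positivity
      positivity
    have h1 : ((a + b) / 2) ^ 2 ≤ a ^ 2 := by gcongr; linarith only [hle]
    have h2 : d * r2 ≤ 2 * a ^ 2 := by linarith only [hdr, h1]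
    have h3 := mul_le_mul_of_nonneg_left h2 h0
    have h4 := mul_le_mul_of_nonneg_right hδk (by positivity : 0 ≤ a ^ 2)
    linarith only [h3, h4]
  have g4 := le_of_mul_le_mul_left g3 hd
  have g5 : 0 < d * k * a ^ 2 := by positivity
  linarith only [g1, g2, g4, g5, hm', hlip', hpos', hδr]

end

/-! ### The maximum principle at an interior minimum -/

/-- Second order expansion of the two-point function along lines in the product space. -/
lemma Zf_T2 {A Cq δ : ℝ} {f v : E2 → ℝ} {x y : E2}
    {P1 P2 A11 A12 A22 x1 x2 X11 X12 X22 y1 y2 Y11 Y12 Y22 q1 q2 q11 q12 q22 : ℝ}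
    (hz : Jet v ((1 / 2 : ℝ) • (x + y)) P1 P2 A11 A12 A22)
    (hx : Jet (fun x => √(v x)) x x1 x2 X11 X12 X22)
    (hy : Jet (fun x => √(v x)) y y1 y2 Y11 Y12 Y22)
    (hq : Jet (qf A Cq f) ((1 / 2 : ℝ) • (x + y)) q1 q2 q11 q12 q22) (ξ η : E2) :
    T2 (fun τ => Zf A Cq δ f v (x + τ • ξ) (y + τ • η)) (Zf A Cq δ f v x y)
      (P1 * ((ξ 0 + η 0) / 2) + P2 * ((ξ 1 + η 1) / 2)
        - (√(v x) + √(v y)) / 2 * (x1 * ξ 0 + x2 * ξ 1 + y1 * η 0 + y2 * η 1)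
        - δ * (qf A Cq f ((1 / 2 : ℝ) • (x + y)) * (2 * ((x 0 - y 0) * (ξ 0 - η 0)
            + (x 1 - y 1) * (ξ 1 - η 1)))
          + ((x 0 - y 0) ^ 2 + (x 1 - y 1) ^ 2)
            * (q1 * ((ξ 0 + η 0) / 2) + q2 * ((ξ 1 + η 1) / 2))))
      (((A11 * ((ξ 0 + η 0) / 2) ^ 2 + 2 * A12 * ((ξ 0 + η 0) / 2) * ((ξ 1 + η 1) / 2)
        + A22 * ((ξ 1 + η 1) / 2) ^ 2)
      - (√(v x) + √(v y)) / 2 * (X11 * ξ 0 ^ 2 + 2 * X12 * ξ 0 * ξ 1 + X22 * ξ 1 ^ 2)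
      - (√(v x) + √(v y)) / 2 * (Y11 * η 0 ^ 2 + 2 * Y12 * η 0 * η 1 + Y22 * η 1 ^ 2)
      - (x1 * ξ 0 + x2 * ξ 1 + y1 * η 0 + y2 * η 1) ^ 2 / 2
      - δ * (2 * qf A Cq f ((1 / 2 : ℝ) • (x + y)) * ((ξ 0 - η 0) ^ 2 + (ξ 1 - η 1) ^ 2)
        + ((x 0 - y 0) ^ 2 + (x 1 - y 1) ^ 2) * (q11 * ((ξ 0 + η 0) / 2) ^ 2
          + 2 * q12 * ((ξ 0 + η 0) / 2) * ((ξ 1 + η 1) / 2) + q22 * ((ξ 1 + η 1) / 2) ^ 2)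
        + 4 * ((x 0 - y 0) * (ξ 0 - η 0) + (x 1 - y 1) * (ξ 1 - η 1))
          * (q1 * ((ξ 0 + η 0) / 2) + q2 * ((ξ 1 + η 1) / 2)))) / 2) := by
  have hr : T2 (fun τ : ℝ => ‖x + τ • ξ - (y + τ • η)‖ ^ 2) (‖x - y‖ ^ 2)
      (2 * ((x 0 - y 0) * (ξ 0 - η 0) + (x 1 - y 1) * (ξ 1 - η 1)))
      ((ξ 0 - η 0) ^ 2 + (ξ 1 - η 1) ^ 2) := by
    refine (T2.poly _ _ _).congr fun τ => ?_
    simp only [norm_sq2, PiLp.add_apply, PiLp.smul_apply, PiLp.sub_apply, smul_eq_mul]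
    ring
  have hm := ((hx ξ).add (hy η)).const_mul (1 / 2)
  have hall := ((hz ((1 / 2 : ℝ) • (ξ + η))).sub (hm.mul hm)).sub
    (((hq ((1 / 2 : ℝ) • (ξ + η))).mul hr).const_mul δ)
  refine (hall.congr ?_).of_eq ?_ ?_ ?_
  · intro τ
    have e : (1 / 2 : ℝ) • (x + τ • ξ + (y + τ • η))
        = (1 / 2 : ℝ) • (x + y) + τ • ((1 / 2 : ℝ) • (ξ + η)) := by module
    unfold Zf
    rw [e]; ring
  · unfold Zf; ring
  · simp only [norm_sq2, PiLp.add_apply, PiLp.smul_apply, PiLp.sub_apply, smul_eq_mul]; ring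
  · simp only [norm_sq2, PiLp.add_apply, PiLp.smul_apply, PiLp.sub_apply, smul_eq_mul]; ring

section
variable {R L c t0 A Q B c0 d c2 Cq Mq k M δ ε h : ℝ} {f v : E2 → ℝ} {U : Set E2}

/-- The equation satisfied by `w = √v`, expressed through the derivatives of `v`. -/
lemma sqrt_pde {v1 v2 v11 v12 v22 h w θ : ℝ} (hw : 0 < w)
    (hpde : v11 * (1 + h ^ 2 * v2 ^ 2) - 2 * v12 * (h ^ 2 * v1 * v2) + v22 * (1 + h ^ 2 * v1 ^ 2)
        = -2 * θ) :
    w * ((v11 / (2 * w) - v1 ^ 2 / (4 * w ^ 3)) * (1 + h ^ 2 * v2 ^ 2)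
      - 2 * (v12 / (2 * w) - v1 * v2 / (4 * w ^ 3)) * (h ^ 2 * v1 * v2)
      + (v22 / (2 * w) - v2 ^ 2 / (4 * w ^ 3)) * (1 + h ^ 2 * v1 ^ 2))
      = -(θ + ((v1 / (2 * w)) ^ 2 + (v2 / (2 * w)) ^ 2)) := by
  field_simp
  linear_combination 8 * w ^ 2 * hpde

set_option maxHeartbeats 4000000 in
/-- The maximum principle at an interior negative minimum of the two-point function. With
`w = √v` and `m` the mean of `w x` and `w y`, put `w x = (1 + t) m` and `w y = (1 - t) m`. The first
order conditions read `m Dw(x) = g - k`, `m Dw(y) = g + k` and `Dv(z) = 2 g + e`, where the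
perturbations `k = 2 δ q (x - y)` and `e = δ |x - y|² Dq(z)` come from the weight. -/
lemma step_c (hC : Consts R L c t0 A Q B c0 d c2 Cq Mq k M δ ε) (hG : Good f R L c t0 U)
    (hv : IsSol U h v) (hh : h ^ 2 ≤ ε ^ 2)
    {x y : E2} (hx : x ∈ U) (hy : y ∈ U) (hZ : Zf A Cq δ f v x y < 0)
    (hmin : ∀ x' ∈ closure U, ∀ y' ∈ closure U, Zf A Cq δ f v x y ≤ Zf A Cq δ f v x' y')
    (hwx : 0 < √(v x)) (hwy : 0 < √(v y))
    (hcmp : d * k / 2 * ((√(v x) + √(v y)) / 2) ^ 2 ≤ √(v x) * √(v y)) : False := by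
  have hR1 := hC.R1
  have hL1 := hC.L1
  have hcp := hC.c_pos
  have hδ := hC.δ_pos
  have hkp := hC.k_pos
  have hM1 := hC.M1
  have hc0 : 0 < c0 := by rw [hC.c0_eq]; positivity
  have hd : 0 < d := by rw [hC.d_eq]; positivity
  have hc2 : 0 < c2 := by rw [hC.c2_eq]; positivity
  have hA : 0 < A := by rw [hC.A_eq]; positivity
  have hQ : 0 < Q := by rw [hC.Q_eq]; positivity
  have hh1 : h ^ 2 ≤ 1 := hh.trans hC.ε_le
  have hhR : 256 * R ^ 2 * h ^ 2 ≤ 1 := le_trans (by gcongr) hC.ε_R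
  have hhk : 300 * M * h ^ 2 ≤ d * k / 2 := le_trans (by gcongr) hC.ε_k
  have hhM : 1000000 * M ^ 4 * h ^ 2 ≤ c2 * δ := le_trans (by gcongr) hC.ε_M
  obtain ⟨hm, -, hfz, hcr, hr⟩ := step_a hC hG hv hh1 (subset_closure hx) (subset_closure hy) hZ
  have hz : (1 / 2 : ℝ) • (x + y) ∈ U := by
    rw [smul_add]; exact hG.conv hx hy (by norm_num) (by norm_num) (by norm_num)
  obtain ⟨s, q1, q2, q11, q12, q22, hs0, hsL, hs2, hjq, hlap, hq11, hq12, hq22, hqg⟩ :=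
    q_jet hC hG hz
  obtain ⟨hqa, hqb, hqc⟩ := q_bounds hC hG (subset_closure hz)
  have hsq : s ^ 2 ≤ L := hs2.trans_le (hG.low _ (subset_closure hz))
  obtain ⟨u1, u2, u11, u12, u22, hju, hpu⟩ := hv.2.2 x hx
  obtain ⟨n1, n2, n11, n12, n22, hjn, hpn⟩ := hv.2.2 y hy
  obtain ⟨P1, P2, A11, A12, A22, hjz, hpz⟩ := hv.2.2 _ hz
  have hgz := gradient_bound hG hv hL1 (by linarith) hh1 hhR hz hjz
  have hvx : v x = √(v x) ^ 2 := (Real.sq_sqrt (Real.sqrt_pos.1 hwx).le).symm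
  have hvy : v y = √(v y) ^ 2 := (Real.sq_sqrt (Real.sqrt_pos.1 hwy).le).symm
  have hjx := hju.sqrt hwx hvx
  have hjy := hjn.sqrt hwy hvy
  have hxx := sqrt_pde hwx hpu
  have hyy := sqrt_pde hwy hpn
  have hL : ∀ ξ η : E2, ∀ᶠ τ : ℝ in 𝓝 0, Zf A Cq δ f v (x + (0:ℝ) • ξ) (y + (0:ℝ) • η)
      ≤ Zf A Cq δ f v (x + τ • ξ) (y + τ • η) := by
    intro ξ η
    filter_upwards [(tendsto_line x ξ).eventually_mem (hG.isOpen.mem_nhds hx),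
      (tendsto_line y η).eventually_mem (hG.isOpen.mem_nhds hy)] with τ a b
    simpa using hmin _ (subset_closure a) _ (subset_closure b)
  have hT := fun x1 x2 y1 y2 : ℝ =>
    (Zf_T2 (δ := δ) hjz hjx hjy hjq !₂[x1, x2] !₂[y1, y2]).local_min
      (hL !₂[x1, x2] !₂[y1, y2])
  simp only [Matrix.cons_val_zero, Matrix.cons_val_one] at hT
  rw [norm_sq2] at hcr hr
  simp only [PiLp.sub_apply] at hcr hr
  rw [← hs2] at hfz hcr
  have hRR : (x 0 - y 0) ^ 2 + (x 1 - y 1) ^ 2 ≤ 4 * R ^ 2 := by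
    have h1 : ‖x - y‖ ≤ 2 * R := (norm_sub_le _ _).trans (by
      linarith [hG.bdd x (subset_closure hx), hG.bdd y (subset_closure hy)])
    have h2 : ‖x - y‖ ^ 2 ≤ (2 * R) ^ 2 := by gcongr
    rw [norm_sq2] at h2
    simp only [PiLp.sub_apply] at h2
    linarith
  clear hZ hmin hju hjn hjz hjx hjy hjq hL hvx hvy hpu hpn hh hG hv hx hy hz hs2
  generalize qf A Cq f ((1 / 2 : ℝ) • (x + y)) = q at *
  generalize √(v x) = wx at *
  generalize √(v y) = wy at *
  generalize x 0 - y 0 = l1 at *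
  generalize x 1 - y 1 = l2 at *
  obtain ⟨m, hmd⟩ : ∃ m, m = (wx + wy) / 2 := ⟨_, rfl⟩
  obtain ⟨t, htd⟩ : ∃ t, t = (wx - wy) / (wx + wy) := ⟨_, rfl⟩
  rw [← hmd] at hm hfz hcmp
  simp only [← hmd] at hT
  have hwxm : (1 + t) * m = wx := by rw [htd, hmd]; field_simp; ring
  have hwym : (1 - t) * m = wy := by rw [htd, hmd]; field_simp; ring
  have ht1 : 0 < 1 + t := by
    by_contra hcon; push Not at hcon; nlinarith only [hcon, hm, hwxm, hwx]
  have ht2 : 0 < 1 - t := by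
    by_contra hcon; push Not at hcon; nlinarith only [hcon, hm, hwym, hwy]
  have htabs : |t| < 1 := abs_lt.2 ⟨by linarith only [ht1], by linarith only [ht2]⟩
  have hab : d * k / 2 ≤ (1 + t) * (1 - t) := by
    rw [← hwxm, ← hwym] at hcmp
    have : d * k / 2 * m ^ 2 ≤ (1 + t) * (1 - t) * m ^ 2 := by linarith only [hcmp]
    exact le_of_mul_le_mul_right this (by positivity)
  obtain ⟨r2, hr2⟩ : ∃ r2, r2 = l1 ^ 2 + l2 ^ 2 := ⟨_, rfl⟩
  rw [← hr2] at hr hcr hRR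
  obtain ⟨k1, hk1⟩ : ∃ k1, k1 = 2 * δ * q * l1 := ⟨_, rfl⟩
  obtain ⟨k2, hk2⟩ : ∃ k2, k2 = 2 * δ * q * l2 := ⟨_, rfl⟩
  obtain ⟨e1, he1⟩ : ∃ e1, e1 = δ * r2 * q1 := ⟨_, rfl⟩
  obtain ⟨e2, he2⟩ : ∃ e2, e2 = δ * r2 * q2 := ⟨_, rfl⟩
  obtain ⟨g1, hg1⟩ : ∃ g1, g1 = (P1 - e1) / 2 := ⟨_, rfl⟩
  obtain ⟨g2, hg2⟩ : ∃ g2, g2 = (P2 - e2) / 2 := ⟨_, rfl⟩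
  obtain ⟨μ, hμ⟩ : ∃ μ, μ = m⁻¹ := ⟨_, rfl⟩
  have hμm : μ * m = 1 := by rw [hμ]; exact inv_mul_cancel₀ hm.ne'
  have hμp : 0 < μ := by rw [hμ]; positivity
  -- first order conditions, from the four coordinate directions of the product space
  have F1 := (hT 1 0 0 0).1
  have F2 := (hT 0 1 0 0).1
  have F3 := (hT 0 0 1 0).1
  have F4 := (hT 0 0 0 1).1
  rw [← hr2] at F1 F2 F3 F4
  have f1 : u1 / (2 * wx) = μ * (g1 - k1) := by
    have : m * (u1 / (2 * wx)) = g1 - k1 := by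
      rw [hg1, hk1, he1]; linear_combination -F1
    rw [← this, ← mul_assoc, hμm, one_mul]
  have f2 : u2 / (2 * wx) = μ * (g2 - k2) := by
    have : m * (u2 / (2 * wx)) = g2 - k2 := by
      rw [hg2, hk2, he2]; linear_combination -F2
    rw [← this, ← mul_assoc, hμm, one_mul]
  have f3 : n1 / (2 * wy) = μ * (g1 + k1) := by
    have : m * (n1 / (2 * wy)) = g1 + k1 := by
      rw [hg1, hk1, he1]; linear_combination -F3
    rw [← this, ← mul_assoc, hμm, one_mul]
  have f4 : n2 / (2 * wy) = μ * (g2 + k2) := by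
    have : m * (n2 / (2 * wy)) = g2 + k2 := by
      rw [hg2, hk2, he2]; linear_combination -F4
    rw [← this, ← mul_assoc, hμm, one_mul]
  have solve : ∀ {w p g s : ℝ}, 0 < w → s * m = w → p / (2 * w) = μ * g → p = 2 * s * g := by
    intro w p g s hw hs hp
    rw [div_eq_iff (by positivity)] at hp
    rw [hp, ← hs]; linear_combination 2 * g * s * hμm
  have eu1 := solve hwx hwxm f1
  have eu2 := solve hwx hwxm f2
  have en1 := solve hwy hwym f3
  have en2 := solve hwy hwym f4
  have eP1 : P1 = 2 * g1 + e1 := by rw [hg1]; ring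
  have eP2 : P2 = 2 * g2 + e2 := by rw [hg2]; ring
  have hS2 := fun x1 x2 y1 y2 => (hT x1 x2 y1 y2).2
  simp only [f1, f2, f3, f4] at hS2 hxx hyy
  clear hT F1 F2 F3 F4
  generalize u11 / (2 * wx) - u1 ^ 2 / (4 * wx ^ 3) = X11 at *
  generalize u12 / (2 * wx) - u1 * u2 / (4 * wx ^ 3) = X12 at *
  generalize u22 / (2 * wx) - u2 ^ 2 / (4 * wx ^ 3) = X22 at *
  generalize n11 / (2 * wy) - n1 ^ 2 / (4 * wy ^ 3) = Y11 at *
  generalize n12 / (2 * wy) - n1 * n2 / (4 * wy ^ 3) = Y12 at *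
  generalize n22 / (2 * wy) - n2 ^ 2 / (4 * wy ^ 3) = Y22 at *
  clear f1 f2 f3 f4 solve
  rw [eP1, eP2] at hpz hgz
  rw [← hwxm, eu1, eu2] at hxx
  rw [← hwym, en1, en2] at hyy
  clear eu1 eu2 en1 en2 eP1 eP2 hg1 hg2
  obtain ⟨E0, hE0d⟩ : ∃ E0, E0 = δ * r2 * Q / s := ⟨_, rfl⟩
  have hE0 : 0 ≤ E0 := by rw [hE0d]; positivity
  have he : e1 ^ 2 + e2 ^ 2 ≤ E0 ^ 2 := by
    have : E0 ^ 2 = (δ * r2) ^ 2 * (Q ^ 2 / s ^ 2) := by rw [hE0d]; field_simp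
    rw [this, he1, he2]
    have h1 : q1 ^ 2 + q2 ^ 2 ≤ Q ^ 2 / s ^ 2 := by
      rw [le_div_iff₀ (by positivity)]; linarith only [hqg]
    have := mul_le_mul_of_nonneg_left h1 (sq_nonneg (δ * r2))
    linarith only [this]
  have hE1 : E0 ≤ 1 := by
    rw [hE0d, div_le_one hs0]
    have h1 : δ * Q * (c * r2) ≤ δ * Q * s ^ 2 := by gcongr
    have h2 : δ * Q * s * s ≤ c * s := by
      have : δ * Q * s ≤ c := le_trans (by gcongr) hC.δ_Q
      gcongr
    have h3 : c * (δ * r2 * Q) ≤ c * s := by linarith only [h1, h2]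
    exact le_of_mul_le_mul_left h3 hcp
  have hkk : k1 ^ 2 + k2 ^ 2 = 4 * δ ^ 2 * q ^ 2 * r2 := by rw [hk1, hk2, hr2]; ring
  have hq0 : 0 ≤ q := by linarith only [hqa]
  have hMq0 : 0 ≤ Mq := by linarith only [hqa, hqc]
  have hqq : q ^ 2 ≤ Mq ^ 2 := by gcongr
  have hk : k1 ^ 2 + k2 ^ 2 ≤ 1 := by
    rw [hkk]
    have h1 : 4 * δ ^ 2 * q ^ 2 * r2 ≤ 4 * δ ^ 2 * Mq ^ 2 * (4 * R ^ 2) := by gcongr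
    have h2 : (4 * δ * Mq * R) ^ 2 ≤ 1 := pow_le_one₀ (by positivity) hC.δ_R
    linarith only [h1, h2]
  -- `δ S` is the size of the good term `δ |x - y|² Δq`, against which all errors are measured
  obtain ⟨S, hS⟩ : ∃ S, S = r2 / s ^ 3 := ⟨_, rfl⟩
  have hSp : 0 < S := by rw [hS]; positivity
  have hSs : S * s ^ 3 = r2 := by rw [hS]; field_simp
  have hg : g1 ^ 2 + g2 ^ 2 ≤ M := by
    have h1 : E0 ^ 2 ≤ 1 := pow_le_one₀ hE0 hE1
    have h2 := hC.M_R
    nlinarith only [h1, h2, he, hgz, sq_nonneg (2 * g1 + e1 + e1), sq_nonneg (2 * g2 + e2 + e2)]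
  have hk' : k1 ^ 2 + k2 ^ 2 ≤ M * (δ ^ 2 * S) := by
    rw [hkk, ← hSs]
    have h1 : 4 * q ^ 2 * s ^ 3 ≤ M := le_trans (by gcongr) hC.M_qL
    have := mul_le_mul_of_nonneg_right h1 (by positivity : 0 ≤ δ ^ 2 * S)
    linarith only [this]
  have hE0S : E0 = δ * Q * s ^ 2 * S := by rw [hE0d, ← hSs]; field_simp
  have hsL' : s ^ 2 ≤ L ^ 2 := by gcongr
  have hμf : c0 * (μ ^ 2 * s ^ 2) ≤ 2 := by
    have := mul_le_mul_of_nonneg_left hfz (sq_nonneg μ)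
    have e : μ ^ 2 * (2 * m ^ 2) = 2 := by linear_combination 2 * (μ * m + 1) * hμm
    linarith only [this, e]
  have hE' : E0 ≤ M * (δ * S) := by
    rw [hE0S]
    have h1 : Q * s ^ 2 ≤ M := le_trans (by gcongr) hC.M_QL
    have := mul_le_mul_of_nonneg_right h1 (by positivity : 0 ≤ δ * S)
    linarith only [this]
  have hμk : μ ^ 2 * (k1 ^ 2 + k2 ^ 2) ≤ M * (δ ^ 2 * S) := by
    rw [hkk, ← hSs]
    have h2 : c0 * (4 * q ^ 2 * s * (μ ^ 2 * s ^ 2)) ≤ c0 * M := by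
      have a1 : 4 * q ^ 2 * s ≤ 4 * Mq ^ 2 * L := by gcongr
      have a2 := mul_le_mul a1 hμf (by positivity) (by positivity)
      linarith only [a2, hC.M_qc]
    have h1 := le_of_mul_le_mul_left h2 hc0
    have := mul_le_mul_of_nonneg_right h1 (by positivity : 0 ≤ δ ^ 2 * S)
    linarith only [this]
  have hμE : μ ^ 2 * E0 ≤ M * (δ * S) := by
    rw [hE0S]
    have h2 : c0 * (Q * (μ ^ 2 * s ^ 2)) ≤ c0 * M := by
      have a2 := mul_le_mul_of_nonneg_left hμf hQ.le
      linarith only [a2, hC.M_Qc]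
    have h1 := le_of_mul_le_mul_left h2 hc0
    have := mul_le_mul_of_nonneg_right h1 (by positivity : 0 ≤ δ * S)
    linarith only [this]
  have hrS : ∀ a, (l1 ^ 2 + l2 ^ 2) * a = S * (s ^ 3 * a) := by
    intro a; rw [← hr2, ← hSs]; ring
  have hijs : ∀ a, |s ^ 3 * a| ≤ B → |(l1 ^ 2 + l2 ^ 2) * a| ≤ M * S := by
    intro a ha
    rw [hrS, abs_mul, abs_of_pos hSp, mul_comm]
    gcongr
    exact ha.trans hC.M_B
  have hDq : (l1 ^ 2 + l2 ^ 2) * (q1 ^ 2 + q2 ^ 2) ≤ c2 / 16 * (q * S) := by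
    have e : (l1 ^ 2 + l2 ^ 2) * (q1 ^ 2 + q2 ^ 2) = S * (s * (s ^ 2 * (q1 ^ 2 + q2 ^ 2))) := by
      rw [hrS]; ring
    rw [e]
    have h1 : s * (s ^ 2 * (q1 ^ 2 + q2 ^ 2)) ≤ L * Q ^ 2 := by gcongr
    have h2 : 16 * Q ^ 2 * L ≤ q * c2 := by rwa [div_le_iff₀ hc2] at hqb
    have h3 : s * (s ^ 2 * (q1 ^ 2 + q2 ^ 2)) ≤ c2 / 16 * q := by linarith only [h1, h2]
    have := mul_le_mul_of_nonneg_left h3 hSp.le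
    linarith only [this]
  have hlap' : c2 * S ≤ (l1 ^ 2 + l2 ^ 2) * (q11 + q22) := by
    rw [hrS, mul_comm]; gcongr
  have yy : ∀ a : ℝ, 0 ≤ a → √(1 + h ^ 2 * a) ^ 2 = 1 + h ^ 2 * a := fun a ha =>
    Real.sq_sqrt (by positivity)
  have hrx := yy ((2 * (1 + t) * (g1 - k1)) ^ 2 + (2 * (1 + t) * (g2 - k2)) ^ 2) (by positivity)
  have hry := yy ((2 * (1 - t) * (g1 + k1)) ^ 2 + (2 * (1 - t) * (g2 + k2)) ^ 2) (by positivity)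
  have hrz := yy ((2 * g1 + e1) ^ 2 + (2 * g2 + e2) ^ 2) (by positivity)
  have px := Real.sqrt_nonneg
    (1 + h ^ 2 * ((2 * (1 + t) * (g1 - k1)) ^ 2 + (2 * (1 + t) * (g2 - k2)) ^ 2))
  have py := Real.sqrt_nonneg
    (1 + h ^ 2 * ((2 * (1 - t) * (g1 + k1)) ^ 2 + (2 * (1 - t) * (g2 + k2)) ^ 2))
  have pz := Real.sqrt_nonneg (1 + h ^ 2 * ((2 * g1 + e1) ^ 2 + (2 * g2 + e2) ^ 2))
  generalize √(1 + h ^ 2 * ((2 * (1 + t) * (g1 - k1)) ^ 2 + (2 * (1 + t) * (g2 - k2)) ^ 2))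
    = yx at hxx hrx px
  generalize √(1 + h ^ 2 * ((2 * (1 - t) * (g1 + k1)) ^ 2 + (2 * (1 - t) * (g2 + k2)) ^ 2))
    = yw at hyy hry py
  generalize √(1 + h ^ 2 * ((2 * g1 + e1) ^ 2 + (2 * g2 + e2) ^ 2)) = yz at hpz hrz pz
  have main := core_ineq A11 A12 A22 X11 X12 X22 Y11 Y12 Y22 q q1 q2 q11 q12 q22 l1 l2 m μ δ t
    g1 g2 k1 k2 e1 e2 M E0 (h ^ 2) (50 * M * h ^ 2 * (k1 ^ 2 + k2 ^ 2 + E0))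
    (yx ^ 3) (yw ^ 3) (yz ^ 3)
    (by
      intro x1 x2 y1 y2
      have := hS2 x1 x2 y1 y2
      linarith only [this])
    (by linarith only [hpz]) (by linarith only [hxx]) (by linarith only [hyy])
    (hhk.trans hab) htabs hM1 hg hk he hE0 hE1
    (sq_nonneg h) rfl
  refine core_est q q1 q2 q11 q12 q22 l1 l2 μ δ t g1 g2 k1 k2 e1 e2 M E0 (h ^ 2)
    (50 * M * h ^ 2 * (k1 ^ 2 + k2 ^ 2 + E0)) yx yw yz S c2
    htabs.le hM1 hg hk he hE0 hE1 (sq_nonneg h) hh1 rfl (hrx.trans (by ring))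
    (hry.trans (by ring)) hrz px py pz hSp hc2 ?_ hδ hC.δ_le hqa (hqc.trans hC.M_q) hk' hE'
    hμk hμE hlap' (hijs _ hq11) (hijs _ hq12) (hijs _ hq22) hDq hC.δ_M hhM main
  · rw [hC.c2_eq]; linarith only [hC.c_le, hcp]

/-- Nonnegativity of the two-point function. -/
lemma two_point (hC : Consts R L c t0 A Q B c0 d c2 Cq Mq k M δ ε) (hG : Good f R L c t0 U)
    (hv : IsSol U h v) (hh : h ^ 2 ≤ ε ^ 2) :
    ∀ x ∈ closure U, ∀ y ∈ closure U, 0 ≤ Zf A Cq δ f v x y := by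
  intro x0 hx0 y0 hy0
  have hh1 : h ^ 2 ≤ 1 := hh.trans hC.ε_le
  have hR1 := hC.R1
  have hL1 := hC.L1
  have hcp := hC.c_pos
  have hhR : 256 * R ^ 2 * h ^ 2 ≤ 1 := le_trans (by gcongr) hC.ε_R
  have hmidc : ContinuousOn (fun p : E2 × E2 => (1 / 2 : ℝ) • (p.1 + p.2))
      (closure U ×ˢ closure U) := by fun_prop
  have hmaps : MapsTo (fun p : E2 × E2 => (1 / 2 : ℝ) • (p.1 + p.2)) (closure U ×ˢ closure U)
      (closure U) := fun p hp => hG.mid_mem hp.1 hp.2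
  have hv1 : ContinuousOn (fun p : E2 × E2 => v p.1) (closure U ×ˢ closure U) :=
    hv.1.comp continuousOn_fst fun p hp => hp.1
  have hv2 : ContinuousOn (fun p : E2 × E2 => v p.2) (closure U ×ˢ closure U) :=
    hv.1.comp continuousOn_snd fun p hp => hp.2
  have hvm : ContinuousOn (fun p : E2 × E2 => v ((1 / 2 : ℝ) • (p.1 + p.2)))
      (closure U ×ˢ closure U) := hv.1.comp hmidc hmaps
  have hqc : ContinuousOn (qf A Cq f) (closure U) := by
    have := hG.continuousOn
    unfold qf
    fun_prop
  have hqm : ContinuousOn (fun p : E2 × E2 => qf A Cq f ((1 / 2 : ℝ) • (p.1 + p.2)))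
      (closure U ×ˢ closure U) := hqc.comp hmidc hmaps
  have hcont : ContinuousOn (fun p : E2 × E2 => Zf A Cq δ f v p.1 p.2)
      (closure U ×ˢ closure U) := by
    unfold Zf
    exact (hvm.sub ((((Real.continuous_sqrt.comp_continuousOn hv1).add
      (Real.continuous_sqrt.comp_continuousOn hv2)).div_const 2).pow 2)).sub
      ((continuousOn_const.mul hqm).mul (by fun_prop))
  obtain ⟨⟨x, y⟩, ⟨hx, hy⟩, hm⟩ := (hG.compact.prod hG.compact).exists_isMinOn
    ⟨(x0, y0), hx0, hy0⟩ hcont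
  have hmin : ∀ x' ∈ closure U, ∀ y' ∈ closure U, Zf A Cq δ f v x y ≤ Zf A Cq δ f v x' y' :=
    fun x' hx' y' hy' => hm (show (x', y') ∈ closure U ×ˢ closure U from ⟨hx', hy'⟩)
  simp only at hx hy
  by_contra hcon
  push Not at hcon
  have hZ : Zf A Cq δ f v x y < 0 := (hmin x0 hx0 y0 hy0).trans_lt hcon
  have hkp := hC.k_pos
  have hdk : 0 < d * k / 2 := by
    have hc0 : 0 < c0 := by rw [hC.c0_eq]; positivity
    have hd : 0 < d := by rw [hC.d_eq]; positivity
    positivity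
  obtain ⟨hmp, -⟩ := step_a hC hG hv hh1 hx hy hZ
  have key : 0 < √(v x) ∧ 0 < √(v y) ∧
      d * k / 2 * ((√(v x) + √(v y)) / 2) ^ 2 ≤ √(v x) * √(v y) := by
    rcases le_total (√(v y)) (√(v x)) with hle | hle
    · have hb := step_b hC hG hv hh1 hhR hx hy hZ (fun y' hy' => hmin x hx y' hy') hle
      have hw : 0 < √(v x) := by linarith
      refine ⟨hw, lt_of_lt_of_le (by positivity) hb, ?_⟩
      have h1 : ((√(v x) + √(v y)) / 2) ^ 2 ≤ √(v x) ^ 2 := by gcongr; linarith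
      calc _ ≤ d * k / 2 * √(v x) ^ 2 := by gcongr
        _ = √(v x) * (d * k / 2 * √(v x)) := by ring
        _ ≤ _ := by gcongr
    · have hb := step_b hC hG hv hh1 hhR hy hx (by rwa [Zf_comm]) (fun y' hy' => by
        rw [Zf_comm, Zf_comm _ _ _ _ _ y]; exact hmin y' hy' y hy) hle
      have hw : 0 < √(v y) := by linarith
      refine ⟨lt_of_lt_of_le (by positivity) hb, hw, ?_⟩
      have h1 : ((√(v x) + √(v y)) / 2) ^ 2 ≤ √(v y) ^ 2 := by gcongr; linarith
      calc _ ≤ d * k / 2 * √(v y) ^ 2 := by gcongr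
        _ = (d * k / 2 * √(v y)) * √(v y) := by ring
        _ ≤ _ := by gcongr
  have hin : ∀ p ∈ closure U, 0 < √(v p) → p ∈ U := by
    intro p hp h0
    rcases hG.mem_or hp with h1 | h1
    · exact h1
    · rw [hv.2.1 p h1] at h0; simp at h0
  exact step_c hC hG hv hh (hin x hx key.1) (hin y hy key.2.1) hZ hmin key.1 key.2.1 key.2.2

end

/-- Uniform quantitative midpoint concavity of `√v` for small `h`. -/
theorem two_point_concavity {R L c t0 : ℝ} (hR : 1 ≤ R) (hL : 1 ≤ L) (hc : 0 < c) (hc1 : c ≤ 1)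
    (ht : 0 < t0) : ∃ ε > 0, ∃ δ > 0, ∀ f U, Good f R L c t0 U → ∀ h, 0 < h → h < ε →
      ∀ v, IsSol U h v → (∀ x ∈ U, 0 < v x) ∧ ∀ x ∈ closure U, ∀ y ∈ closure U,
        ((√(v x) + √(v y)) / 2) ^ 2 + δ * ‖x - y‖ ^ 2 ≤ v ((1 / 2 : ℝ) • (x + y)) := by
  obtain ⟨A, Q, B, c0, d, c2, Cq, Mq, k, M, δ, ε, hC⟩ := exists_consts hR hL hc hc1 ht
  refine ⟨ε, hC.ε_pos, δ, hC.δ_pos, fun f U hG h h0 hh v hv => ?_⟩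
  have hh2 : h ^ 2 ≤ ε ^ 2 := by gcongr
  refine ⟨fun x hx => ?_, fun x hx y hy => ?_⟩
  · refine lt_of_lt_of_le ?_ (lower_bound hG hv hL (hh2.trans hC.ε_le) x (subset_closure hx))
    have := hG.neg x hx
    have : 0 < -f x := by linarith
    positivity
  · have h1 := two_point hC hG hv hh2 x hx y hy
    obtain ⟨hq, -, -⟩ := q_bounds hC hG (hG.mid_mem hx hy)
    unfold Zf at h1
    have h2 : δ * 1 * ‖x - y‖ ^ 2 ≤ δ * qf A Cq f ((1 / 2 : ℝ) • (x + y)) * ‖x - y‖ ^ 2 := by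
      have := hC.δ_pos
      gcongr
    linarith

/-! ### Geometry of a planar domain with positively curved boundary -/

/-- `f` is a `C²` defining function of the bounded open set `{f < 0}` whose boundary is a regular
level set of positive curvature. -/
structure DefFun (f : E2 → ℝ) : Prop where
  smooth : ContDiff ℝ 2 f
  frontier_eq : frontier {x | f x < 0} = {x | f x = 0}
  bdd : Bornology.IsBounded {x | f x < 0}
  grad : ∀ x, f x = 0 → fderiv ℝ f x ≠ 0
  curv : ∀ x, f x = 0 → ∀ w, w ≠ 0 → fderiv ℝ f x w = 0 → 0 < hess2 f x w w

/-- Second order Taylor estimate with a prescribed quadratic part. -/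
lemma taylor_bound {f : E2 → ℝ} (hf : Differentiable ℝ f) {z ζ : E2} (B : E2 →L[ℝ] E2 →L[ℝ] ℝ)
    {ε : ℝ} (hε : 0 ≤ ε) (hB : ∀ τ ∈ Icc (0:ℝ) 1, ‖fderiv ℝ f (z + τ • ζ) - fderiv ℝ f z
      - B (τ • ζ)‖ ≤ ε * ‖τ • ζ‖) :
    |f (z + ζ) - f z - fderiv ℝ f z ζ - B ζ ζ / 2| ≤ ε * ‖ζ‖ ^ 2 := by
  have hl : ∀ τ : ℝ, HasDerivAt (fun τ : ℝ => z + τ • ζ) ζ τ := fun τ => by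
    simpa using ((hasDerivAt_id τ).smul_const ζ).const_add z
  have hd : ∀ τ ∈ Icc (0:ℝ) 1, HasDerivWithinAt
      (fun τ : ℝ => f (z + τ • ζ) - τ * fderiv ℝ f z ζ - τ ^ 2 * (B ζ ζ / 2))
      (fderiv ℝ f (z + τ • ζ) ζ - 1 * fderiv ℝ f z ζ - (2 * τ) * (B ζ ζ / 2)) (Icc 0 1) τ := by
    intro τ _
    have h1 := (hf (z + τ • ζ)).hasFDerivAt.comp_hasDerivAt τ (hl τ)
    have h2 := (hasDerivAt_id τ).mul_const (fderiv ℝ f z ζ)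
    have h3 := (hasDerivAt_pow 2 τ).mul_const (B ζ ζ / 2)
    refine ((h1.sub h2).sub h3).hasDerivWithinAt.congr_deriv ?_
    simp
  have hbd : ∀ τ ∈ Icc (0:ℝ) 1,
      ‖fderiv ℝ f (z + τ • ζ) ζ - 1 * fderiv ℝ f z ζ - (2 * τ) * (B ζ ζ / 2)‖ ≤ ε * ‖ζ‖ ^ 2 := by
    intro τ hτ
    have e : fderiv ℝ f (z + τ • ζ) ζ - 1 * fderiv ℝ f z ζ - (2 * τ) * (B ζ ζ / 2)
        = (fderiv ℝ f (z + τ • ζ) - fderiv ℝ f z - B (τ • ζ)) ζ := by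
      simp only [map_smul, sub_apply, smul_apply, smul_eq_mul]; ring
    rw [e]
    refine (ContinuousLinearMap.le_opNorm _ _).trans ?_
    have h1 := hB τ hτ
    have h2 : ‖τ • ζ‖ ≤ ‖ζ‖ := by
      rw [norm_smul, Real.norm_of_nonneg hτ.1]
      exact mul_le_of_le_one_left (norm_nonneg _) hτ.2
    have h3 : ε * ‖τ • ζ‖ ≤ ε * ‖ζ‖ := by gcongr
    calc _ ≤ (ε * ‖ζ‖) * ‖ζ‖ := by gcongr; exact h1.trans h3
      _ = _ := by ring
  have := (convex_Icc (0:ℝ) 1).norm_image_sub_le_of_norm_hasDerivWithin_le hd hbd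
    (left_mem_Icc.2 zero_le_one) (right_mem_Icc.2 zero_le_one)
  simp only [Real.norm_eq_abs] at this
  simp at this
  refine le_of_eq_of_le ?_ this
  congr 1; ring

section
variable {f : E2 → ℝ}

lemma DefFun.isOpen (hf : DefFun f) : IsOpen {x | f x < 0} :=
  isOpen_lt hf.smooth.continuous continuous_const

lemma DefFun.closure_eq (hf : DefFun f) : closure {x | f x < 0} = {x | f x ≤ 0} := by
  rw [closure_eq_self_union_frontier, hf.frontier_eq]
  ext x
  exact (le_iff_lt_or_eq (a := f x) (b := 0)).symm

lemma DefFun.compact (hf : DefFun f) : IsCompact {x | f x ≤ 0} := by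
  rw [← hf.closure_eq]; exact hf.bdd.isCompact_closure

/-- By positivity of the curvature, no line stays in `{f ≤ 0}` near a boundary point interior to
the line segment. -/
lemma DefFun.no_touch (hf : DefFun f) {z e : E2} (he : e ≠ 0) (hz : f z = 0)
    (hle : ∀ᶠ τ : ℝ in 𝓝 0, f (z + τ • e) ≤ 0) : False := by
  have h1 := (hf.smooth.contDiffAt (x := z)).t2_line e
  have h2 := (h1.const_mul (-1)).local_min (by
    filter_upwards [hle] with τ hτ
    simp [hz, hτ])
  have h3 := hf.curv z hz e he (by linarith [h2.1])
  linarith [h2.2]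

/-- A chord contained in `{f ≤ 0}` has its interior in `{f < 0}`. -/
lemma DefFun.chord_neg (hf : DefFun f) {x y : E2} (hxy : x ≠ y)
    (hs : ∀ t ∈ Icc (0:ℝ) 1, f (x + t • (y - x)) ≤ 0) {t : ℝ} (h0 : 0 < t) (h1 : t < 1) :
    f (x + t • (y - x)) < 0 := by
  refine lt_of_le_of_ne (hs t ⟨h0.le, h1.le⟩) fun h => ?_
  refine hf.no_touch (sub_ne_zero.2 hxy.symm) h ?_
  have : ∀ᶠ τ : ℝ in 𝓝 0, t + τ ∈ Ioo (0:ℝ) 1 := by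
    have hc : ContinuousAt (fun τ : ℝ => t + τ) 0 := by fun_prop
    refine hc.eventually_mem ?_
    simpa using Ioo_mem_nhds h0 h1
  filter_upwards [this] with τ hτ
  have := hs _ (Ioo_subset_Icc_self hτ)
  rwa [add_smul, ← add_assoc] at this

/-- A component contains the chords between its points, at least as far as the sign of `f` is
concerned: the set of endpoints `y` whose chord from `x` stays in `{f < 0}` is open, and by
`DefFun.chord_neg` relatively closed in the component. -/
lemma DefFun.component_segment (hf : DefFun f) {x0 x y : E2}
    (hx : x ∈ connectedComponentIn {x | f x < 0} x0)
    (hy : y ∈ connectedComponentIn {x | f x < 0} x0) :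
    ∀ t ∈ Icc (0:ℝ) 1, f (x + t • (y - x)) < 0 := by
  have hfc := hf.smooth.continuous
  have hsub := connectedComponentIn_subset {x | f x < 0} x0
  have key : connectedComponentIn {x | f x < 0} x0
      ⊆ {y | ∀ t ∈ Icc (0:ℝ) 1, f (x + t • (y - x)) < 0} := by
    refine isPreconnected_connectedComponentIn.subset_of_closure_inter_subset ?_ ?_ ?_
    · rw [isOpen_iff_mem_nhds]
      intro y hy
      refine (isCompact_Icc (a := (0:ℝ)) (b := 1)).eventually_forall_of_forall_eventually
        (P := fun y t => f (x + t • (y - x)) < 0) fun t ht => ?_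
      have hc : Continuous fun p : E2 × ℝ => f (x + p.2 • (p.1 - x)) := by fun_prop
      exact hc.continuousAt.eventually_lt continuousAt_const (hy t ht)
    · refine ⟨x, hx, fun t _ => ?_⟩
      simpa using hsub hx
    · rintro y ⟨hy, hyU⟩ t ht
      have hle : ∀ t ∈ Icc (0:ℝ) 1, f (x + t • (y - x)) ≤ 0 := by
        intro t ht
        have hcl : IsClosed {y : E2 | f (x + t • (y - x)) ≤ 0} :=
          isClosed_le (by fun_prop) continuous_const
        exact closure_minimal (fun y hy => (hy t ht).le) hcl hy
      by_cases hxy : x = y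
      · subst hxy; simpa using hsub hx
      rcases ht.1.eq_or_lt with h0 | h0
      · subst h0; simpa using hsub hx
      rcases ht.2.eq_or_lt with h1 | h1
      · subst h1; simpa using hsub hyU
      exact hf.chord_neg hxy hle h0 h1
  exact key hy

lemma DefFun.component_convex (hf : DefFun f) (x0 : E2) :
    Convex ℝ (connectedComponentIn {x | f x < 0} x0) := by
  rw [convex_iff_segment_subset]
  intro x hx y hy
  have hseg : segment ℝ x y ⊆ {x | f x < 0} := by
    rw [segment_eq_image']
    rintro _ ⟨t, ht, rfl⟩
    exact hf.component_segment hx hy t ht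
  rw [connectedComponentIn_eq hx]
  exact (convex_segment x y).isPreconnected.subset_connectedComponentIn
    (left_mem_segment ℝ x y) hseg

lemma DefFun.component_frontier (hf : DefFun f) {x0 z : E2}
    (hz : z ∈ frontier (connectedComponentIn {x | f x < 0} x0)) : f z = 0 := by
  have hsub := connectedComponentIn_subset {x | f x < 0} x0
  have hle : f z ≤ 0 := by
    have := closure_mono hsub hz.1
    rwa [hf.closure_eq] at this
  refine le_antisymm hle (not_lt.1 fun hlt => ?_)
  have hop : IsOpen (connectedComponentIn {x | f x < 0} z) := hf.isOpen.connectedComponentIn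
  obtain ⟨w, hw1, hw2⟩ := mem_closure_iff.1 hz.1 _ hop (mem_connectedComponentIn hlt)
  have : z ∈ connectedComponentIn {x | f x < 0} x0 := by
    rw [connectedComponentIn_eq hw2, ← connectedComponentIn_eq hw1]
    exact mem_connectedComponentIn hlt
  rw [hf.isOpen.connectedComponentIn.frontier_eq] at hz
  exact hz.2 this

/-- Near a boundary point, chords have depth at least quadratic in their length. -/
lemma DefFun.mid_local (hf : DefFun f) {b : E2} (hb : f b = 0) :
    ∃ c > 0, ∀ᶠ p : E2 × E2 in 𝓝 (b, b), f p.1 ≤ 0 → f p.2 ≤ 0 →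
      c * ‖p.1 - p.2‖ ^ 2 ≤ -f ((1 / 2 : ℝ) • (p.1 + p.2)) := by
  have hd : Differentiable ℝ f := hf.smooth.differentiable (by norm_num)
  have hs : HasStrictFDerivAt (fderiv ℝ f) (fderiv ℝ (fderiv ℝ f) b) b :=
    ((hf.smooth.fderiv_right (m := 1) (by norm_num)).contDiffAt).hasStrictFDerivAt (by norm_num)
  have hcd : Continuous (fderiv ℝ f) := hf.smooth.continuous_fderiv (by norm_num)
  obtain ⟨B, hBd⟩ : ∃ B, B = fderiv ℝ (fderiv ℝ f) b := ⟨_, rfl⟩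
  rw [← hBd] at hs
  obtain ⟨a, ha, hmax⟩ : ∃ a, 0 < a ∧ ∀ e ∈ Metric.sphere (0:E2) 1,
      a ≤ max (B e e) |fderiv ℝ f b e| := by
    refine (isCompact_sphere (0:E2) 1).exists_forall_le' (Continuous.continuousOn ?_) ?_
    · have : Continuous fun e => B e e := by fun_prop
      fun_prop
    · intro e he
      have he0 : e ≠ 0 := by rintro rfl; simp at he
      rw [lt_max_iff]
      by_cases h : fderiv ℝ f b e = 0
      · left
        have := hf.curv b hb e he0 h
        rwa [hess2_eq hf.smooth.contDiffAt, ← hBd] at this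
      · right; exact abs_pos.2 h
  have hdich : ∀ ζ : E2, a * ‖ζ‖ ^ 2 ≤ B ζ ζ ∨ a * ‖ζ‖ ≤ |fderiv ℝ f b ζ| := by
    intro ζ
    by_cases h0 : ζ = 0
    · subst h0; simp
    have hn : 0 < ‖ζ‖ := norm_pos_iff.2 h0
    have e1 : ζ = ‖ζ‖ • (‖ζ‖⁻¹ • ζ) := by rw [smul_smul, mul_inv_cancel₀ hn.ne', one_smul]
    have hm := hmax (‖ζ‖⁻¹ • ζ) (by simp [norm_smul, hn.ne'])
    obtain ⟨η, hη⟩ : ∃ η, η = ‖ζ‖⁻¹ • ζ := ⟨_, rfl⟩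
    rw [← hη] at e1 hm
    rcases le_max_iff.1 hm with h | h
    · left
      have : B ζ ζ = ‖ζ‖ ^ 2 * B η η := by
        conv_lhs => rw [e1]
        simp only [map_smul, smul_apply, smul_eq_mul]; ring
      rw [this, mul_comm]; gcongr
    · right
      have : fderiv ℝ f b ζ = ‖ζ‖ * fderiv ℝ f b η := by
        conv_lhs => rw [e1]
        simp only [map_smul, smul_eq_mul]
      rw [this, abs_mul, abs_of_pos hn, mul_comm]; gcongr
  have hlo := hs.isLittleO.def (c := a / 4) (by positivity)
  obtain ⟨r, hr, hball⟩ := Metric.eventually_nhds_iff.1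
    (hlo.and ((hcd.continuousAt (x := b)).comp continuousAt_fst (x := (b, b)) |>.eventually_mem
      (Metric.closedBall_mem_nhds _ (half_pos ha))))
  obtain ⟨C, hC⟩ : ∃ C, C = ‖B‖ + a := ⟨_, rfl⟩
  have hC0 : 0 < C := by rw [hC]; positivity
  refine ⟨min (a / 16) 1 / 4, by positivity, ?_⟩
  have hr' : 0 < min r (a / (2 * (C + 1))) := by positivity
  filter_upwards [Metric.ball_mem_nhds (b, b) hr'] with p hp hx hy
  obtain ⟨x, y⟩ := p
  simp only at hx hy ⊢
  rw [← ball_prod_same] at hp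
  obtain ⟨hxb, hyb⟩ := hp
  simp only at hxb hyb
  obtain ⟨z, hz⟩ : ∃ z, z = (1 / 2 : ℝ) • (x + y) := ⟨_, rfl⟩
  obtain ⟨ζ, hζ⟩ : ∃ ζ, ζ = (1 / 2 : ℝ) • (x - y) := ⟨_, rfl⟩
  have hzb : z ∈ Metric.ball b (min r (a / (2 * (C + 1)))) := by
    rw [hz, smul_add]
    exact convex_ball b _ hxb hyb (by norm_num) (by norm_num) (by norm_num)
  have ex : x = z + ζ := by rw [hz, hζ]; module
  have ey : y = z + -ζ := by rw [hz, hζ]; module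
  have exy : x - y = (2:ℝ) • ζ := by rw [hζ]; module
  have hζn : ‖ζ‖ ≤ a / (2 * (C + 1)) := by
    have h1 : ‖x - y‖ ≤ dist x b + dist y b := by
      rw [← dist_eq_norm]; exact dist_triangle_right _ _ _
    rw [exy, norm_smul, Real.norm_of_nonneg zero_le_two] at h1
    have h2 : dist x b < min r (a / (2 * (C + 1))) := hxb
    have h3 : dist y b < min r (a / (2 * (C + 1))) := hyb
    linarith [min_le_right r (a / (2 * (C + 1)))]
  have hr2 : ∀ w ∈ Metric.ball b (min r (a / (2 * (C + 1)))), dist (w, z) (b, b) < r := by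
    intro w hw
    rw [Prod.dist_eq]
    exact max_lt (lt_of_lt_of_le hw (min_le_left _ _)) (lt_of_lt_of_le hzb (min_le_left _ _))
  have hT : ∀ η : E2, z + η ∈ Metric.ball b (min r (a / (2 * (C + 1)))) →
      |f (z + η) - f z - fderiv ℝ f z η - B η η / 2| ≤ a / 4 * ‖η‖ ^ 2 := by
    intro η hη
    refine taylor_bound hd B (by positivity) fun τ hτ => ?_
    have hm : z + τ • η ∈ Metric.ball b (min r (a / (2 * (C + 1)))) := by
      have := (convex_ball b (min r (a / (2 * (C + 1))))).add_smul_sub_mem hzb hη hτ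
      simpa using this
    have := (hball (hr2 _ hm)).1
    simpa using this
  have h1 := abs_le.1 (hT ζ (by rwa [← ex]))
  have h2 := abs_le.1 (hT (-ζ) (by rwa [← ey]))
  have hDz := (hball (hr2 z hzb)).2
  rw [← ex] at h1
  rw [← ey] at h2
  simp only [map_neg, norm_neg, neg_apply, neg_neg] at h2
  rw [← hz, exy, norm_smul, Real.norm_of_nonneg zero_le_two]
  have hm1 := min_le_left (a / 16) 1
  have hm2 := min_le_right (a / 16) 1
  have hm0 : 0 < min (a / 16) 1 := by positivity
  generalize min (a / 16) 1 = m at *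
  have hζ2 := sq_nonneg ‖ζ‖
  have hg : m / 4 * (2 * ‖ζ‖) ^ 2 = m * ‖ζ‖ ^ 2 := by ring
  rw [hg]
  rcases hdich ζ with h | h
  · have : m * ‖ζ‖ ^ 2 ≤ a / 16 * ‖ζ‖ ^ 2 := by gcongr
    nlinarith only [this, h, h1.1, h2.1, hx, hy, hζ2, ha]
  · have hDd : |fderiv ℝ f z ζ - fderiv ℝ f b ζ| ≤ a / 2 * ‖ζ‖ := by
      rw [← sub_apply, ← Real.norm_eq_abs]
      refine (ContinuousLinearMap.le_opNorm _ _).trans ?_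
      gcongr
      simpa [dist_eq_norm] using hDz
    have hBb : |B ζ ζ| ≤ ‖B‖ * ‖ζ‖ ^ 2 := by
      rw [← Real.norm_eq_abs, sq, ← mul_assoc]
      exact B.le_opNorm₂ ζ ζ
    have hDz2 : a / 2 * ‖ζ‖ ≤ |fderiv ℝ f z ζ| := by
      have := abs_sub_abs_le_abs_sub (fderiv ℝ f b ζ) (fderiv ℝ f z ζ)
      rw [abs_sub_comm] at this
      linarith
    have hfin : (C + 1) * ‖ζ‖ ^ 2 ≤ a / 2 * ‖ζ‖ := by
      rw [le_div_iff₀ (by positivity)] at hζn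
      nlinarith only [hζn, norm_nonneg ζ]
    have hm' : m * ‖ζ‖ ^ 2 ≤ 1 * ‖ζ‖ ^ 2 := by gcongr
    have hBb' := abs_le.1 hBb
    have hB0 : 0 ≤ ‖B‖ * ‖ζ‖ ^ 2 := by positivity
    rw [hC] at hfin
    rcases le_abs.1 hDz2 with h3 | h3
    · nlinarith only [h3, h1.1, hx, hfin, hm', hBb'.1, hζ2, ha, hB0]
    · nlinarith only [h3, h2.1, hy, hfin, hm', hBb'.1, hζ2, ha, hB0]

/-- Uniform quadratic depth of chords. -/
lemma DefFun.mid (hf : DefFun f) : ∃ c > 0, ∀ x y : E2,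
    (∀ t ∈ Icc (0:ℝ) 1, f (x + t • (y - x)) ≤ 0) →
      c * ‖x - y‖ ^ 2 ≤ -f ((1 / 2 : ℝ) • (x + y)) := by
  have hfc := hf.smooth.continuous
  obtain ⟨K, hKd⟩ : ∃ K : Set (E2 × E2),
      K = {p | ∀ t ∈ Icc (0:ℝ) 1, f (p.1 + t • (p.2 - p.1)) ≤ 0} := ⟨_, rfl⟩
  have hKe : ∀ p ∈ K, f p.1 ≤ 0 ∧ f p.2 ≤ 0 := by
    rw [hKd]; intro p hp
    exact ⟨by simpa using hp 0 (by simp), by simpa using hp 1 (by simp)⟩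
  have hKc : IsCompact K := by
    refine (hf.compact.prod hf.compact).of_isClosed_subset ?_ fun p hp => hKe p hp
    have : K = ⋂ t ∈ Icc (0:ℝ) 1, {p : E2 × E2 | f (p.1 + t • (p.2 - p.1)) ≤ 0} := by
      rw [hKd]; ext p; simp
    rw [this]
    exact isClosed_biInter fun t _ => isClosed_le (by fun_prop) continuous_const
  have key : ∃ c > 0, ∀ p ∈ K, c * ‖p.1 - p.2‖ ^ 2 ≤ -f ((1 / 2 : ℝ) • (p.1 + p.2)) := by
    refine hKc.induction_on (p := fun S => ∃ c > 0, ∀ p ∈ S,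
      c * ‖p.1 - p.2‖ ^ 2 ≤ -f ((1 / 2 : ℝ) • (p.1 + p.2))) ⟨1, one_pos, by simp⟩ ?_ ?_ ?_
    · rintro S T hST ⟨c, hc, h⟩
      exact ⟨c, hc, fun p hp => h p (hST hp)⟩
    · rintro S T ⟨c, hc, h⟩ ⟨d, hd, h'⟩
      refine ⟨min c d, lt_min hc hd, ?_⟩
      rintro p (hp | hp)
      · exact le_trans (by gcongr; exact min_le_left _ _) (h p hp)
      · exact le_trans (by gcongr; exact min_le_right _ _) (h' p hp)
    · rintro ⟨a, b⟩ hab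
      by_cases hm : f ((1 / 2 : ℝ) • (a + b)) < 0
      · obtain ⟨c, hc⟩ : ∃ c, c = -f ((1 / 2 : ℝ) • (a + b)) / (‖a - b‖ ^ 2 + 1) := ⟨_, rfl⟩
        have hc0 : 0 < c := by
          rw [hc]; exact div_pos (by linarith) (by positivity)
        have he : c * ‖a - b‖ ^ 2 < -f ((1 / 2 : ℝ) • (a + b)) := by
          have : c * (‖a - b‖ ^ 2 + 1) = -f ((1 / 2 : ℝ) • (a + b)) := by
            rw [hc]; field_simp
          linarith
        have h1 : Continuous fun p : E2 × E2 => c * ‖p.1 - p.2‖ ^ 2 := by fun_prop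
        have h2 : Continuous fun p : E2 × E2 => -f ((1 / 2 : ℝ) • (p.1 + p.2)) := by fun_prop
        have h3 := h1.continuousAt.eventually_lt h2.continuousAt (x₀ := (a, b)) he
        exact ⟨_, mem_nhdsWithin_of_mem_nhds h3, c, hc0, fun p hp => le_of_lt hp⟩
      · have hs := hab
        rw [hKd] at hs
        have e : (1 / 2 : ℝ) • (a + b) = a + (1 / 2 : ℝ) • (b - a) := by module
        have hab' : a = b := by
          by_contra hne
          have := hf.chord_neg hne hs (t := 1 / 2) (by norm_num) (by norm_num)
          exact hm (by rwa [e])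
        subst hab'
        have e' : (1 / 2 : ℝ) • (a + a) = a := by module
        rw [e'] at hm
        have ha : f a = 0 := le_antisymm (hKe _ hab).1 (not_lt.1 hm)
        obtain ⟨c, hc, h⟩ := hf.mid_local ha
        refine ⟨_, inter_mem (mem_nhdsWithin_of_mem_nhds h) self_mem_nhdsWithin, c, hc, ?_⟩
        rintro p ⟨hp, hpK⟩
        exact hp (hKe p hpK).1 (hKe p hpK).2
  obtain ⟨c, hc, h⟩ := key
  exact ⟨c, hc, fun x y hxy => h (x, y) (by rw [hKd]; exact hxy)⟩

end

/-! ### Uniform constants and conclusion -/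

lemma e2_norm (i : Fin 2) : ‖e2 i‖ = 1 := by simp [e2]

lemma grad_norm_sq {u : E2 → ℝ} {x : E2} :
    ‖gradient u x‖ ^ 2 = fderiv ℝ u x (e2 0) ^ 2 + fderiv ℝ u x (e2 1) ^ 2 := by
  rw [norm_sq2, gradient_coord, gradient_coord]

/-- All components of the domain satisfy the quantitative hypotheses with common constants. -/
lemma DefFun.exists_good {f : E2 → ℝ} (hf : DefFun f) : ∃ R L c t0 : ℝ, 1 ≤ R ∧ 1 ≤ L ∧ 0 < c ∧
    c ≤ 1 ∧ 0 < t0 ∧ ∀ x0, Good f R L c t0 (connectedComponentIn {x | f x < 0} x0) := by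
  have hd : Differentiable ℝ f := hf.smooth.differentiable (by norm_num)
  have hfc := hf.smooth.continuous
  have hcd : Continuous (fderiv ℝ f) := hf.smooth.continuous_fderiv (by norm_num)
  have hC1 : ContDiff ℝ 1 (fderiv ℝ f) := hf.smooth.fderiv_right (by norm_num)
  have hcdd : Continuous (fderiv ℝ (fderiv ℝ f)) := hC1.continuous_fderiv (by norm_num)
  have hgc : Continuous (gradient f) := by
    unfold gradient; fun_prop
  obtain ⟨R0, hR0⟩ := hf.compact.exists_bound_of_continuousOn (f := id) continuousOn_id
  obtain ⟨R, hRd⟩ : ∃ R, R = max 1 R0 := ⟨_, rfl⟩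
  have hR1 : 1 ≤ R := hRd ▸ le_max_left _ _
  have hR : ∀ x, f x ≤ 0 → ‖x‖ ≤ R := fun x hx => (hR0 x hx).trans (hRd ▸ le_max_right _ _)
  have hKc := isCompact_closedBall (0:E2) (R + 1)
  obtain ⟨L1, hL1⟩ := hKc.exists_bound_of_continuousOn hfc.continuousOn
  obtain ⟨L2, hL2⟩ := hKc.exists_bound_of_continuousOn hcd.continuousOn
  obtain ⟨L3, hL3⟩ := hKc.exists_bound_of_continuousOn (f := fderiv ℝ (fderiv ℝ f))
    hcdd.continuousOn
  obtain ⟨L, hLd⟩ : ∃ L, L = max (max 1 L1) (max L2 L3) := ⟨_, rfl⟩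
  have hL : 1 ≤ L := hLd ▸ (le_max_left _ _).trans (le_max_left _ _)
  have hLf : ∀ x ∈ Metric.closedBall (0:E2) (R + 1), |f x| ≤ L := fun x hx =>
    (hL1 x hx).trans (hLd ▸ (le_max_right _ _).trans (le_max_left _ _))
  have hLd1 : ∀ x ∈ Metric.closedBall (0:E2) (R + 1), ‖fderiv ℝ f x‖ ≤ L := fun x hx =>
    (hL2 x hx).trans (hLd ▸ (le_max_left _ _).trans (le_max_right _ _))
  have hLd2 : ∀ x ∈ Metric.closedBall (0:E2) (R + 1), ‖fderiv ℝ (fderiv ℝ f) x‖ ≤ L := fun x hx =>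
    (hL3 x hx).trans (hLd ▸ (le_max_right _ _).trans (le_max_right _ _))
  clear hL1 hL2 hL3 hLd hR0 hRd
  have hin : ∀ x, f x ≤ 0 → x ∈ Metric.closedBall (0:E2) (R + 1) := fun x hx => by
    rw [mem_closedBall_zero_iff]; linarith [hR x hx]
  obtain ⟨c1, hc1, hgr⟩ : ∃ c1, 0 < c1 ∧ ∀ x ∈ {x | f x ≤ 0}, c1 ≤ -f x + ‖gradient f x‖ ^ 2 := by
    refine hf.compact.exists_forall_le' (Continuous.continuousOn (by fun_prop)) fun x hx => ?_
    rcases lt_or_eq_of_le (show f x ≤ 0 from hx) with h | h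
    · have := sq_nonneg ‖gradient f x‖
      linarith
    · have hne : gradient f x ≠ 0 := by
        intro h0
        apply hf.grad x h
        ext w
        rw [fderiv_grad, h0]; simp
      have : 0 < ‖gradient f x‖ ^ 2 := by positivity
      linarith
  obtain ⟨c3, hc3, hmid⟩ := hf.mid
  obtain ⟨c, hcd'⟩ : ∃ c, c = min (min (c1 / 2) c3) 1 := ⟨_, rfl⟩
  have hc0 : 0 < c := by rw [hcd']; positivity
  have hcc1 : c ≤ c1 / 2 := hcd' ▸ (min_le_left _ _).trans (min_le_left _ _)
  have hcc3 : c ≤ c3 := hcd' ▸ (min_le_left _ _).trans (min_le_right _ _)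
  refine ⟨R, L, c, 1 / (2 * L), hR1, hL, hc0, hcd' ▸ min_le_right _ _, by positivity, fun x0 => ?_⟩
  have hsub := connectedComponentIn_subset {x | f x < 0} x0
  have hcl : ∀ x ∈ closure (connectedComponentIn {x | f x < 0} x0), f x ≤ 0 := by
    intro x hx
    have := closure_mono hsub hx
    rwa [hf.closure_eq] at this
  have hconv := hf.component_convex x0
  -- the gradient descent step of size `s`
  have hstep : ∀ y, f y ≤ 0 → ∀ s, 0 ≤ s → s ≤ 1 / (2 * L) →
      f (y + -(s • gradient f y)) ≤ f y - s / 2 * ‖gradient f y‖ ^ 2 := by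
    intro y hy s hs0 hs
    have hn : ‖gradient f y‖ ≤ L := by
      have : ‖gradient f y‖ = ‖fderiv ℝ f y‖ := by rw [gradient, LinearIsometryEquiv.norm_map]
      rw [this]; exact hLd1 y (hin y hy)
    have hs' : s * (2 * L) ≤ 1 := by rwa [le_div_iff₀ (by positivity)] at hs
    have hsn : ‖s • gradient f y‖ ≤ 1 := by
      rw [norm_smul, Real.norm_of_nonneg hs0]
      nlinarith only [hs', hn, hs0, norm_nonneg (gradient f y)]
    have hT := taylor_bound hd (z := y) (ζ := -(s • gradient f y)) 0 (ε := L) (by linarith) (by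
      intro τ hτ
      have hmem : y + τ • (-(s • gradient f y)) ∈ Metric.closedBall (0:E2) (R + 1) := by
        rw [mem_closedBall_zero_iff]
        refine (norm_add_le _ _).trans (add_le_add (hR y hy) ?_)
        rw [norm_smul, norm_neg, Real.norm_of_nonneg hτ.1]
        exact mul_le_one₀ hτ.2 (norm_nonneg _) hsn
      have := (convex_closedBall (0:E2) (R + 1)).norm_image_sub_le_of_norm_fderiv_le (𝕜 := ℝ)
        (fun x _ => (hC1.differentiable (by norm_num)) x) hLd2 (hin y hy) hmem
      simpa using this)
    have h2 := (abs_le.1 hT).2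
    rw [norm_neg, norm_smul, Real.norm_of_nonneg hs0] at h2
    simp only [zero_apply, zero_div, sub_zero] at h2
    simp only [map_neg, map_smul, smul_eq_mul, fderiv_grad, real_inner_self_eq_norm_sq] at h2
    have h3 : s * (2 * L) * (s * ‖gradient f y‖ ^ 2) ≤ 1 * (s * ‖gradient f y‖ ^ 2) := by gcongr
    nlinarith only [h2, h3]
  refine ⟨hf.isOpen.connectedComponentIn, hconv, fun x hx => hR x (hcl x hx), fun x hx => hsub hx,
    fun x hx => hf.component_frontier hx, ?_, ?_, ?_, ?_, ?_⟩
  · intro x hx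
    have hx0 : f x ≤ 0 := le_of_lt (hsub hx)
    have b1 : ∀ i, |fderiv ℝ f x (e2 i)| ≤ L := by
      intro i
      have := (fderiv ℝ f x).le_opNorm (e2 i)
      rw [e2_norm, mul_one] at this
      exact this.trans (hLd1 x (hin x hx0))
    have b2 : ∀ i j, |hess2 f x (e2 i) (e2 j)| ≤ L := by
      intro i j
      rw [hess2_eq hf.smooth.contDiffAt]
      have := (fderiv ℝ (fderiv ℝ f) x).le_opNorm₂ (e2 i) (e2 j)
      rw [e2_norm, e2_norm, mul_one, mul_one] at this
      exact this.trans (hLd2 x (hin x hx0))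
    refine ⟨_, _, _, _, _, (hf.smooth.contDiffAt (x := x)).jet, b1 0, b1 1, b2 0 0, b2 0 1, b2 1 1, ?_⟩
    rw [← grad_norm_sq]
    linarith [hgr x hx0]
  · intro x hx
    linarith [(abs_le.1 (hLf x (hin x (hcl x hx)))).1]
  · intro x hx y hy
    exact (convex_closedBall (0:E2) (R + 1)).norm_image_sub_le_of_norm_fderiv_le (𝕜 := ℝ)
      (fun x _ => hd x) hLd1 (hin y (hcl y hy)) (hin x (hcl x hx))
  · intro x hx y hy
    refine le_trans (by gcongr) (hmid x y fun t ht => hcl _ ?_)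
    exact hconv.closure.add_smul_sub_mem hx hy ht
  · intro y hy t ht0 ht
    have hnb := hstep y (hcl y hy) t ht0 ht
    refine ⟨y + -(t • gradient f y), ?_, ?_, ?_⟩
    · refine map_mem_closure (f := fun y => y + -(t • gradient f y)) (by fun_prop) hy ?_
      intro y hy
      have hy0 : f y < 0 := hsub hy
      have hpath : (fun s : ℝ => y + -(s • gradient f y)) '' Icc 0 t
          ⊆ connectedComponentIn {x | f x < 0} y := by
        refine (isPreconnected_Icc.image _ (by fun_prop)).subset_connectedComponentIn
          ⟨0, left_mem_Icc.2 ht0, by simp⟩ ?_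
        rintro _ ⟨s, hs, rfl⟩
        have h1 := hstep y hy0.le s hs.1 (hs.2.trans ht)
        have h2 : 0 ≤ s / 2 * ‖gradient f y‖ ^ 2 := mul_nonneg (by linarith [hs.1]) (sq_nonneg _)
        show f (y + -(s • gradient f y)) < 0
        linarith
      rw [connectedComponentIn_eq hy]
      exact hpath ⟨t, right_mem_Icc.2 ht0, rfl⟩
    · have : ‖gradient f y‖ = ‖fderiv ℝ f y‖ := by rw [gradient, LinearIsometryEquiv.norm_map]
      rw [add_sub_cancel_left, norm_neg, norm_smul, Real.norm_of_nonneg ht0, this, mul_comm]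
      gcongr
      exact hLd1 y (hin y (hcl y hy))
    · have h1 := hgr y (hcl y hy)
      have h2 : t * (2 * L) ≤ 1 := by rwa [le_div_iff₀ (by positivity)] at ht
      have h3 : t ≤ 1 := by nlinarith only [h2, hL, ht0]
      have h4 : c * t ≤ c1 / 2 * t := by gcongr
      have h5 := hcl y hy
      have h6 : t / 2 * c1 ≤ t / 2 * (-f y + ‖gradient f y‖ ^ 2) := by gcongr
      nlinarith only [h4, h5, h6, hnb, h3, ht0]

/-- The rescaled solution `u / h` on a component of the domain solves the rescaled problem. -/
lemma isSol_of_solvesStar {f : E2 → ℝ} (hf : DefFun f) {u : E2 → ℝ} {h : ℝ} (hh : 0 < h)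
    (hu : SolvesStar {x | f x < 0} (-h) u) (x0 : E2) :
    IsSol (connectedComponentIn {x | f x < 0} x0) h (fun x => h⁻¹ * u x) := by
  obtain ⟨h2, hc, hpde, hb⟩ := hu
  have hsub := connectedComponentIn_subset {x | f x < 0} x0
  refine ⟨continuousOn_const.mul (hc.mono (closure_mono hsub)), fun x hx => ?_, fun z hz => ?_⟩
  · beta_reduce
    rw [hb x (by rw [hf.frontier_eq]; exact hf.component_frontier hx), mul_zero]
  · have hcz : ContDiffAt ℝ 2 u z := h2.contDiffAt (hf.isOpen.mem_nhds (hsub hz))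
    refine ⟨_, _, _, _, _, hcz.jet.const_mul h⁻¹, ?_⟩
    have hm := mc_expand hcz
    rw [hpde z (hsub hz)] at hm
    generalize fderiv ℝ u z (e2 0) = a at *
    generalize fderiv ℝ u z (e2 1) = b at *
    have e : 1 + h ^ 2 * ((h⁻¹ * a) ^ 2 + (h⁻¹ * b) ^ 2) = 1 + a ^ 2 + b ^ 2 := by
      field_simp; ring
    rw [e]
    have e2 : ∀ a, h ^ 2 * (h⁻¹ * a) ^ 2 = a ^ 2 := fun a => by field_simp
    have e3 : h ^ 2 * (h⁻¹ * a) * (h⁻¹ * b) = a * b := by field_simp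
    rw [e2, e2, e3]
    have : h⁻¹ * h = 1 := inv_mul_cancel₀ hh.ne'
    linear_combination h⁻¹ * hm - 2 * √(1 + a ^ 2 + b ^ 2) ^ 3 * this

/-- Quantitative midpoint concavity of `√v` in squared form makes the second order coefficient of
`√v` along every line negative. -/
lemma second_coeff_neg {v : E2 → ℝ} {x e : E2} {s b c δ : ℝ} (he : e ≠ 0) (hδ : 0 < δ)
    (hs : 0 < s) (hvx : v x = s ^ 2) (hT : T2 (fun τ => √(v (x + τ • e))) s b c)
    (hT' : T2 (fun τ => √(v (x + τ • (-e)))) s (-b) c)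
    (hm : ∀ᶠ τ : ℝ in 𝓝 0, ((√(v (x + τ • e)) + √(v (x + τ • (-e)))) / 2) ^ 2
      + δ * ‖(x + τ • e) - (x + τ • (-e))‖ ^ 2 ≤ v x) : c < 0 := by
  have h1 := (hT.add hT').const_mul (1 / 2)
  have h2 := ((h1.mul h1).add (T2.poly 0 0 (4 * δ * ‖e‖ ^ 2))).const_mul (-1)
  have h3 := h2.local_min (by
    filter_upwards [hm] with τ hτ
    have e1 : (x + τ • e) - (x + τ • (-e)) = (2 * τ) • e := by module
    have e2 : ‖(2 * τ) • e‖ ^ 2 = 4 * ‖e‖ ^ 2 * τ ^ 2 := by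
      rw [norm_smul, Real.norm_eq_abs, mul_pow, sq_abs]; ring
    rw [e1, e2] at hτ
    have hv0 : √(v x) = s := by rw [hvx, Real.sqrt_sq hs.le]
    simp only [zero_smul, add_zero, hv0]
    rw [hvx] at hτ
    linarith)
  have hn : 0 < ‖e‖ := norm_pos_iff.2 he
  have h4 : 0 < 4 * δ * ‖e‖ ^ 2 := by positivity
  by_contra hc
  push Not at hc
  nlinarith [h3.2, mul_nonneg hs.le hc]

/-- **1/2-concavity of small solutions, Theorem 6.**  For a bounded strictly
convex planar domain `Ω` there is `ε = ε(Ω) > 0` such that for every `−ε < H < 0` the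
solution `u = u(·;H)` of (*) is positive on `Ω` and `√u` is strictly second order concave
on `Ω` (its Hessian is negative definite at every point of `Ω`). -/
theorem small_bubbles_half_concave (α : ℝ) (hα : 0 < α) (hα1 : α ≤ 1)
    (Ω : Set E2) (hΩ : StrictlyConvexDomain α Ω) :
    ∃ ε : ℝ, 0 < ε ∧ ∀ H : ℝ, -ε < H → H < 0 → ∀ u : E2 → ℝ, SolvesStar Ω H u →
      (∀ x ∈ Ω, 0 < u x) ∧
      (∀ x ∈ Ω, ∀ w : E2, w ≠ 0 → hess2 (fun y => Real.sqrt (u y)) x w w < 0) := by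
  obtain ⟨hop, hbd, -, f, hf2, hΩf, hfr, -, hgr, hcv⟩ := hΩ
  subst hΩf
  have hf : DefFun f := by
    refine ⟨hf2, hfr, hbd, fun x hx h0 => hgr x (by rw [hfr]; exact hx) ?_, fun x hx w hw h0 => ?_⟩
    · rw [gradient, h0, map_zero]
    · refine hcv x (by rw [hfr]; exact hx) w hw ?_
      rw [real_inner_comm, ← fderiv_grad, h0]
  obtain ⟨R, L, c, t0, hR, hL, hc, hc1, ht0, hG⟩ := hf.exists_good
  obtain ⟨ε, hε, δ, hδ, key⟩ := two_point_concavity hR hL hc hc1 ht0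
  refine ⟨ε, hε, fun H hH1 hH2 u hu => ?_⟩
  obtain ⟨h, rfl⟩ : ∃ h, H = -h := ⟨-H, (neg_neg H).symm⟩
  have hh : 0 < h := by linarith
  have main := fun x0 => key f _ (hG x0) h hh (by linarith) _ (isSol_of_solvesStar hf hh hu x0)
  have hpos : ∀ x, f x < 0 → 0 < u x := by
    intro x hx
    have := (main x).1 x (mem_connectedComponentIn hx)
    exact (pos_iff_pos_of_mul_pos this).1 (by positivity)
  refine ⟨hpos, fun x hx w hw => ?_⟩
  have hux := hpos x hx
  have hcu : ContDiffAt ℝ 2 u x := hu.1.contDiffAt (hop.mem_nhds hx)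
  have hcs : ContDiffAt ℝ 2 (fun y => √(u y)) x := hcu.sqrt hux.ne'
  obtain ⟨k, hk⟩ : ∃ k, k = √h⁻¹ := ⟨_, rfl⟩
  have hk0 : 0 < k := by rw [hk]; positivity
  have hsq : ∀ y, k * √(u y) = √(h⁻¹ * u y) := fun y => by
    rw [hk, Real.sqrt_mul (by positivity)]
  have hT : ∀ e, T2 (fun τ : ℝ => √(h⁻¹ * u (x + τ • e))) (k * √(u x))
      (k * fderiv ℝ (fun y => √(u y)) x e) (k * (hess2 (fun y => √(u y)) x e e / 2)) := fun e =>
    ((hcs.t2_line e).const_mul k).congr fun τ => (hsq _).symm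
  have hU : connectedComponentIn {x | f x < 0} x ∈ 𝓝 x :=
    hf.isOpen.connectedComponentIn.mem_nhds (mem_connectedComponentIn hx)
  have hneg : hess2 (fun y => √(u y)) x (-w) (-w) = hess2 (fun y => √(u y)) x w w := by
    simp [hess2_eq hcs]
  have hlt := second_coeff_neg (v := fun y => h⁻¹ * u y) hw hδ (by positivity)
    (by rw [hsq, Real.sq_sqrt (by positivity)]) (hT w)
    ((hT (-w)).of_eq rfl (by rw [map_neg, mul_neg]) (by rw [hneg])) (by
      filter_upwards [(tendsto_line x w).eventually_mem hU,
        (tendsto_line x (-w)).eventually_mem hU] with τ h1 h2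
      have := (main x).2 _ (subset_closure h1) _ (subset_closure h2)
      have e : (1 / 2 : ℝ) • (x + τ • w + (x + τ • (-w))) = x := by module
      rwa [e] at this)
  have := neg_of_mul_neg_right hlt hk0.le
  linarith
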